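/- Let p > 3 be a prime with p ≡ 1 or 7 (mod 8). If p ≡ 1 or 7 (mod 24), then there are integers x, y with p = x^2 + 6y^2, and for any such x, Σ_{k=0}^{p-1} C(2k,k) · a_k · 36^{-k} ≡ 4x^2 (mod p). If p ≡ 17 or 23 (mod 24), then Σ_{k=0}^{p-1} C(2k,k) · a_k · 36^{-k} ≡ 0 (mod p). -/

import Mathlib

open Finset

/-- `a n = ∑_{k=0}^{n} C(n,k)^2·C(2k,k)`. -/
def a (n : ℕ) : ℕ :=
  ∑ k ∈ Finset.range (n + 1), Nat.choose n k ^ 2 * Nat.choose (2 * k) k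



/-- Lemma of Thue. -/
lemma thue_aux (p : ℕ) [hpf : Fact p.Prime] (c : ZMod p) :
    ∃ x y : ℤ, (x ≠ 0 ∨ y ≠ 0) ∧ x ^ 2 < p ∧ y ^ 2 < p ∧ (x : ZMod p) = c * y := by
  set m := Nat.sqrt p with hm
  have h1 : p < (m + 1) * (m + 1) := Nat.lt_succ_sqrt p
  have h2 : m * m ≤ p := Nat.sqrt_le p
  have h3 : m * m < p := by
    rcases lt_or_eq_of_le h2 with h | h
    · exact h
    · exfalso
      have := hpf.out
      rw [← h] at this
      have hm1 : m ≠ 1 := by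
        intro h1
        rw [h1] at this
        exact Nat.not_prime_one this
      exact Nat.not_prime_mul hm1 hm1 this
  let f : ℕ × ℕ → ZMod p := fun q => (q.1 : ZMod p) - c * q.2
  have hcard : (Finset.univ : Finset (ZMod p)).card < (range (m+1) ×ˢ range (m+1)).card := by
    rw [Finset.card_univ, ZMod.card, card_product, card_range]; exact h1
  obtain ⟨u, hu, v, hv, huv, he⟩ := Finset.exists_ne_map_eq_of_card_lt_of_maps_to hcard
    (f := f) (fun _ _ => mem_univ _)
  simp only [mem_product, mem_range] at hu hv
  have key : ∀ a b : ℕ, a < m + 1 → b < m + 1 → ((a : ℤ) - b) ^ 2 < p := by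
    intro a b ha hb
    have : ((a : ℤ) - b) ^ 2 ≤ m * m := by
      have h1 : (a:ℤ) ≤ m := by omega
      have h2 : (b:ℤ) ≤ m := by omega
      have h3 : (0:ℤ) ≤ a := by omega
      have h4 : (0:ℤ) ≤ b := by omega
      nlinarith [mul_nonneg (show (0:ℤ) ≤ m - (a - b) by linarith) (show (0:ℤ) ≤ m + (a - b) by linarith)]
    have h5 : (m * m : ℤ) < p := by exact_mod_cast h3
    linarith
  refine ⟨(u.1 : ℤ) - v.1, (u.2 : ℤ) - v.2, ?_, key _ _ hu.1 hv.1, key _ _ hu.2 hv.2, ?_⟩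
  · by_contra! h
    apply huv
    ext
    · omega
    · omega
  · simp only [f] at he
    push_cast
    linear_combination he

lemma rep_exists (p : ℕ) [hpf : Fact p.Prime] (h : p % 24 = 1 ∨ p % 24 = 7)
    (hsq : IsSquare (-6 : ZMod p)) :
    ∃ x y : ℤ, (p : ℤ) = x ^ 2 + 6 * y ^ 2 := by
  obtain ⟨c, hc⟩ := hsq
  obtain ⟨x, y, hne, hx, hy, hxy⟩ := thue_aux p c
  have hd : (p : ℤ) ∣ x ^ 2 + 6 * y ^ 2 := by
    rw [← ZMod.intCast_zmod_eq_zero_iff_dvd]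
    push_cast
    rw [hxy]
    linear_combination (-y^2 : ZMod p) * hc
  obtain ⟨k, hk⟩ := hd
  have hp0 : (0:ℤ) < p := by exact_mod_cast hpf.out.pos
  have hk1 : 0 < k := by
    have : 0 < x ^ 2 + 6 * y ^ 2 := by
      rcases hne with h | h <;> positivity
    nlinarith
  have hk7 : k < 7 := by nlinarith
  have hp3 : (p : ℤ) % 3 = 1 := by omega
  have m3 : ∀ z : ℤ, z ^ 2 % 3 = 0 ∧ z % 3 = 0 ∨ z ^ 2 % 3 = 1 := by
    intro z
    have : z % 3 = 0 ∨ z % 3 = 1 ∨ z % 3 = 2 := by omega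
    rcases this with h | h | h <;> simp [pow_two, Int.mul_emod, h]
  have m2 : ∀ z : ℤ, z ^ 2 % 4 = 0 ∧ z % 2 = 0 ∨ z ^ 2 % 4 = 1 := by
    intro z
    have : z % 4 = 0 ∨ z % 4 = 1 ∨ z % 4 = 2 ∨ z % 4 = 3 := by omega
    rcases this with h | h | h | h <;> simp [pow_two, Int.mul_emod, h] <;> omega
  interval_cases k
  · exact ⟨x, y, by linarith⟩
  · exfalso; rcases m3 x with h | h <;> omega
  · exfalso
    have hx3 : x % 3 = 0 := by rcases m3 x with h | h <;> omega
    obtain ⟨z, rfl⟩ : (3:ℤ) ∣ x := Int.dvd_of_emod_eq_zero hx3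
    have : (p:ℤ) = 3 * z ^ 2 + 2 * y ^ 2 := by linarith
    rcases m3 y with h | h <;> omega
  · have : x % 2 = 0 ∧ y % 2 = 0 := by
      rcases m2 x with h | h <;> rcases m2 y with h' | h' <;> omega
    obtain ⟨z, rfl⟩ : (2:ℤ) ∣ x := Int.dvd_of_emod_eq_zero this.1
    obtain ⟨w, rfl⟩ : (2:ℤ) ∣ y := Int.dvd_of_emod_eq_zero this.2
    exact ⟨z, w, by linarith⟩
  · exfalso; rcases m3 x with h | h <;> omega
  · have h3 : x % 3 = 0 := by rcases m3 x with h | h <;> omega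
    have h2 : x % 2 = 0 := by rcases m2 x with h | h <;> omega
    obtain ⟨z, rfl⟩ : (6:ℤ) ∣ x := Int.dvd_of_emod_eq_zero (by omega)
    exact ⟨y, z, by linarith⟩

lemma isSq_two (p : ℕ) [hpf : Fact p.Prime] (hp8 : p % 8 = 1 ∨ p % 8 = 7) :
    IsSquare (2 : ZMod p) := by
  rw [ZMod.exists_sq_eq_two_iff]
  · exact hp8
  · rintro rfl; omega

lemma isSq_neg_three (p : ℕ) [hpf : Fact p.Prime] (hp : 3 < p) :
    IsSquare (-3 : ZMod p) ↔ p % 3 = 1 := by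
  have h2 : p ≠ 2 := by omega
  have h3 : ((-3 : ℤ) : ZMod p) ≠ 0 := by
    rw [Ne, ZMod.intCast_zmod_eq_zero_iff_dvd]
    intro h
    have := Int.le_of_dvd (by norm_num) ((dvd_neg).2 h)
    omega
  have hodd : p % 2 = 1 := by
    rcases hpf.out.eq_two_or_odd with h | h <;> omega
  have hL : legendreSym p (-3) = legendreSym 3 p := by
    have e1 : (-3 : ℤ) = (-1) * 3 := by norm_num
    rw [e1, legendreSym.mul, legendreSym.at_neg_one h2]
    have := legendreSym.quadratic_reciprocity' (p := 3) (q := p) (by norm_num) h2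
    have e3 : legendreSym p (3:ℤ) = (-1) ^ (3 / 2 * (p / 2)) * legendreSym 3 p := by exact_mod_cast this
    rw [e3, ZMod.χ₄_eq_neg_one_pow hodd, ← mul_assoc, ← pow_add]
    have : Even (p/2 + 3/2*(p/2)) := by
      rw [show 3/2 = 1 from rfl]; exact ⟨p/2, by omega⟩
    rw [this.neg_one_pow, one_mul]
  have e4 : IsSquare (-3 : ZMod p) ↔ legendreSym p (-3) = 1 := by
    rw [legendreSym.eq_one_iff _ h3]; push_cast; rfl
  rw [e4, hL, legendreSym.mod]
  have : p % 3 ≠ 0 := by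
    intro h
    have := (Nat.prime_dvd_prime_iff_eq Nat.prime_three hpf.out).1 (Nat.dvd_of_mod_eq_zero h)
    omega
  have : p % 3 = 1 ∨ p % 3 = 2 := by omega
  have hz : ((p:ℤ) % (3:ℕ)) = ((p % 3 : ℕ) : ℤ) := by simp
  rw [hz]
  rcases this with h | h <;> rw [h] <;> decide


def ezq {R : Type*} [CommRing R] (T s : R) : R := T^2+12*T+(18-12*s)
def ezg {R : Type*} [CommRing R] (T s : R) : R := T^2+(12-6*s)*T+(18-12*s)
def ezh {R : Type*} [CommRing R] (T s : R) : R := (T-3*s)*(T+4-3*s)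
def ezz {R : Type*} [CommRing R] (T s : R) : R := (-21384)*T^0*s^0 + (15120)*T^0*s^1 + (-10368)*T^1*s^0 + (7344)*T^1*s^1 + (-1620)*T^2*s^0 + (1296)*T^2*s^1 + (-54)*T^4*s^0 + (-108)*T^4*s^1 + (-12)*T^5*s^1 + (1)*T^6*s^0

lemma ez_id {R : Type*} [CommRing R] (T s : R) (hs : s^2 = 2) :
    (ezz T s)^2 = (ezq T s * ezg T s ^2)^2 - 72*T*(ezh T s)^2*(ezq T s * ezg T s ^2)
      + 36*(18-12*s)*T^2*(ezh T s)^4 := by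
  unfold ezz ezq ezg ezh
  linear_combination ((-211631616)*T^0*s^0 + (255301632)*T^0*s^1 + (-106748928)*T^0*s^2 + (26873856)*T^0*s^3 + (-2985984)*T^0*s^4 + (-153684864)*T^1*s^0 + (64385280)*T^1*s^1 + (159796800)*T^1*s^2 + (-164322432)*T^1*s^3 + (66251520)*T^1*s^4 + (-10077696)*T^1*s^5 + (30652992)*T^2*s^0 + (-248303232)*T^2*s^1 + (363053664)*T^2*s^2 + (-175379904)*T^2*s^3 + (-14661648)*T^2*s^4 + (48498912)*T^2*s^5 + (-19368072)*T^2*s^6 + (2834352)*T^2*s^7 + (99517248)*T^3*s^0 + (-271537920)*T^3*s^1 + (224298720)*T^3*s^2 + (-6469632)*T^3*s^3 + (-83374272)*T^3*s^4 + (44089920)*T^3*s^5 + (-7558272)*T^3*s^6 + (65505024)*T^4*s^0 + (-125504640)*T^4*s^1 + (41710464)*T^4*s^2 + (49921920)*T^4*s^3 + (-41127264)*T^4*s^4 + (8817984)*T^4*s^5 + (23164704)*T^5*s^0 + (-26516160)*T^5*s^1 + (-9850896)*T^5*s^2 + (19432224)*T^5*s^3 + (-5668704)*T^5*s^4 + (4585248)*T^6*s^0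 + (-945216)*T^6*s^1 + (-4723920)*T^6*s^2 + (2130624)*T^6*s^3 + (423792)*T^7*s^0 + (532224)*T^7*s^1 + (-476280)*T^7*s^2 + (-2592)*T^8*s^0 + (64800)*T^8*s^1 + (-1296)*T^8*s^2 + (-2736)*T^9*s^0 + (864)*T^9*s^1 + (-72)*T^10*s^0) * hs

lemma ez_wron {R : Type*} [CommRing R] (T s : R) (hs : s^2 = 2) :
    (-6*((ezh T s)^2+2*T*ezh T s*(2*T+4-6*s)))*(ezq T s * ezg T s^2)
     - (-6*T*(ezh T s)^2)*((2*T+12)*(ezg T s)^2+2*ezq T s*ezg T s*(2*T+12-6*s))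
     = 6*ezg T s*ezh T s*ezz T s := by
  unfold ezz ezq ezg ezh
  linear_combination ((13856832)*T^0*s^1 + (-26908848)*T^0*s^2 + (18919008)*T^0*s^3 + (-6018624)*T^0*s^4 + (839808)*T^0*s^5 + (-4618944)*T^1*s^0 + (25870752)*T^1*s^1 + (-32083776)*T^1*s^2 + (14556672)*T^1*s^3 + (-2239488)*T^1*s^4 + (-5633712)*T^2*s^0 + (13841280)*T^2*s^1 + (-7031448)*T^2*s^2 + (-1702944)*T^2*s^3 + (1644624)*T^2*s^4 + (-209952)*T^2*s^5 + (-1749600)*T^3*s^0 + (-444528)*T^3*s^1 + (5132160)*T^3*s^2 + (-3685824)*T^3*s^3 + (699840)*T^3*s^4 + (464616)*T^4*s^0 + (-2766960)*T^4*s^1 + (2959740)*T^4*s^2 + (-938952)*T^4*s^3 + (52488)*T^4*s^4 + (439344)*T^5*s^0 + (-975240)*T^5*s^1 + (540432)*T^5*s^2 + (-69984)*T^5*s^3 + (112428)*T^6*s^0 + (-136080)*T^6*s^1 + (33534)*T^6*s^2 + (12312)*T^7*s^0 + (-6804)*T^7*s^1 + (486)*T^8*s^0) * hs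

lemma sum_pow_small (p : ℕ) [hpf : Fact p.Prime] (i : ℕ) (hi : i ≤ 2 * p - 2) :
    ∑ x : ZMod p, x ^ i = if i = p - 1 ∨ i = 2 * p - 2 then -1 else 0 := by
  have hp := hpf.out.two_le
  have h1 : ∑ x : ZMod p, x ^ (p - 1) = -1 := by
    have : ∀ x : ZMod p, x ^ (p - 1) = 1 - (if x = 0 then 1 else 0) := by
      intro x
      by_cases hx : x = 0
      · subst hx
        rw [zero_pow (by omega)]; simp
      · rw [ZMod.pow_card_sub_one_eq_one hx]; simp [hx]
    rw [Finset.sum_congr rfl (fun x _ => this x)]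
    simp [Finset.card_univ]
  have h2 : ∀ i, i < p - 1 → ∑ x : ZMod p, x ^ i = 0 := by
    intro i hi
    apply FiniteField.sum_pow_lt_card_sub_one
    rwa [ZMod.card]
  by_cases h3 : i < p - 1
  · rw [h2 i h3, if_neg (by omega)]
  by_cases h4 : i = p - 1
  · subst h4; rw [h1]; simp
  have h5 : ∑ x : ZMod p, x ^ i = ∑ x : ZMod p, x ^ (i - (p - 1)) := by
    apply Finset.sum_congr rfl
    intro x _
    have : i = (i - (p - 1) - 1) + p := by omega
    rw [this, pow_add, ZMod.pow_card, ← pow_succ]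
    congr 1; omega
  rw [h5]
  by_cases h6 : i = 2 * p - 2
  · subst h6
    rw [show 2 * p - 2 - (p - 1) = p - 1 by omega, h1]; simp
  · rw [h2 _ (by omega), if_neg (by omega)]

lemma sum_eval_poly (p : ℕ) [hpf : Fact p.Prime] (g : Polynomial (ZMod p))
    (hg : g.natDegree ≤ 2 * p - 2) :
    ∑ x : ZMod p, g.eval x = -(g.coeff (p - 1) + g.coeff (2 * p - 2)) := by
  have hp := hpf.out.two_le
  simp_rw [Polynomial.eval_eq_sum_range' (show g.natDegree < 2 * p - 2 + 1 by omega)]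
  rw [Finset.sum_comm]
  simp_rw [← Finset.mul_sum]
  rw [Finset.sum_congr rfl (fun i hi => by
    rw [sum_pow_small p i (by have := mem_range.1 hi; omega)])]
  rw [← Finset.sum_subset (s₁ := {p - 1, 2 * p - 2})]
  · rw [Finset.sum_pair (by omega)]
    simp; ring
  · intro x hx
    simp at hx ⊢; omega
  · intro x _ hx
    simp at hx
    simp [hx]

noncomputable def FP {K : Type*} [Field K] (s : K) : Polynomial K :=
  Polynomial.X * (Polynomial.X ^ 2 + 12 * Polynomial.X + Polynomial.C (18 - 12 * s))

lemma FP_natDegree {K : Type*} [Field K] (s : K) : (FP s).natDegree = 3 := by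
  have : FP s = Polynomial.X^3 + Polynomial.C 12 * Polynomial.X^2 + Polynomial.C (18 - 12*s) * Polynomial.X := by
    unfold FP
    rw [show (Polynomial.C 12 : Polynomial K) = 12 from rfl]; ring
  rw [this]
  compute_degree!

def Wsum (p : ℕ) [Fact p.Prime] (s : ZMod p) : ZMod p :=
  ∑ x : ZMod p, (x * (x ^ 2 + 12 * x + (18 - 12 * s))) ^ ((p - 1) / 2)

lemma Wsum_eq_coeff (p : ℕ) [hpf : Fact p.Prime] (hp : 3 < p) (s : ZMod p) :
    Wsum p s = -((FP s) ^ ((p - 1) / 2)).coeff (p - 1) := by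
  have hodd : p % 2 = 1 := by
    rcases hpf.out.eq_two_or_odd with h | h <;> omega
  have hd : ((FP s) ^ ((p - 1) / 2)).natDegree = 3 * ((p - 1) / 2) := by
    rw [Polynomial.natDegree_pow, FP_natDegree]; ring
  have := sum_eval_poly p ((FP s) ^ ((p - 1) / 2)) (by rw [hd]; omega)
  rw [Polynomial.coeff_eq_zero_of_natDegree_lt (n := 2 * p - 2) (by rw [hd]; omega), add_zero] at this
  rw [← this]
  unfold Wsum
  simp [FP]

lemma natCast_ne_zero_of_small (p m : ℕ) [hpf : Fact p.Prime] (h0 : 0 < m) (h : m < p) :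
    (m : ZMod p) ≠ 0 := by
  rw [Ne, ZMod.natCast_eq_zero_iff]
  intro h'
  have := Nat.le_of_dvd h0 h'
  omega

lemma two_three_ne (p : ℕ) [hpf : Fact p.Prime] (hp : 3 < p) :
    (2 : ZMod p) ≠ 0 ∧ (3 : ZMod p) ≠ 0 := by
  constructor
  · exact_mod_cast natCast_ne_zero_of_small p 2 (by norm_num) (by omega)
  · exact_mod_cast natCast_ne_zero_of_small p 3 (by norm_num) (by omega)

/-- beta is nonzero -/
lemma beta_ne {K : Type*} [Field K] (h2 : (2 : K) ≠ 0) (h3 : (3 : K) ≠ 0) (s : K) (hs : s ^ 2 = 2) :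
    18 - 12 * s ≠ 0 := by
  intro h
  have : (18 - 12 * s) * (18 + 12 * s) = 2 ^ 2 * 3 ^ 2 := by linear_combination (-144) * hs
  rw [h, zero_mul] at this
  have h' : (2 : K) ^ 2 * 3 ^ 2 ≠ 0 := mul_ne_zero (pow_ne_zero _ h2) (pow_ne_zero _ h3)
  exact h' this.symm

section PS
open PowerSeries

lemma rho_exists {K : Type*} [Field K] (h2 : (2 : K) ≠ 0) (h3 : (3 : K) ≠ 0) (s : K) (hs : s ^ 2 = 2) :
    ∃ u : K⟦X⟧, constantCoeff u = -6 ∧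
      (d⁄dX K (X * u)) ^ 2 * (FP s : K⟦X⟧) = (-6) * Polynomial.aeval (X * u) (FP s) := by
  have hb := beta_ne h2 h3 s hs
  set S : K⟦X⟧ := C s with hS
  have hSS : S ^ 2 = 2 := by
    rw [hS, ← map_pow, hs]; rfl
  set V : K⟦X⟧ := ezq X S * ezg X S ^ 2 with hV
  have cn : ∀ m : ℕ, constantCoeff (R := K) (OfNat.ofNat (m+2) : K⟦X⟧) = OfNat.ofNat (m+2) :=
    fun m => map_natCast (constantCoeff (R := K)) (m+2)
  have Cn : ∀ m : ℕ, C (R := K) (OfNat.ofNat (m+2) : K) = OfNat.ofNat (m+2) :=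
    fun m => map_natCast (C (R := K)) (m+2)
  have hV0 : constantCoeff V = (18 - 12 * s) ^ 3 := by
    simp [hV, ezq, ezg, hS, cn]; ring
  have hVne : V ≠ 0 := by
    intro h; rw [h] at hV0; rw [map_zero] at hV0; exact pow_ne_zero 3 hb hV0.symm
  have hVinv : V * V⁻¹ = 1 := PowerSeries.mul_inv_cancel V (by rw [hV0]; exact pow_ne_zero _ hb)
  set u : K⟦X⟧ := (18 - 12 * S) * (-6 * ezh X S ^ 2) * V⁻¹ with hu
  have huV : u * V = (18 - 12 * S) * (-6 * ezh X S ^ 2) := by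
    rw [hu]; linear_combination ((18 - 12 * S) * (-6 * ezh X S ^ 2)) * hVinv
  refine ⟨u, ?_, ?_⟩
  · have := congrArg constantCoeff huV
    rw [map_mul, hV0] at this
    simp [ezh, hS, cn] at this
    have h4 : constantCoeff u * (18 - 12 * s) ^ 3 = -6 * (18 - 12 * s) ^ 3 := by
      rw [this]
      linear_combination ((-17496)*s^0 + (34992)*s^1 + (-24300)*s^2 + (5832)*s^3) * hs
    exact mul_right_cancel₀ (pow_ne_zero _ hb) h4
  · set ρ := X * u with hρ
    have e1 : ρ * V = (18 - 12 * S) * (-6 * X * ezh X S ^ 2) := by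
      rw [hρ]; linear_combination X * huV
    have dS : d⁄dX K S = 0 := by rw [hS]; simp
    have dnum : ∀ m : ℕ, d⁄dX K (OfNat.ofNat (m+2) : K⟦X⟧) = 0 := by
      intro m; exact Derivation.map_natCast _ (m+2)
    have dh : d⁄dX K (ezh X S) = 2 * X + 4 - 6 * S := by
      simp [ezh, dS, dnum, Derivation.leibniz]; ring
    have dq : d⁄dX K (ezq X S) = 2 * X + 12 := by
      simp [ezq, dS, dnum, Derivation.leibniz, Derivation.leibniz_pow]
    have dg : d⁄dX K (ezg X S) = 2 * X + 12 - 6 * S := by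
      simp [ezg, dS, dnum, Derivation.leibniz, Derivation.leibniz_pow]; ring
    have e2 := congrArg (d⁄dX K) e1
    rw [hV] at e2
    simp [dh, dq, dg, dS, dnum, Derivation.leibniz, Derivation.leibniz_pow] at e2
    have e3 := ez_wron X S hSS
    have e4 := ez_id X S hSS
    have e5 : d⁄dX K ρ * V ^ 2 = (18 - 12 * S) * (6 * ezg X S * ezh X S * ezz X S) := by
      rw [← e3]
      rw [hV] at e1 ⊢
      linear_combination (ezq X S * ezg X S ^ 2) * e2 - (((2*X+12)*(ezg X S)^2+2*ezq X S*ezg X S*(2*X+12-6*S))) * e1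
    have e6 : (FP s : K⟦X⟧) = X * ezq X S := by
      have h12 : ((12 : Polynomial K) : K⟦X⟧) = 12 := map_natCast (Polynomial.coeToPowerSeries.ringHom (R := K)) 12
      simp [FP, ezq, hS, Cn, h12]
    have e7 : Polynomial.aeval ρ (FP s) = ρ * (ρ ^ 2 + 12 * ρ + (18 - 12 * S)) := by
      have h12 : Polynomial.aeval ρ (12 : Polynomial K) = 12 := map_natCast (Polynomial.aeval (R := K) ρ) 12
      simp [FP, hS, h12, Cn]
    rw [e6, e7]
    apply mul_right_cancel₀ (pow_ne_zero 4 hVne)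
    have e8 : (ρ * (ρ ^ 2 + 12 * ρ + (18 - 12 * S))) * V ^ 3 =
      (ρ * V) * ((ρ * V) ^ 2 + 12 * (ρ * V) * V + (18 - 12 * S) * V ^ 2) := by ring
    have e9 : (d⁄dX K ρ) ^ 2 * (X * ezq X S) * V ^ 4 = (d⁄dX K ρ * V ^ 2) ^ 2 * (X * ezq X S) := by ring
    rw [e9, e5]
    have e10 : -6 * (ρ * (ρ ^ 2 + 12 * ρ + (18 - 12 * S))) * V ^ 4 = -6 * V *
       ((ρ * V) * ((ρ * V) ^ 2 + 12 * (ρ * V) * V + (18 - 12 * S) * V ^ 2)) := by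
      rw [← e8]; ring
    rw [e10, e1, hV]
    linear_combination ((18 - 12 * S)^2 * 36 * (ezg X S)^2 * (ezh X S)^2 * (X * ezq X S)) * e4

lemma Wsum_zero (p : ℕ) [hpf : Fact p.Prime] (hp : 3 < p) (s : ZMod p) (hs : s ^ 2 = 2)
    (h6 : (-6 : ZMod p) ^ ((p - 1) / 2) = -1) : Wsum p s = 0 := by
  rw [Wsum_eq_coeff p hp s]
  obtain ⟨h2, h3⟩ := two_three_ne p hp
  have hodd : p % 2 = 1 := by
    rcases hpf.out.eq_two_or_odd with h | h <;> omega
  obtain ⟨u, hu0, hu⟩ := rho_exists h2 h3 s hs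
  set n := (p - 1) / 2 with hn
  have hpn : p = 2 * n + 1 := by omega
  set A := ((FP s) ^ n).coeff (p - 1) with hA
  set ρ : (ZMod p)⟦X⟧ := X * u with hρ
  have key : (d⁄dX (ZMod p) ρ) ^ p * ((FP s ^ n : Polynomial (ZMod p)) : (ZMod p)⟦X⟧) =
      C ((-6) ^ n) * (Polynomial.aeval ρ (FP s ^ n) * d⁄dX (ZMod p) ρ) := by
    have h1 : (d⁄dX (ZMod p) ρ) ^ p = (d⁄dX (ZMod p) ρ ^ 2) ^ n * d⁄dX (ZMod p) ρ := by
      rw [← pow_mul, ← pow_succ]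
      exact congrArg _ hpn
    rw [h1, Polynomial.coe_pow, map_pow, map_pow, mul_right_comm, ← mul_pow, hu, mul_pow]
    have : (C (-6 : ZMod p) : (ZMod p)⟦X⟧) = -6 := by simp; rfl
    rw [this]; ring
  have hdeg : ((FP s) ^ n).natDegree < 2 * p - 1 := by
    rw [Polynomial.natDegree_pow, FP_natDegree]; omega
  have hd0 : constantCoeff (d⁄dX (ZMod p) ρ) = -6 := by
    rw [hρ]; simp [Derivation.leibniz, hu0]
  have hL : coeff (p - 1) ((d⁄dX (ZMod p) ρ) ^ p * ((FP s ^ n : Polynomial (ZMod p)) : (ZMod p)⟦X⟧)) = -6 * A := by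
    obtain ⟨v, hv⟩ : X ∣ d⁄dX (ZMod p) ρ - C (-6) := by
      rw [X_dvd_iff]; simp [hd0]
    have : d⁄dX (ZMod p) ρ = X * v + C (-6) := by rw [← hv]; ring
    have hchar : CharP (ZMod p)⟦X⟧ p := charP_of_injective_ringHom (f := C (R := ZMod p)) C_injective p
    rw [this, add_pow_char, ← map_pow, ZMod.pow_card, add_mul, map_add, mul_pow, mul_assoc, coeff_X_pow_mul',
      if_neg (by omega), zero_add, coeff_C_mul, Polynomial.coeff_coe]
  have hR : coeff (p - 1) (Polynomial.aeval ρ (FP s ^ n) * d⁄dX (ZMod p) ρ) = -6 * A := by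
    rw [Polynomial.aeval_eq_sum_range' hdeg, Finset.sum_mul, map_sum]
    rw [Finset.sum_eq_single (p - 1)]
    · rw [smul_mul_assoc, coeff_smul, ← hA, hρ, mul_pow, mul_assoc, coeff_X_pow_mul', if_pos le_rfl]
      rw [Nat.sub_self, coeff_zero_eq_constantCoeff, map_mul, map_pow, hu0]
      rw [ZMod.pow_card_sub_one_eq_one, ← hρ, hd0]
      · simp; ring
      · rw [show (-6 : ZMod p) = -(2 * 3) by norm_num]
        exact neg_ne_zero.2 (mul_ne_zero h2 h3)
    · intro j hj hne
      rw [smul_mul_assoc, coeff_smul]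
      have h1 : d⁄dX (ZMod p) (ρ ^ (j + 1)) = ((j + 1 : ℕ) : (ZMod p)⟦X⟧) * (ρ ^ j * d⁄dX (ZMod p) ρ) := by
        rw [derivative_pow]; simp; ring
      have h2 := congrArg (coeff (p - 1)) h1
      rw [coeff_derivative] at h2
      have h3 : ((p - 1 : ℕ) : ZMod p) + 1 = 0 := by
        rw [← Nat.cast_succ, Nat.succ_eq_add_one, Nat.sub_add_cancel (by omega)]; simp
      rw [h3, mul_zero] at h2
      have h4 : ((j + 1 : ℕ) : (ZMod p)⟦X⟧) = C ((j + 1 : ℕ) : ZMod p) := by simp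
      rw [h4, coeff_C_mul] at h2
      have h5 : ((j + 1 : ℕ) : ZMod p) ≠ 0 := by
        rw [Ne, ZMod.natCast_eq_zero_iff]
        rintro ⟨m, hm⟩
        have hj' := Finset.mem_range.1 hj
        have : m < 2 := by
          by_contra hcon
          have : p * 2 ≤ p * m := Nat.mul_le_mul_left _ (by omega)
          omega
        interval_cases m <;> omega
      have h6 := (mul_eq_zero.1 h2.symm).resolve_left h5
      rw [h6]; simp
    · intro h; exfalso; apply h; simp; omega
  rw [key, coeff_C_mul, hR, h6] at hL
  have h12 : (2 * 2 * 3 : ZMod p) * A = 0 := by linear_combination hL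
  have : (2 * 2 * 3 : ZMod p) ≠ 0 := mul_ne_zero (mul_ne_zero h2 h2) h3
  rw [(mul_eq_zero.1 h12).resolve_left this, neg_zero]

end PS



lemma card_sqrts (p : ℕ) [hpf : Fact p.Prime] (hp : 3 < p) (D : ZMod p) :
    ∑ u : ZMod p, (if u ^ 2 = D then (1 : ZMod p) else 0) = 1 + D ^ ((p - 1) / 2) := by
  have hodd : p % 2 = 1 := by
    rcases hpf.out.eq_two_or_odd with h | h <;> omega
  have hch : ringChar (ZMod p) ≠ 2 := by rw [ZMod.ringChar_zmod_n]; omega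
  have h1 := quadraticChar_card_sqrts hch D
  have h2 := quadraticChar_eq_pow_of_char_ne_two' hch D
  rw [ZMod.card] at h2
  rw [Finset.sum_boole, show (p - 1) / 2 = p / 2 by omega, ← h2]
  have h3 := congrArg (Int.cast : ℤ → ZMod p) h1
  push_cast at h3
  rw [add_comm, ← h3]
  congr 2
  ext x; simp

lemma card_quad (p : ℕ) [hpf : Fact p.Prime] (hp : 3 < p) (A B C : ZMod p) (hA : A ≠ 0) :
    ∑ x : ZMod p, (if A * x ^ 2 + B * x + C = 0 then (1 : ZMod p) else 0)
      = 1 + (B ^ 2 - 4 * A * C) ^ ((p - 1) / 2) := by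
  obtain ⟨h2, h3⟩ := two_three_ne p hp
  rw [← card_sqrts p hp]
  have h2A : 2 * A ≠ 0 := mul_ne_zero h2 hA
  let e : ZMod p ≃ ZMod p := (Equiv.mulLeft₀ (2 * A) h2A).trans (Equiv.addRight B)
  apply Fintype.sum_equiv e
  intro x
  have he : e x = 2 * A * x + B := rfl
  rw [he]
  congr 1
  apply propext
  constructor
  · intro h; linear_combination 4 * A * h
  · intro h
    have : (4 * A) * (A * x ^ 2 + B * x + C) = 0 := by linear_combination h
    refine (mul_eq_zero.1 this).resolve_left ?_
    rw [show 4 * A = 2 * (2 * A) by ring]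
    exact mul_ne_zero h2 h2A

lemma sum_ne_zero_eq (p : ℕ) [hpf : Fact p.Prime] (f : ZMod p → ZMod p) :
    ∑ x ∈ univ.erase 0, f x = ∑ x, f x - f 0 := by
  rw [← Finset.sum_erase_add _ _ (mem_univ (0 : ZMod p))]; ring

lemma sum_all_eq (p : ℕ) [hpf : Fact p.Prime] (f : ZMod p → ZMod p) (v : ZMod p) (h : f 0 = v) :
    ∑ x, f x = ∑ x ∈ univ.erase 0, f x + v := by
  rw [sum_ne_zero_eq, h]; ring

lemma sum_bilin (p : ℕ) [hpf : Fact p.Prime] (c : ZMod p) (k : ℕ) (hk : k < p) :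
    ∑ x ∈ univ.erase (0 : ZMod p), ((1 + c * x) * (1 + x⁻¹)) ^ k =
      - ∑ j ∈ range (k + 1), ((k.choose j : ℕ) : ZMod p) ^ 2 * c ^ j
      - (if k = p - 1 then c ^ (p - 1) + 1 else 0) := by
  have hp := hpf.out.two_le
  set h : Polynomial (ZMod p) := (1 + Polynomial.C c * Polynomial.X) ^ k * (1 + Polynomial.X) ^ k with hh
  set g : Polynomial (ZMod p) := h * Polynomial.X ^ (p - 1 - k) with hg
  have hd1 : ((1 + Polynomial.C c * Polynomial.X) ^ k).natDegree ≤ k := by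
    refine (Polynomial.natDegree_pow_le).trans ?_
    have : (1 + Polynomial.C c * Polynomial.X).natDegree ≤ 1 := by compute_degree
    nlinarith
  have hd2 : ((1 + Polynomial.X : Polynomial (ZMod p)) ^ k).natDegree ≤ k := by
    refine (Polynomial.natDegree_pow_le).trans ?_
    have : (1 + Polynomial.X : Polynomial (ZMod p)).natDegree ≤ 1 := by compute_degree
    nlinarith
  have hdh : h.natDegree ≤ k + k := Polynomial.natDegree_mul_le_of_le hd1 hd2
  have hdg : g.natDegree ≤ 2 * p - 2 := by
    have := Polynomial.natDegree_mul_le_of_le hdh (Polynomial.natDegree_X_pow_le (R := ZMod p) (p - 1 - k))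
    refine this.trans (by omega)
  have h1 : ∀ x ∈ univ.erase (0 : ZMod p), ((1 + c * x) * (1 + x⁻¹)) ^ k = g.eval x := by
    intro x hx
    have hx0 : x ≠ 0 := (mem_erase.1 hx).1
    have hxp : x ^ k * x ^ (p - 1 - k) = 1 := by
      rw [← pow_add, show k + (p - 1 - k) = p - 1 by omega, ZMod.pow_card_sub_one_eq_one hx0]
    simp only [hg, hh, Polynomial.eval_mul, Polynomial.eval_pow, Polynomial.eval_add, Polynomial.eval_one, Polynomial.eval_C, Polynomial.eval_X]
    have e1 : (1 + x) ^ k = x ^ k * (1 + x⁻¹) ^ k := by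
      rw [← mul_pow]; congr 1; field_simp; ring
    rw [e1, mul_pow]
    linear_combination (-(1 + c * x) ^ k * (1 + x⁻¹) ^ k) * hxp
  rw [Finset.sum_congr rfl h1, sum_ne_zero_eq, sum_eval_poly p g hdg]
  have c1 : g.coeff (p - 1) = ∑ j ∈ range (k + 1), ((k.choose j : ℕ) : ZMod p) ^ 2 * c ^ j := by
    rw [hg, Polynomial.coeff_mul_X_pow', if_pos (by omega), show p - 1 - (p - 1 - k) = k by omega, hh,
      Polynomial.coeff_mul, Finset.Nat.sum_antidiagonal_eq_sum_range_succ_mk]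
    apply Finset.sum_congr rfl
    intro j hj
    have hj' : j ≤ k := by have := mem_range.1 hj; omega
    simp only
    have e1 : ((1 + Polynomial.C c * Polynomial.X) ^ k).coeff j = (k.choose j : ZMod p) * c ^ j := by
      have : ((1 + Polynomial.C c * Polynomial.X) ^ k) = ((1 + Polynomial.X : Polynomial (ZMod p)) ^ k).comp (Polynomial.C c * Polynomial.X) := by simp
      rw [this, Polynomial.comp_C_mul_X_coeff, Polynomial.coeff_one_add_X_pow]
    rw [e1, Polynomial.coeff_one_add_X_pow, Nat.choose_symm hj']
    ring
  by_cases hk1 : k = p - 1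
  · have hg' : g = h := by rw [hg, hk1]; simp
    have c2 : g.coeff (2 * p - 2) = c ^ (p - 1) := by
      rw [hg', hh, show 2 * p - 2 = k + k by omega, Polynomial.coeff_mul_add_eq_of_natDegree_le hd1 hd2]
      have e1 : ((1 + Polynomial.C c * Polynomial.X) ^ k).coeff k = c ^ k := by
        have : ((1 + Polynomial.C c * Polynomial.X) ^ k) = ((1 + Polynomial.X : Polynomial (ZMod p)) ^ k).comp (Polynomial.C c * Polynomial.X) := by simp
        rw [this, Polynomial.comp_C_mul_X_coeff, Polynomial.coeff_one_add_X_pow]; simp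
      rw [e1, Polynomial.coeff_one_add_X_pow, hk1]; simp
    have c3 : g.eval 0 = 1 := by rw [hg', hh]; simp
    rw [c1, c2, c3, if_pos hk1]; ring
  · have c2 : g.coeff (2 * p - 2) = 0 := by
      apply Polynomial.coeff_eq_zero_of_natDegree_lt
      have := Polynomial.natDegree_mul_le_of_le hdh (Polynomial.natDegree_X_pow_le (R := ZMod p) (p - 1 - k))
      exact lt_of_le_of_lt this (by omega)
    have c3 : g.eval 0 = 0 := by
      rw [hg, Polynomial.eval_mul, Polynomial.eval_pow, Polynomial.eval_X, zero_pow (by omega), mul_zero]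
    rw [c1, c2, c3, if_neg hk1]; ring

lemma sum_central (p : ℕ) [hpf : Fact p.Prime] (k : ℕ) (hk : k < p) :
    ∑ y ∈ univ.erase (0 : ZMod p), ((1 + y) * (1 + y⁻¹)) ^ k =
      - ((2 * k).choose k : ZMod p) - (if k = p - 1 then 2 else 0) := by
  have h := sum_bilin p 1 k hk
  simp only [one_mul, one_pow, mul_one] at h
  rw [h]
  have := Nat.sum_range_choose_sq k
  have h2 := congrArg (Nat.cast : ℕ → ZMod p) this
  push_cast at h2
  rw [h2]
  norm_num

lemma geom_ind (p : ℕ) [hpf : Fact p.Prime] (z : ZMod p) :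
    ∑ k ∈ range p, z ^ k = 1 - (if z = 1 then 1 else 0) := by
  by_cases h : z = 1
  · simp [h]
  · rw [if_neg h, sub_zero]
    have := geom_sum_mul z p
    rw [ZMod.pow_card] at this
    exact mul_right_cancel₀ (sub_ne_zero.2 h) (by rw [this, one_mul])

lemma central_zero (p : ℕ) [hpf : Fact p.Prime] (k : ℕ) (h1 : p ≤ 2 * k) (h2 : k < p) :
    ((2 * k).choose k : ZMod p) = 0 := by
  rw [ZMod.natCast_eq_zero_iff]
  exact hpf.out.dvd_choose (by omega) (by omega) (by omega)

lemma part_B1 (p : ℕ) [hpf : Fact p.Prime] (hp : 3 < p) (t : ZMod p) (ht : t ≠ 0) :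
    ∑ k ∈ range p, (a k : ZMod p) * t ^ k =
      -4 - ∑ y ∈ univ.erase (0 : ZMod p), ∑ x ∈ univ.erase (0 : ZMod p),
        (if t * ((1 + ((1 + y) * (1 + y⁻¹)) * x) * (1 + x⁻¹)) = 1 then 1 else 0) := by
  have card_e : ∑ y ∈ univ.erase (0 : ZMod p), (1 : ZMod p) = -1 := by
    rw [sum_ne_zero_eq]; simp
  have h1 : ∑ y ∈ univ.erase (0 : ZMod p), ∑ x ∈ univ.erase (0 : ZMod p),
      ∑ k ∈ range p, (t * ((1 + ((1 + y) * (1 + y⁻¹)) * x) * (1 + x⁻¹))) ^ k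
      = 1 - ∑ y ∈ univ.erase (0 : ZMod p), ∑ x ∈ univ.erase (0 : ZMod p),
        (if t * ((1 + ((1 + y) * (1 + y⁻¹)) * x) * (1 + x⁻¹)) = 1 then 1 else 0) := by
    simp_rw [geom_ind, Finset.sum_sub_distrib, card_e, Finset.sum_neg_distrib, card_e]
    ring
  have h2 : ∑ y ∈ univ.erase (0 : ZMod p), ∑ x ∈ univ.erase (0 : ZMod p),
      ∑ k ∈ range p, (t * ((1 + ((1 + y) * (1 + y⁻¹)) * x) * (1 + x⁻¹))) ^ k
      = ∑ k ∈ range p, t ^ k * (∑ y ∈ univ.erase (0 : ZMod p),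
        (- ∑ j ∈ range (k + 1), ((k.choose j : ℕ) : ZMod p) ^ 2 * ((1 + y) * (1 + y⁻¹)) ^ j
      - (if k = p - 1 then ((1 + y) * (1 + y⁻¹)) ^ (p - 1) + 1 else 0))) := by
    rw [Finset.sum_congr rfl (fun y _ => Finset.sum_comm), Finset.sum_comm]
    apply Finset.sum_congr rfl
    intro k hk
    rw [Finset.mul_sum]
    apply Finset.sum_congr rfl
    intro y hy
    rw [← sum_bilin p _ k (mem_range.1 hk), Finset.mul_sum]
    simp_rw [mul_pow]
  have h3 : ∀ k ∈ range p, t ^ k * (∑ y ∈ univ.erase (0 : ZMod p),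
        (- ∑ j ∈ range (k + 1), ((k.choose j : ℕ) : ZMod p) ^ 2 * ((1 + y) * (1 + y⁻¹)) ^ j
      - (if k = p - 1 then ((1 + y) * (1 + y⁻¹)) ^ (p - 1) + 1 else 0)))
      = (a k : ZMod p) * t ^ k + (if k = p - 1 then 5 else 0) := by
    intro k hk
    have hk' := mem_range.1 hk
    rw [Finset.sum_sub_distrib, Finset.sum_neg_distrib, Finset.sum_comm]
    simp_rw [← Finset.mul_sum]
    have e1 : ∑ j ∈ range (k + 1), ((k.choose j : ℕ) : ZMod p) ^ 2 * ∑ y ∈ univ.erase (0 : ZMod p), ((1 + y) * (1 + y⁻¹)) ^ j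
        = -(a k : ZMod p) - (if k = p - 1 then 2 else 0) := by
      rw [Finset.sum_congr rfl (fun j hj => by rw [sum_central p j (by have := mem_range.1 hj; omega)])]
      simp_rw [mul_sub, Finset.sum_sub_distrib, mul_neg, Finset.sum_neg_distrib]
      congr 1
      · rw [a]; push_cast; rfl
      · by_cases hk1 : k = p - 1
        · rw [if_pos hk1, Finset.sum_eq_single k]
          · simp [hk1]
          · intro j hj hne
            rw [if_neg (by omega), mul_zero]
          · intro h; simp at h
        · rw [if_neg hk1]
          apply Finset.sum_eq_zero
          intro j hj
          have := mem_range.1 hj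
          rw [if_neg (by omega), mul_zero]
    rw [e1]
    by_cases hk1 : k = p - 1
    · simp only [hk1, if_true]
      rw [Finset.sum_add_distrib, card_e, sum_central p (p - 1) (by omega), central_zero p (p-1) (by omega) (by omega),
        ZMod.pow_card_sub_one_eq_one ht]
      simp; ring
    · simp only [hk1, if_false]
      simp; ring
  rw [Finset.sum_congr rfl h3, h1, Finset.sum_add_distrib, Finset.sum_ite_eq' ] at h2
  rw [if_pos (by simp; omega)] at h2
  linear_combination -h2

lemma part_B2 (p : ℕ) [hpf : Fact p.Prime] (hp : 3 < p) (t : ZMod p) (ht : t ≠ 0) (ht1 : t ≠ 1) :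
    ∑ k ∈ range p, (a k : ZMod p) * t ^ k =
      - ∑ v : ZMod p, ((1 - 4 * v) * ((t - 1) ^ 2 * v ^ 2 - 2 * t * (t + 1) * v + t ^ 2)) ^ ((p - 1) / 2) := by
  have hodd : p % 2 = 1 := by
    rcases hpf.out.eq_two_or_odd with h | h <;> omega
  set n := (p - 1) / 2 with hn
  have h2n : 2 * n = p - 1 := by omega
  have hn0 : n ≠ 0 := by omega
  have sq1 : ∀ z : ZMod p, z ≠ 0 → (z ^ 2) ^ n = 1 := by
    intro z hz
    rw [← pow_mul, h2n, ZMod.pow_card_sub_one_eq_one hz]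
  have card_e : ∑ y ∈ univ.erase (0 : ZMod p), (1 : ZMod p) = -1 := by
    rw [sum_ne_zero_eq]; simp
  let δ : ZMod p → ZMod p := fun c => (t * (1 + c) - 1) ^ 2 - 4 * (t * c) * t
  have h1 : ∀ c : ZMod p, ∑ x ∈ univ.erase (0 : ZMod p),
        (if t * ((1 + c * x) * (1 + x⁻¹)) = 1 then (1 : ZMod p) else 0) = 1 + δ c ^ n - (if c = 0 then 1 else 0) := by
    intro c
    have e1 : ∑ x ∈ univ.erase (0 : ZMod p),
        (if t * ((1 + c * x) * (1 + x⁻¹)) = 1 then (1 : ZMod p) else 0) =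
        ∑ x ∈ univ.erase (0 : ZMod p),
        (if (t * c) * x ^ 2 + (t * (1 + c) - 1) * x + t = 0 then (1 : ZMod p) else 0) := by
      apply Finset.sum_congr rfl
      intro x hx
      have hx0 : x ≠ 0 := (mem_erase.1 hx).1
      congr 1
      apply propext
      have : (t * c) * x ^ 2 + (t * (1 + c) - 1) * x + t = (t * ((1 + c * x) * (1 + x⁻¹)) - 1) * x := by
        field_simp; ring
      rw [this, mul_eq_zero, sub_eq_zero]
      simp [hx0]
    rw [e1, sum_ne_zero_eq]
    rw [if_neg (by simpa using ht), sub_zero]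
    by_cases hc : c = 0
    · rw [if_pos hc]
      have ht1' : t - 1 ≠ 0 := sub_ne_zero.2 ht1
      have : δ c ^ n = 1 := by
        have : δ c = (t - 1) ^ 2 := by simp [δ, hc]
        rw [this, sq1 _ ht1']
      rw [this, Finset.sum_eq_single (-t / (t - 1))]
      · rw [if_pos]
        · ring
        · rw [hc]; field_simp; ring
      · intro x _ hx
        rw [if_neg]
        intro h
        apply hx
        rw [hc] at h
        field_simp
        linear_combination h
      · simp
    · rw [if_neg hc, card_quad p hp _ _ _ (mul_ne_zero ht hc), sub_zero]
  have h2 : ∀ φ : ZMod p → ZMod p, ∑ y ∈ univ.erase (0 : ZMod p), φ ((1 + y) * (1 + y⁻¹)) =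
      ∑ c : ZMod p, φ c * (1 + (c * (c - 4)) ^ n) := by
    intro φ
    have e1 : ∀ c : ZMod p, 1 + (c * (c - 4)) ^ n = ∑ y ∈ univ.erase (0 : ZMod p), (if (1 + y) * (1 + y⁻¹) = c then (1 : ZMod p) else 0) := by
      intro c
      have := card_quad p hp 1 (2 - c) 1 one_ne_zero
      rw [show (2 - c) ^ 2 - 4 * 1 * 1 = c * (c - 4) by ring] at this
      rw [← this]
      rw [sum_all_eq p (fun x => (if (1:ZMod p) * x ^ 2 + (2 - c) * x + 1 = 0 then (1 : ZMod p) else 0)) 0 (by simp), add_zero]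
      apply Finset.sum_congr rfl
      intro y hy
      have hy0 : y ≠ 0 := (mem_erase.1 hy).1
      congr 1
      apply propext
      have : 1 * y ^ 2 + (2 - c) * y + 1 = ((1 + y) * (1 + y⁻¹) - c) * y := by
        field_simp; ring
      rw [this, mul_eq_zero, sub_eq_zero]
      simp [hy0]
    simp_rw [e1, Finset.mul_sum]
    rw [Finset.sum_comm]
    apply Finset.sum_congr rfl
    intro y _
    simp
  rw [part_B1 p hp t ht]
  simp_rw [h1]
  have h3 : ∑ y ∈ univ.erase (0 : ZMod p), (1 + δ ((1 + y) * (1 + y⁻¹)) ^ n - (if (1 + y) * (1 + y⁻¹) = 0 then 1 else 0))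
      = -1 + ∑ c : ZMod p, δ c ^ n * (1 + (c * (c - 4)) ^ n) - 1 := by
    rw [Finset.sum_sub_distrib, Finset.sum_add_distrib, card_e, h2 (fun c => δ c ^ n), h2 (fun c => if c = 0 then (1:ZMod p) else 0)]
    simp [hn0]
  have h4 : ∑ c : ZMod p, δ c ^ n = -1 := by
    set q : Polynomial (ZMod p) := Polynomial.C (t ^ 2) * Polynomial.X ^ 2 + Polynomial.C (2 * t * (t - 1) - 4 * t ^ 2) * Polynomial.X + Polynomial.C ((t - 1) ^ 2) with hq
    have hqd : q.natDegree ≤ 2 := by rw [hq]; compute_degree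
    have hqc : q.coeff 2 = t ^ 2 := by
      rw [hq, Polynomial.coeff_add, Polynomial.coeff_add, Polynomial.coeff_C_mul_X_pow, Polynomial.coeff_C_mul, Polynomial.coeff_X, Polynomial.coeff_C]; simp
    have hqn : (q ^ n).natDegree ≤ p - 1 := by
      refine (Polynomial.natDegree_pow_le).trans ?_
      rw [← h2n]; nlinarith
    have := sum_eval_poly p (q ^ n) (by omega)
    rw [Polynomial.coeff_eq_zero_of_natDegree_lt (n := 2 * p - 2) (by omega)] at this
    have e3 : (q ^ n).coeff (p - 1) = 1 := by
      rw [← h2n, mul_comm, Polynomial.coeff_pow_of_natDegree_le hqd, hqc, sq1 t ht]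
    rw [e3, add_zero] at this
    rw [← this]
    apply Finset.sum_congr rfl
    intro c _
    simp [hq, δ]; ring
  have h5 : ∑ c : ZMod p, δ c ^ n * (c * (c - 4)) ^ n =
      ∑ v : ZMod p, ((1 - 4 * v) * ((t - 1) ^ 2 * v ^ 2 - 2 * t * (t + 1) * v + t ^ 2)) ^ n - 1 := by
    have e0 : ((1 - 4 * (0:ZMod p)) * ((t - 1) ^ 2 * 0 ^ 2 - 2 * t * (t + 1) * 0 + t ^ 2)) ^ n = 1 := by
      rw [show (1 - 4 * (0:ZMod p)) * ((t - 1) ^ 2 * 0 ^ 2 - 2 * t * (t + 1) * 0 + t ^ 2) = t ^ 2 by ring, sq1 t ht]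
    rw [sum_all_eq p (fun v => ((1 - 4 * v) * ((t - 1) ^ 2 * v ^ 2 - 2 * t * (t + 1) * v + t ^ 2)) ^ n) 1 e0, add_sub_cancel_right]
    rw [sum_all_eq p (fun c => δ c ^ n * (c * (c - 4)) ^ n) 0 (by simp [hn0]), add_zero]
    apply Finset.sum_nbij' (fun x => x⁻¹) (fun x => x⁻¹)
    · intro x hx; simpa using hx
    · intro x hx; simpa using hx
    · intro x _; simp
    · intro x _; simp
    · intro c hc
      have hc0 : c ≠ 0 := (mem_erase.1 hc).1
      rw [← mul_pow]
      have : δ c * (c * (c - 4)) = (c ^ 2) ^ 2 * ((1 - 4 * c⁻¹) * ((t - 1) ^ 2 * c⁻¹ ^ 2 - 2 * t * (t + 1) * c⁻¹ + t ^ 2)) := by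
        simp only [δ]; field_simp; ring
      rw [this, mul_pow, sq1 _ (pow_ne_zero 2 hc0), one_mul]
  have h6 : ∑ c : ZMod p, δ c ^ n * (1 + (c * (c - 4)) ^ n) =
      ∑ c : ZMod p, δ c ^ n + ∑ c : ZMod p, δ c ^ n * (c * (c - 4)) ^ n := by
    rw [← Finset.sum_add_distrib]
    exact Finset.sum_congr rfl (fun c _ => by ring)
  rw [h3, h6, h4, h5]
  generalize ∑ v : ZMod p, ((1 - 4 * v) * ((t - 1) ^ 2 * v ^ 2 - 2 * t * (t + 1) * v + t ^ 2)) ^ n = Z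
  ring

lemma part_B (p : ℕ) [hpf : Fact p.Prime] (hp : 3 < p) (s : ZMod p) (hs : s ^ 2 = 2) :
    (∑ k ∈ range p, (a k : ZMod p) * ((3 + 2 * s) / 3) ^ k) ^ 2 = Wsum p s ^ 2 := by
  obtain ⟨h2, h3⟩ := two_three_ne p hp
  have hodd : p % 2 = 1 := by
    rcases hpf.out.eq_two_or_odd with h | h <;> omega
  have hs0 : s ≠ 0 := by rintro rfl; apply h2; rw [← hs]; ring
  have hw : (3 + 2 * s) * (3 - 2 * s) = 1 := by linear_combination (-4) * hs
  have hw0 : 3 + 2 * s ≠ 0 := left_ne_zero_of_mul (by rw [hw]; exact one_ne_zero)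
  have hw1 : 3 - 2 * s ≠ 0 := right_ne_zero_of_mul (by rw [hw]; exact one_ne_zero)
  have h34 : (3 * s - 4) ≠ 0 := by
    apply left_ne_zero_of_mul (b := 3 * s + 4)
    rw [show (3 * s - 4) * (3 * s + 4) = 2 by linear_combination 9 * hs]; exact h2
  have ht : (3 + 2 * s) / 3 ≠ 0 := div_ne_zero hw0 h3
  have ht1 : (3 + 2 * s) / 3 ≠ 1 := by
    intro h
    rw [div_eq_one_iff_eq h3] at h
    apply mul_ne_zero h2 hs0
    linear_combination h
  rw [part_B2 p hp _ ht ht1]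
  set lam : ZMod p := (3 * s - 4) * (6 * (3 - 2 * s)) ^ 2 with hlam
  have h6 : (6 : ZMod p) ≠ 0 := by rw [show (6 : ZMod p) = 2 * 3 by norm_num]; exact mul_ne_zero h2 h3
  have hl0 : lam ≠ 0 := mul_ne_zero h34 (pow_ne_zero _ (mul_ne_zero h6 hw1))
  have hW : Wsum p s = lam ^ ((p - 1) / 2) * ∑ v : ZMod p, ((1 - 4 * v) * (((3 + 2 * s) / 3 - 1) ^ 2 * v ^ 2 - 2 * ((3 + 2 * s) / 3) * ((3 + 2 * s) / 3 + 1) * v + ((3 + 2 * s) / 3) ^ 2)) ^ ((p - 1) / 2) := by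
    rw [Finset.mul_sum]
    symm
    unfold Wsum
    have h4 : (3 * s - 4) * (-4) ≠ 0 := by
      apply mul_ne_zero h34
      rw [show (-4 : ZMod p) = -(2 * 2) by norm_num]
      exact neg_ne_zero.2 (mul_ne_zero h2 h2)
    let e : ZMod p ≃ ZMod p := (Equiv.mulLeft₀ ((3 * s - 4) * (-4)) h4).trans (Equiv.addRight (3 * s - 4))
    apply Fintype.sum_equiv e
    intro v
    have he : e v = (3 * s - 4) * (1 - 4 * v) := by
      change (3 * s - 4) * (-4) * v + (3 * s - 4) = _
      ring
    rw [he, ← mul_pow]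
    congr 1
    have key : (3*s-4)*(6*(3-2*s))^2 * ((1 - 4 * v) * (((3 + 2 * s) - 3) ^ 2 * v ^ 2 - 2 * (3 + 2 * s) * (3 + 2 * s + 3) * v + (3 + 2 * s) ^ 2)) = 9 * ((3 * s - 4) * (1 - 4 * v) * (((3 * s - 4) * (1 - 4 * v)) ^ 2 + 12 * ((3 * s - 4) * (1 - 4 * v)) + (18 - 12 * s))) := by
      linear_combination ((6084)*v^0*s^0 + (-4563)*v^0*s^1 + (-2304)*v^0*s^2 + (1728)*v^0*s^3 + (-48816)*v^1*s^0 + (43524)*v^1*s^1 + (8640)*v^1*s^2 + (-10368)*v^1*s^3 + (93312)*v^2*s^0 + (-90720)*v^2*s^1 + (-5184)*v^2*s^2 + (15552)*v^2*s^3 + (18432)*v^3*s^0 + (-41472)*v^3*s^1 + (29952)*v^3*s^2 + (-6912)*v^3*s^3) * hs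
    have h9 : (9 : ZMod p) ≠ 0 := by rw [show (9 : ZMod p) = 3 * 3 by norm_num]; exact mul_ne_zero h3 h3
    have hin : 9 * (((3 + 2 * s) / 3 - 1) ^ 2 * v ^ 2 - 2 * ((3 + 2 * s) / 3) * ((3 + 2 * s) / 3 + 1) * v + ((3 + 2 * s) / 3) ^ 2) = (((3 + 2 * s) - 3) ^ 2 * v ^ 2 - 2 * (3 + 2 * s) * (3 + 2 * s + 3) * v + (3 + 2 * s) ^ 2) := by
      field_simp; ring
    rw [← hin] at key
    apply mul_left_cancel₀ h9
    rw [hlam]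
    linear_combination key
  rw [hW]
  have : (lam ^ ((p - 1) / 2)) ^ 2 = 1 := by
    rw [← pow_mul, show (p - 1) / 2 * 2 = p - 1 by omega, ZMod.pow_card_sub_one_eq_one hl0]
  rw [mul_pow, this]; ring


lemma a_rec_int (n : ℕ) : ((n : ℤ) + 2) ^ 2 * (a (n + 2) : ℤ)
    - (10 * (n + 1) ^ 2 + 10 * (n + 1) + 3) * a (n + 1) + 9 * (n + 1) ^ 2 * a n = 0 := by
  have ext1 : (a (n + 1) : ℤ) = ∑ k ∈ range (n + 3), ((n + 1).choose k : ℤ) ^ 2 * ((2 * k).choose k : ℤ) := by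
    rw [a, Finset.sum_range_succ _ (n + 2)]
    rw [Nat.choose_eq_zero_of_lt (show n + 1 < n + 2 by omega)]
    push_cast; simp
  have ext0 : (a n : ℤ) = ∑ k ∈ range (n + 3), (n.choose k : ℤ) ^ 2 * ((2 * k).choose k : ℤ) := by
    rw [a, Finset.sum_range_succ _ (n + 2), Finset.sum_range_succ _ (n + 1)]
    rw [Nat.choose_eq_zero_of_lt (show n < n + 2 by omega), Nat.choose_eq_zero_of_lt (show n < n + 1 by omega)]
    push_cast; simp
  have ext2 : (a (n + 2) : ℤ) = ∑ k ∈ range (n + 3), ((n + 2).choose k : ℤ) ^ 2 * ((2 * k).choose k : ℤ) := by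
    rw [a]; push_cast; rfl
  let G : ℕ → ℤ := fun k => (k : ℤ) ^ 3 * (3 * k - 4 * (n + 2)) * (((n + 2).choose k : ℤ) ^ 2 * ((2 * k).choose k : ℤ))
  have key : ∀ k ∈ range (n + 3), ((n : ℤ) + 2) ^ 2 * (((n : ℤ) + 2) ^ 2 * (((n + 2).choose k : ℤ) ^ 2 * ((2 * k).choose k : ℤ))
    - (10 * (n + 1) ^ 2 + 10 * (n + 1) + 3) * (((n + 1).choose k : ℤ) ^ 2 * ((2 * k).choose k : ℤ))
    + 9 * (n + 1) ^ 2 * ((n.choose k : ℤ) ^ 2 * ((2 * k).choose k : ℤ))) = G (k + 1) - G k := by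
    intro k hk
    have hk' : k ≤ n + 2 := by have := mem_range.1 hk; omega
    have e1 : ((n + 1).choose k : ℤ) * (n + 2) = ((n + 2).choose k : ℤ) * (n + 2 - k) := by
      have := Nat.choose_mul_succ_eq (n + 1) k
      have h := congrArg (Nat.cast : ℕ → ℤ) this
      push_cast [Nat.cast_sub (show k ≤ n + 1 + 1 by omega)] at h
      linear_combination h
    have e2 : (n.choose k : ℤ) * (n + 1) = ((n + 1).choose k : ℤ) * (n + 1 - k) := by
      rcases Nat.lt_or_ge (n + 1) k with hle | hle
      · rw [Nat.choose_eq_zero_of_lt hle, Nat.choose_eq_zero_of_lt (show n < k by omega)]; simp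
      · have := Nat.choose_mul_succ_eq n k
        have h := congrArg (Nat.cast : ℕ → ℤ) this
        push_cast [Nat.cast_sub hle] at h
        linear_combination h
    have e3 : ((n + 2).choose (k + 1) : ℤ) * (k + 1) = ((n + 2).choose k : ℤ) * (n + 2 - k) := by
      have := Nat.choose_succ_right_eq (n + 2) k
      have h := congrArg (Nat.cast : ℕ → ℤ) this
      push_cast [Nat.cast_sub hk'] at h
      linear_combination h
    have e4 : ((k : ℤ) + 1) * ((2 * (k + 1)).choose (k + 1) : ℤ) = 2 * (2 * k + 1) * ((2 * k).choose k : ℤ) := by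
      have := Nat.succ_mul_centralBinom_succ k
      rw [Nat.centralBinom, Nat.centralBinom] at this
      exact_mod_cast this
    simp only [G]
    push_cast
    set b := ((n + 2).choose k : ℤ)
    set b1 := ((n + 1).choose k : ℤ)
    set b2 := (n.choose k : ℤ)
    set d := ((n + 2).choose (k + 1) : ℤ)
    set e := ((2 * k).choose k : ℤ)
    set e' := ((2 * (k + 1)).choose (k + 1) : ℤ)
    set N := (n : ℤ)
    set κ := (k : ℤ)
    have f1 : b1 ^ 2 * (N + 2) ^ 2 = b ^ 2 * (N + 2 - κ) ^ 2 := by rw [← mul_pow, e1, mul_pow]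
    have f2 : b2 ^ 2 * (N + 1) ^ 2 = b1 ^ 2 * (N + 1 - κ) ^ 2 := by rw [← mul_pow, e2, mul_pow]
    have f3 : d ^ 2 * (κ + 1) ^ 2 = b ^ 2 * (N + 2 - κ) ^ 2 := by rw [← mul_pow, e3, mul_pow]
    have f4 : (κ + 1) ^ 3 * (d ^ 2 * e') = b ^ 2 * (N + 2 - κ) ^ 2 * (2 * (2 * κ + 1) * e) := by
      rw [← f3, ← e4]; ring
    linear_combination (-(10 * (N + 1) ^ 2 + 10 * (N + 1) + 3) * e + 9 * (N + 1 - κ) ^ 2 * e) * f1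
      + (9 * (N + 2) ^ 2 * e) * f2 - (3 * (κ + 1) - 4 * (N + 2)) * f4
  have hsum := Finset.sum_congr rfl key
  rw [Finset.sum_range_sub] at hsum
  have hG0 : G 0 = 0 := by simp [G]
  have hG1 : G (n + 3) = 0 := by
    simp only [G]
    rw [Nat.choose_eq_zero_of_lt (show n + 2 < n + 3 by omega)]; simp
  rw [hG0, hG1, sub_zero, ← Finset.mul_sum, Finset.sum_add_distrib, Finset.sum_sub_distrib,
    ← Finset.mul_sum, ← Finset.mul_sum, ← Finset.mul_sum, ← ext0, ← ext1, ← ext2] at hsum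
  exact (mul_eq_zero.1 hsum).resolve_left (by positivity)

lemma a_zero : a 0 = 1 := by decide
lemma a_one : a 1 = 3 := by decide

section
variable (p : ℕ) [hpf : Fact p.Prime]

noncomputable def ah (k : ℕ) : ZMod p := (a k : ZMod p) / 3 ^ k

def gg (k : ℕ) : ZMod p := ((2 * k).choose k : ZMod p) * (a k : ZMod p)

lemma a_rec (n : ℕ) : ((n : ZMod p) + 2) ^ 2 * (a (n + 2) : ZMod p)
    - (10 * (n + 1) ^ 2 + 10 * (n + 1) + 3) * a (n + 1) + 9 * (n + 1) ^ 2 * a n = 0 := by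
  have := congrArg (Int.cast : ℤ → ZMod p) (a_rec_int n)
  push_cast at this
  exact this

lemma ah_rec (hp : 3 < p) (n : ℕ) : 3 * ((n : ZMod p) + 2) ^ 2 * ah p (n + 2)
    = (10 * (n + 1) ^ 2 + 10 * (n + 1) + 3) * ah p (n + 1) - 3 * (n + 1) ^ 2 * ah p n := by
  obtain ⟨h2, h3⟩ := two_three_ne p hp
  have := a_rec p n
  have hk : ∀ k, ah p k * 3 ^ k = (a k : ZMod p) := by
    intro k; unfold ah; rw [div_mul_cancel₀ _ (pow_ne_zero _ h3)]
  rw [← hk (n + 2), ← hk (n + 1), ← hk n] at this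
  apply mul_left_cancel₀ (pow_ne_zero (n + 1) h3)
  rw [pow_succ] at this ⊢
  rw [pow_succ] at this
  linear_combination this

lemma ah_zero : ah p 0 = 1 := by simp [ah, a_zero]
lemma ah_one (hp : 3 < p) : ah p 1 = 1 := by
  obtain ⟨h2, h3⟩ := two_three_ne p hp
  simp [ah, a_one, h3]

lemma gg_rec (n : ℕ) : ((n : ZMod p) + 2) ^ 3 * gg p (n + 2)
    = 2 * (2 * n + 3) * (10 * (n + 1) ^ 2 + 10 * (n + 1) + 3) * gg p (n + 1)
      - 36 * (n + 1) * (2 * n + 1) * (2 * n + 3) * gg p n := by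
  have h := a_rec p n
  have e4 : ∀ k : ℕ, ((k : ZMod p) + 1) * ((2 * (k + 1)).choose (k + 1) : ZMod p) = 2 * (2 * k + 1) * ((2 * k).choose k : ZMod p) := by
    intro k
    have := Nat.succ_mul_centralBinom_succ k
    rw [Nat.centralBinom, Nat.centralBinom] at this
    have h := congrArg (Nat.cast : ℕ → ZMod p) this
    push_cast at h
    exact h
  have h1 := e4 n
  have h2 := e4 (n + 1)
  push_cast at h2
  unfold gg
  rw [show n + 1 + 1 = n + 2 by omega] at h2
  linear_combination (2 * (2 * (n:ZMod p) + 3) * ((2 * (n + 1)).choose (n + 1) : ZMod p)) * h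
    + ((n + 2) ^ 2 * (a (n + 2) : ZMod p)) * h2 - (18 * (n + 1) * (2 * n + 3) * (a n : ZMod p)) * h1

end

section LL
open Polynomial
variable {K : Type*} [Field K]

noncomputable def PP : K[X] := 3 * X - 10 * X ^ 2 + 3 * X ^ 3
noncomputable def QQ : K[X] := 3 * (1 - X) * PP
noncomputable def RR : K[X] := 1 - X ^ 2
noncomputable def dl (f : K[X]) : K[X] := PP * derivative f
noncomputable def LL (f : K[X]) : K[X] := dl (dl (dl f)) - 4 * QQ * dl f - 2 * dl QQ * f

lemma dl_add (f g : K[X]) : dl (f + g) = dl f + dl g := by simp [dl]; ring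
lemma dl_sub (f g : K[X]) : dl (f - g) = dl f - dl g := by simp [dl]; ring
lemma dl_mul (f g : K[X]) : dl (f * g) = dl f * g + f * dl g := by simp [dl]; ring
lemma dl_C_mul (c : K) (g : K[X]) : dl (C c * g) = C c * dl g := by simp [dl]; ring
lemma dl_sum {ι : Type*} (t : Finset ι) (f : ι → K[X]) : dl (∑ i ∈ t, f i) = ∑ i ∈ t, dl (f i) := by
  simp [dl, derivative_sum, Finset.mul_sum]
lemma LL_sub (f g : K[X]) : LL (f - g) = LL f - LL g := by simp [LL, dl_sub]; ring
lemma LL_sum_C {ι : Type*} (t : Finset ι) (c : ι → K) (f : ι → K[X]) :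
    LL (∑ i ∈ t, C (c i) * f i) = ∑ i ∈ t, C (c i) * LL (f i) := by
  simp only [LL, dl_sum, dl_C_mul, Finset.mul_sum]
  rw [← Finset.sum_sub_distrib, ← Finset.sum_sub_distrib]
  apply Finset.sum_congr rfl
  intro i _; ring

lemma LL_sq (A : K[X]) (h : dl (dl A) = QQ * A) : LL (A ^ 2) = 0 := by
  have h1 : dl (A ^ 2) = 2 * (A * dl A) := by rw [pow_two, dl_mul]; ring
  have d2 : ∀ f : K[X], dl (2 * f) = 2 * dl f := fun f => dl_C_mul 2 f
  have h2 : dl (A * dl A) = dl A * dl A + A * (QQ * A) := by rw [dl_mul, h]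
  have h3 : dl (dl A * dl A) = 2 * (QQ * A) * dl A := by rw [dl_mul, h]; ring
  have h4 : dl (A * (QQ * A)) = dl A * (QQ * A) + A * (dl QQ * A + QQ * dl A) := by
    rw [dl_mul, dl_mul]
  unfold LL
  rw [h1, d2, h2, d2, dl_add, h3, h4]
  ring

lemma RR_ne : (RR : K[X]) ≠ 0 := by
  intro h
  have := congrArg (coeff · 0) h
  simp [RR] at this

lemma LL_uniq_step (h3 : (3 : K) ≠ 0) (m : ℕ) (hm : (m : K) ≠ 0) (Z : K[X]) (hZ : LL Z = 0) (hd : X ^ m ∣ Z) :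
    X ^ (m + 1) ∣ Z := by
  obtain ⟨V, rfl⟩ := hd
  have hm0 : 1 ≤ m := by
    rcases Nat.eq_zero_or_pos m with h | h
    · exfalso; apply hm; simp [h]
    · exact h
  have hx : ∀ V : K[X], dl (X ^ m * V) = X ^ m * ((3 - 10 * X + 3 * X ^ 2) * ((m : K[X]) * V + X * derivative V)) := by
    intro V
    unfold dl PP
    rw [derivative_mul, derivative_X_pow]
    obtain ⟨k, rfl⟩ : ∃ k, m = k + 1 := ⟨m - 1, by omega⟩
    simp; ring
  unfold LL at hZ
  rw [hx, hx, hx] at hZ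
  set V1 := (3 - 10 * X + 3 * X ^ 2) * ((m : K[X]) * V + X * derivative V) with hV1
  set V2 := (3 - 10 * X + 3 * X ^ 2) * ((m : K[X]) * V1 + X * derivative V1) with hV2
  set V3 := (3 - 10 * X + 3 * X ^ 2) * ((m : K[X]) * V2 + X * derivative V2) with hV3
  have h0 : X ^ m * (V3 - 4 * QQ * V1 - 2 * dl QQ * V) = 0 := by rw [← hZ]; ring
  have h1 := (mul_eq_zero.1 h0).resolve_left (pow_ne_zero _ X_ne_zero)
  have h2 := congrArg (eval 0) h1
  have e1 : eval 0 V1 = 3 * m * eval 0 V := by simp [hV1]; ring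
  have e2 : eval 0 V2 = 3 * m * (3 * m * eval 0 V) := by simp [hV2, e1]; ring
  have e3 : eval 0 V3 = 3 * m * (3 * m * (3 * m * eval 0 V)) := by simp [hV3, e2]; ring
  have eP : eval 0 (PP : K[X]) = 0 := by simp [PP]
  have eQ : eval 0 (QQ : K[X]) = 0 := by simp [QQ, eP]
  have edQ : eval 0 (dl QQ : K[X]) = 0 := by simp [dl, eP]
  simp only [eval_sub, eval_mul, e3, eQ, edQ, mul_zero, zero_mul, sub_zero, eval_zero] at h2
  have h3m : (3 * m : K) ≠ 0 := mul_ne_zero h3 hm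
  have hV0 : eval 0 V = 0 := by
    rcases mul_eq_zero.1 h2 with h | h
    · exact absurd h h3m
    rcases mul_eq_zero.1 h with h | h
    · exact absurd h h3m
    exact (mul_eq_zero.1 h).resolve_left h3m
  rw [pow_succ]
  apply mul_dvd_mul_left
  rwa [X_dvd_iff, coeff_zero_eq_eval_zero]

/-- general step -/
lemma rdl (r l u : K[X]) (h : r * dl u = l * u) :
    r ^ 2 * dl (dl u) = (r * dl l + l ^ 2 - l * dl r) * u ∧
    r ^ 3 * dl (dl (dl u)) = (r * dl (r * dl l + l ^ 2 - l * dl r) + (r * dl l + l ^ 2 - l * dl r) * l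
      - 2 * dl r * (r * dl l + l ^ 2 - l * dl r)) * u := by
  have h1 := congrArg dl h
  rw [dl_mul, dl_mul] at h1
  have e2 : r ^ 2 * dl (dl u) = (r * dl l + l ^ 2 - l * dl r) * u := by
    linear_combination r * h1 + (l - dl r) * h
  refine ⟨e2, ?_⟩
  set M := r * dl l + l ^ 2 - l * dl r with hM
  have h2 := congrArg dl e2
  rw [dl_mul, dl_mul] at h2
  have h3 : dl (r ^ 2) = 2 * r * dl r := by rw [pow_two, dl_mul]; ring
  rw [h3] at h2
  linear_combination r * h2 + M * h - 2 * dl r * e2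

noncomputable def lel (n : K[X]) : K[X] := n * (3 - 20 * X + 9 * X ^ 2) * RR + (2 * n + 1) * PP * (2 * X)

noncomputable def EE : K[X] := (3 - 20 * X + 9 * X ^ 2) * RR + 4 * X * PP

lemma W_id (N : K[X]) (hN : derivative N = 0) :
    (RR * dl (RR * dl (lel N) + lel N ^ 2 - lel N * dl RR)
      + (RR * dl (lel N) + lel N ^ 2 - lel N * dl RR) * lel N
      - 2 * dl RR * (RR * dl (lel N) + lel N ^ 2 - lel N * dl RR))
      - 4 * QQ * RR ^ 2 * lel N - 2 * dl QQ * RR ^ 3 =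
    EE * (9 * N ^ 3 * RR ^ 4 - 2 * (2 * N + 1) * (10 * N ^ 2 + 10 * N + 3) * PP * RR ^ 2
      + 4 * (N + 1) * (2 * N + 1) * (2 * N + 3) * PP ^ 2) := by
  have dn : ∀ m : ℕ, derivative (OfNat.ofNat (m+2) : K[X]) = 0 := fun m => by
    exact derivative_natCast (n := m+2)
  have c2 : (C 2 : K[X]) = 2 := rfl
  have c3 : (C 3 : K[X]) = 3 := rfl
  have hP : derivative (PP : K[X]) = 3 - 20 * X + 9 * X ^ 2 := by simp [PP, dn, c2, c3]; ring
  have hR : derivative (RR : K[X]) = -2 * X := by simp [RR, dn]; ring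
  have hQ : derivative (QQ : K[X]) = 3 * (1 - X) * (3 - 20 * X + 9 * X ^ 2) - 3 * PP := by simp [QQ, dn, hP, c2]; ring
  have hl : derivative (lel N) = N * (-20 + 18 * X) * RR + N * (3 - 20 * X + 9 * X ^ 2) * (-2 * X)
     + (2 * N + 1) * ((3 - 20 * X + 9 * X ^ 2) * (2 * X) + PP * 2) := by
    simp [lel, hN, dn, hP, hR, c2]; ring
  have hl2 : derivative (derivative (lel N)) = N * 18 * RR + N * (-20 + 18 * X) * (-4 * X)
     + N * (3 - 20 * X + 9 * X ^ 2) * (-2)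
     + (2 * N + 1) * ((-20 + 18 * X) * (2 * X) + (3 - 20 * X + 9 * X ^ 2) * 4) := by
    rw [hl]; simp [hN, dn, hP, hR, c2]; ring
  have hR2 : derivative (derivative (RR : K[X])) = -2 := by rw [hR]; simp [dn]
  have hM : derivative (RR * dl (lel N) + lel N ^ 2 - lel N * dl RR) =
     derivative (RR : K[X]) * PP * derivative (lel N) + RR * derivative (PP : K[X]) * derivative (lel N)
      + RR * PP * derivative (derivative (lel N)) + 2 * lel N * derivative (lel N)
      - derivative (lel N) * PP * derivative (RR : K[X]) - lel N * derivative (PP : K[X]) * derivative (RR : K[X])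
      - lel N * PP * derivative (derivative (RR : K[X])) := by
    simp only [dl, derivative_add, derivative_sub, derivative_mul, pow_two]; ring
  rw [show dl (RR * dl (lel N) + lel N ^ 2 - lel N * dl RR) = PP * derivative (RR * dl (lel N) + lel N ^ 2 - lel N * dl RR) from rfl, hM, hl2, hR2]
  simp only [dl]
  rw [hP, hQ, hR, hl]
  unfold lel QQ EE RR PP
  ring

end LL


section A2
open Polynomial
variable (p : ℕ) [hpf : Fact p.Prime]

lemma dl_X_pow {K : Type*} [Field K] (k : ℕ) : dl (X ^ k : K[X]) = (3 - 10 * X + 3 * X ^ 2) * ((k : K[X]) * X ^ k) := by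
  unfold dl PP
  rw [derivative_X_pow]
  rcases k with _ | k
  · simp
  · simp; ring

lemma dl2_X_pow {K : Type*} [Field K] (k : ℕ) : dl (dl (X ^ k : K[X])) - QQ * X ^ k = (3 - 10 * X + 3 * X ^ 2) *
    (3 * (k : K[X]) ^ 2 * X ^ k - (10 * (k : K[X]) ^ 2 + 10 * (k : K[X]) + 3) * X ^ (k + 1) + 3 * ((k : K[X]) + 1) ^ 2 * X ^ (k + 2)) := by
  have dn : ∀ m : ℕ, derivative (OfNat.ofNat (m+2) : K[X]) = 0 := fun m => by
    exact derivative_natCast (n := m+2)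
  have c2 : (C 2 : K[X]) = 2 := rfl
  have hq : dl (3 - 10 * X + 3 * X ^ 2 : K[X]) = PP * (-10 + 6 * X) := by
    simp [dl, dn, c2]; left; ring
  have hk : dl (k : K[X]) = 0 := by simp [dl]
  rw [dl_X_pow, dl_mul, dl_mul, dl_X_pow, hq, hk]
  unfold QQ PP
  ring

noncomputable def AA : (ZMod p)[X] := ∑ k ∈ range p, C (ah p k) * X ^ k

lemma AA_tel (hp : 3 < p) (n : ℕ) : ∑ k ∈ range (n + 1), C (ah p k) * 
    (3 * (k : (ZMod p)[X]) ^ 2 * X ^ k - (10 * (k : (ZMod p)[X]) ^ 2 + 10 * (k : (ZMod p)[X]) + 3) * X ^ (k + 1) + 3 * ((k : (ZMod p)[X]) + 1) ^ 2 * X ^ (k + 2))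
    = - 3 * ((n : (ZMod p)[X]) + 1) ^ 2 * C (ah p (n + 1)) * X ^ (n + 1) + 3 * ((n : (ZMod p)[X]) + 1) ^ 2 * C (ah p n) * X ^ (n + 2) := by
  induction n with
  | zero => simp [ah_zero, ah_one p hp]; try ring
  | succ n ih =>
    rw [Finset.sum_range_succ, ih]
    have h := congrArg (C : ZMod p → (ZMod p)[X]) (ah_rec p hp n)
    have cn : ∀ m : ℕ, C (OfNat.ofNat (m+2) : ZMod p) = (OfNat.ofNat (m+2) : (ZMod p)[X]) := fun m => map_natCast C (m+2)
    simp only [map_mul, map_add, map_sub, map_pow, cn, map_natCast, map_one] at h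
    push_cast
    linear_combination (X ^ (n+2)) * h

lemma AA_ode (hp : 3 < p) : dl (dl (AA p)) = QQ * AA p := by
  rw [← sub_eq_zero]
  unfold AA
  rw [dl_sum, dl_sum, Finset.mul_sum, ← Finset.sum_sub_distrib]
  have : ∀ k ∈ range p, dl (dl (C (ah p k) * X ^ k)) - QQ * (C (ah p k) * X ^ k) = (3 - 10 * X + 3 * X ^ 2) * (C (ah p k) * 
    (3 * (k : (ZMod p)[X]) ^ 2 * X ^ k - (10 * (k : (ZMod p)[X]) ^ 2 + 10 * (k : (ZMod p)[X]) + 3) * X ^ (k + 1) + 3 * ((k : (ZMod p)[X]) + 1) ^ 2 * X ^ (k + 2))) := by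
    intro k _
    rw [dl_C_mul, dl_C_mul]
    linear_combination C (ah p k) * (dl2_X_pow k : dl (dl (X ^ k : (ZMod p)[X])) - QQ * X ^ k = _)
  rw [Finset.sum_congr rfl this, ← Finset.mul_sum]
  obtain ⟨m, hm⟩ : ∃ m, p = m + 1 := ⟨p - 1, by omega⟩
  have h0 : ((m : (ZMod p)[X]) + 1) = 0 := by
    have : ((p : ℕ) : (ZMod p)[X]) = 0 := by simp
    have hm' := congrArg (Nat.cast : ℕ → (ZMod p)[X]) hm
    push_cast at hm'
    rw [← hm', this]
  rw [show range p = range (m + 1) by rw [← hm], AA_tel p hp m, h0]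
  simp

lemma gg_tel (J : ℕ → (ZMod p)[X]) (n : ℕ) : ∑ k ∈ range (n + 1), C (gg p k) *
    ((k : (ZMod p)[X]) ^ 3 * J k - 2 * (2 * (k : (ZMod p)[X]) + 1) * (10 * (k : (ZMod p)[X]) ^ 2 + 10 * (k : (ZMod p)[X]) + 3) * J (k + 1)
      + 36 * ((k : (ZMod p)[X]) + 1) * (2 * (k : (ZMod p)[X]) + 1) * (2 * (k : (ZMod p)[X]) + 3) * J (k + 2))
    = - ((n : (ZMod p)[X]) + 1) ^ 3 * C (gg p (n + 1)) * J (n + 1)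
      + 36 * ((n : (ZMod p)[X]) + 1) * (2 * (n : (ZMod p)[X]) + 1) * (2 * (n : (ZMod p)[X]) + 3) * C (gg p n) * J (n + 2) := by
  have cn : ∀ m : ℕ, C (OfNat.ofNat (m+2) : ZMod p) = (OfNat.ofNat (m+2) : (ZMod p)[X]) := fun m => map_natCast C (m+2)
  induction n with
  | zero =>
    have h0 : gg p 0 = 1 := by simp [gg, a_zero]
    have h1 : gg p 1 = 6 := by simp [gg, a_one]; norm_num
    rw [Finset.sum_range_one, h0, h1, cn 4, C_1]; push_cast; ring
  | succ n ih =>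
    rw [Finset.sum_range_succ, ih]
    have h := congrArg (C : ZMod p → (ZMod p)[X]) (gg_rec p n)
    simp only [map_mul, map_add, map_sub, map_pow, cn, map_natCast, map_one] at h
    push_cast
    linear_combination (J (n+2)) * h

lemma rdl_mul {K : Type*} [Field K] (r l l' u v : K[X]) (h : r * dl u = l * u) (h' : r * dl v = l' * v) :
    r * dl (u * v) = (l + l') * (u * v) := by
  rw [dl_mul]; linear_combination v * h + u * h'

lemma rdl_pow {K : Type*} [Field K] (r l u : K[X]) (h : r * dl u = l * u) (n : ℕ) :
    r * dl (u ^ n) = (n * l) * u ^ n := by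
  induction n with
  | zero => simp [dl]
  | succ n ih => rw [pow_succ, rdl_mul r _ _ _ _ ih h]; push_cast; ring

noncomputable def HH (n : ℕ) : (ZMod p)[X] := (C (1 / 9) * PP) ^ n * RR ^ (p - 1 - 2 * n)

lemma HH_LL (hp : 3 < p) (n : ℕ) (hn : 2 * n + 1 ≤ p) : RR ^ 3 * LL (HH p n) = 9 * EE *
    ((n : (ZMod p)[X]) ^ 3 * ((C (1 / 9) * PP) ^ n * RR ^ (p + 3 - 2 * n))
      - 2 * (2 * (n : (ZMod p)[X]) + 1) * (10 * (n : (ZMod p)[X]) ^ 2 + 10 * (n : (ZMod p)[X]) + 3) * ((C (1 / 9) * PP) ^ (n+1) * RR ^ (p + 3 - 2 * (n+1)))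
      + 36 * ((n : (ZMod p)[X]) + 1) * (2 * (n : (ZMod p)[X]) + 1) * (2 * (n : (ZMod p)[X]) + 3) * ((C (1 / 9) * PP) ^ (n+2) * RR ^ (p + 3 - 2 * (n+2)))) := by
  obtain ⟨h2, h3⟩ := two_three_ne p hp
  have dn : ∀ m : ℕ, derivative (OfNat.ofNat (m+2) : (ZMod p)[X]) = 0 := fun m => by
    exact derivative_natCast (n := m+2)
  have c2 : (C 2 : (ZMod p)[X]) = 2 := rfl
  have hP : derivative (PP : (ZMod p)[X]) = 3 - 20 * X + 9 * X ^ 2 := by simp [PP, dn, c2]; ring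
  have hR : derivative (RR : (ZMod p)[X]) = -2 * X := by simp [RR]; ring
  have hu : RR * dl (C (1 / 9) * PP : (ZMod p)[X]) = ((3 - 20 * X + 9 * X ^ 2) * RR) * (C (1 / 9) * PP) := by
    rw [dl_C_mul, dl, hP]; ring
  have hr : RR * dl (RR : (ZMod p)[X]) = (PP * (-2 * X)) * RR := by
    rw [dl, hR]; ring
  have hl : RR * dl (HH p n) = lel (n : (ZMod p)[X]) * HH p n := by
    unfold HH
    rw [rdl_mul _ _ _ _ _ (rdl_pow _ _ _ hu n) (rdl_pow _ _ _ hr (p - 1 - 2 * n))]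
    have hc : ((p - 1 - 2 * n : ℕ) : (ZMod p)[X]) = - (2 * (n : (ZMod p)[X]) + 1) := by
      have h0 : ((p : ℕ) : (ZMod p)[X]) = 0 := by simp
      have h1 : (p - 1 - 2 * n : ℕ) + (2 * n + 1) = p := by omega
      have := congrArg (Nat.cast : ℕ → (ZMod p)[X]) h1
      rw [h0] at this
      push_cast at this
      linear_combination this
    rw [hc]; unfold lel; ring
  obtain ⟨e2, e3⟩ := rdl _ _ _ hl
  have hW := W_id (n : (ZMod p)[X]) (by simp)
  have h1 : RR ^ 3 * LL (HH p n) = EE * (9 * (n : (ZMod p)[X]) ^ 3 * RR ^ 4 - 2 * (2 * (n : (ZMod p)[X]) + 1) * (10 * (n : (ZMod p)[X]) ^ 2 + 10 * (n : (ZMod p)[X]) + 3) * PP * RR ^ 2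
      + 4 * ((n : (ZMod p)[X]) + 1) * (2 * (n : (ZMod p)[X]) + 1) * (2 * (n : (ZMod p)[X]) + 3) * PP ^ 2) * HH p n := by
    rw [← hW]; unfold LL
    linear_combination e3 - 4 * QQ * RR ^ 2 * hl
  rw [h1]
  have h9 : (9 : ZMod p) ≠ 0 := by rw [show (9 : ZMod p) = 3 * 3 by norm_num]; exact mul_ne_zero h3 h3
  have hP9 : (PP : (ZMod p)[X]) = 9 * (C (1/9) * PP) := by
    have : (9 : (ZMod p)[X]) * C (1/9) = 1 := by
      rw [show (9 : (ZMod p)[X]) = C 9 from rfl, ← C_mul, mul_one_div_cancel h9, C_1]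
    linear_combination (-PP) * this
  generalize hU : (C (1/9) * PP : (ZMod p)[X]) = U at *
  unfold HH
  rw [hU, hP9, show p + 3 - 2 * (n + 1) = (p - 1 - 2 * n) + 2 by omega, show p + 3 - 2 * (n + 2) = (p - 1 - 2 * n) by omega,
    show p + 3 - 2 * n = (p - 1 - 2 * n) + 4 by omega]
  ring

noncomputable def HS : (ZMod p)[X] := ∑ n ∈ range ((p + 1) / 2), C (gg p n) * HH p n

lemma HS_LL (hp : 3 < p) : LL (HS p) = 0 := by
  have hodd : p % 2 = 1 := (hpf.out.eq_two_or_odd).resolve_left (by omega)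
  have h : RR ^ 3 * LL (HS p) = 0 := by
    unfold HS
    rw [LL_sum_C, Finset.mul_sum]
    obtain ⟨m, hm⟩ : ∃ m, p = 2 * m + 1 := ⟨p / 2, by omega⟩
    have e1 : (p + 1) / 2 = m + 1 := by omega
    rw [e1]
    have : ∀ n ∈ range (m + 1), RR ^ 3 * (C (gg p n) * LL (HH p n)) = 9 * EE * (C (gg p n) * 
      ((n : (ZMod p)[X]) ^ 3 * ((C (1 / 9) * PP) ^ n * RR ^ (p + 3 - 2 * n))
      - 2 * (2 * (n : (ZMod p)[X]) + 1) * (10 * (n : (ZMod p)[X]) ^ 2 + 10 * (n : (ZMod p)[X]) + 3) * ((C (1 / 9) * PP) ^ (n+1) * RR ^ (p + 3 - 2 * (n+1)))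
      + 36 * ((n : (ZMod p)[X]) + 1) * (2 * (n : (ZMod p)[X]) + 1) * (2 * (n : (ZMod p)[X]) + 3) * ((C (1 / 9) * PP) ^ (n+2) * RR ^ (p + 3 - 2 * (n+2))))) := by
      intro n hn
      have := mem_range.1 hn
      linear_combination C (gg p n) * HH_LL p hp n (by omega)
    rw [Finset.sum_congr rfl this, ← Finset.mul_sum, gg_tel p (fun k => (C (1 / 9) * PP) ^ k * RR ^ (p + 3 - 2 * k)) m]
    have h0 : (2 * (m : (ZMod p)[X]) + 1) = 0 := by
      have : ((p : ℕ) : (ZMod p)[X]) = 0 := by simp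
      have hm' := congrArg (Nat.cast : ℕ → (ZMod p)[X]) hm
      push_cast at hm'
      rw [← hm', this]
    have h1 : gg p (m + 1) = 0 := by
      unfold gg; rw [central_zero p (m + 1) (by omega) (by omega), zero_mul]
    rw [h0, h1]; simp
  exact (mul_eq_zero.1 h).resolve_left (pow_ne_zero _ RR_ne)

lemma ah_sym (hp : 3 < p) (k : ℕ) (hk : k + 1 < p) : ah p (p - 1 - k) = ah p (p - 1) * ah p k ∧
    ah p (p - 1 - (k + 1)) = ah p (p - 1) * ah p (k + 1) := by
  obtain ⟨h2, h3⟩ := two_three_ne p hp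
  have hp0 : (p : ZMod p) = 0 := by simp
  induction k with
  | zero =>
    refine ⟨by simp [ah_zero], ?_⟩
    rw [ah_one p hp]
    have h := ah_rec p hp (p - 2)
    have hc : ((p - 2 : ℕ) : ZMod p) = -2 := by push_cast [Nat.cast_sub (show 2 ≤ p by omega)]; rw [hp0]; ring
    rw [hc, show p - 2 + 1 = p - 1 by omega] at h
    rw [show p - 1 - (0 + 1) = p - 2 by omega]
    apply mul_left_cancel₀ h3
    linear_combination h
  | succ k ih =>
    obtain ⟨i1, i2⟩ := ih (by omega)
    refine ⟨i2, ?_⟩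
    have h := ah_rec p hp (p - 1 - (k + 1 + 1))
    have hc : ((p - 1 - (k + 1 + 1) : ℕ) : ZMod p) = -(k + 3) := by
      rw [Nat.sub_sub, Nat.cast_sub (by omega), hp0]; push_cast; ring
    rw [hc, show p - 1 - (k + 1 + 1) + 1 = p - 1 - (k + 1) by omega, show p - 1 - (k + 1 + 1) + 2 = p - 1 - k by omega, i1, i2] at h
    have h' := ah_rec p hp k
    have hk2 : ((k : ZMod p) + 2) ≠ 0 := by
      have := natCast_ne_zero_of_small p (k + 2) (by omega) (by omega)
      push_cast at this; exact this
    apply mul_left_cancel₀ (mul_ne_zero h3 (pow_ne_zero 2 hk2))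
    linear_combination h - ah p (p - 1) * h'

end A2


section A3
open Polynomial
variable (p : ℕ) [hpf : Fact p.Prime]

lemma ah_sym' (hp : 3 < p) (k : ℕ) (hk : k < p) : ah p (p - 1 - k) = ah p (p - 1) * ah p k := by
  rcases Nat.eq_zero_or_pos k with h | h
  · subst h; simp [ah_zero]
  · have := (ah_sym p hp (k - 1) (by omega)).2
    rwa [show k - 1 + 1 = k by omega] at this

lemma ah_last (hp : 3 < p) : ah p (p - 1) ^ 2 = 1 := by
  have := ah_sym' p hp (p - 1) (by omega)
  rw [Nat.sub_self, ah_zero] at this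
  rw [pow_two, ← this]

lemma AA_coeff (i : ℕ) : (AA p).coeff i = if i < p then ah p i else 0 := by
  unfold AA
  simp only [finsetSum_coeff, coeff_C_mul, coeff_X_pow]
  split_ifs with h
  · rw [Finset.sum_eq_single i]
    · simp
    · intro b _ hb; simp [Ne.symm hb]
    · intro h'; exact absurd (mem_range.2 h) h'
  · apply Finset.sum_eq_zero
    intro b hb
    have := mem_range.1 hb
    simp [show i ≠ b by omega]

lemma AA_deg (hp : 3 < p) : (AA p).natDegree ≤ p - 1 := by
  rw [natDegree_le_iff_coeff_eq_zero]
  intro N hN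
  rw [AA_coeff, if_neg (by omega)]

lemma AA_reflect (hp : 3 < p) : reflect (p - 1) (AA p) = C (ah p (p - 1)) * AA p := by
  ext i
  rw [coeff_reflect, coeff_C_mul, AA_coeff, AA_coeff]
  by_cases h : i ≤ p - 1
  · rw [revAt_le h, if_pos (by omega), if_pos (by omega), ah_sym' p hp i (by omega)]
  · rw [revAt_eq_self_of_lt (by omega), if_neg (by omega), mul_zero]

lemma reflect_pow_self {K : Type*} [Field K] (f : K[X]) (e : K[X]) (N : ℕ) (hd : f.natDegree ≤ N) (h : reflect N f = e) (n : ℕ) :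
    (f ^ n).natDegree ≤ N * n ∧ reflect (N * n) (f ^ n) = e ^ n := by
  induction n with
  | zero => simp
  | succ n ih =>
    constructor
    · rw [pow_succ, mul_add, mul_one]; exact natDegree_mul_le_of_le ih.1 hd
    · rw [pow_succ, mul_add, mul_one, reflect_mul _ _ ih.1 hd, ih.2, h, pow_succ]

lemma HH_reflect (hp : 3 < p) (n : ℕ) (hn : 2 * n + 1 ≤ p) : (HH p n).natDegree ≤ 2 * p - 2 ∧ reflect (2 * p - 2) (HH p n) = HH p n := by
  have hodd : p % 2 = 1 := (hpf.out.eq_two_or_odd).resolve_left (by omega)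
  have cn : ∀ m : ℕ, (OfNat.ofNat (m+2) : (ZMod p)[X]) = C (OfNat.ofNat (m+2) : ZMod p) := fun m => (map_natCast C (m+2)).symm
  have dP : (C (1/9) * PP : (ZMod p)[X]).natDegree ≤ 4 := by
    refine (natDegree_C_mul_le _ _).trans ?_
    unfold PP; compute_degree!
  have dR : (RR : (ZMod p)[X]).natDegree ≤ 2 := by unfold RR; compute_degree!
  have rP : reflect 4 (C (1/9) * PP : (ZMod p)[X]) = C (1/9) * PP := by
    rw [reflect_C_mul]
    congr 1
    unfold PP
    rw [cn 1, cn 8, reflect_add, reflect_sub]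
    rw [reflect_C_mul_X_pow, reflect_C_mul_X_pow]
    nth_rewrite 1 [← pow_one X]
    rw [reflect_C_mul_X_pow]
    rw [revAt_le (by norm_num), revAt_le (by norm_num), revAt_le (by norm_num)]
    norm_num; ring
  have rR : reflect 2 (RR : (ZMod p)[X]) = - RR := by
    unfold RR
    rw [reflect_sub, reflect_one, reflect_monomial, revAt_le (by norm_num)]
    norm_num
  obtain ⟨a1, a2⟩ := reflect_pow_self _ _ 4 dP rP n
  obtain ⟨b1, b2⟩ := reflect_pow_self _ _ 2 dR rR (p - 1 - 2 * n)
  have e : 2 * p - 2 = 4 * n + 2 * (p - 1 - 2 * n) := by omega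
  unfold HH
  constructor
  · rw [e]; exact natDegree_mul_le_of_le a1 b1
  · rw [e, reflect_mul _ _ a1 b1, a2, b2, Even.neg_pow]
    rw [Nat.even_iff]; omega

lemma HS_reflect (hp : 3 < p) : (HS p).natDegree ≤ 2 * p - 2 ∧ reflect (2 * p - 2) (HS p) = HS p := by
  have hodd : p % 2 = 1 := (hpf.out.eq_two_or_odd).resolve_left (by omega)
  unfold HS
  constructor
  · apply natDegree_sum_le_of_forall_le
    intro i hi
    have := mem_range.1 hi
    exact (natDegree_C_mul_le _ _).trans (HH_reflect p hp i (by omega)).1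
  · ext i
    rw [coeff_reflect]
    simp only [finsetSum_coeff, coeff_C_mul]
    apply Finset.sum_congr rfl
    intro n hn
    have := mem_range.1 hn
    rw [← coeff_reflect, (HH_reflect p hp n (by omega)).2]

lemma AA_sq_eq (hp : 3 < p) : AA p ^ 2 = HS p := by
  obtain ⟨h2, h3⟩ := two_three_ne p hp
  have hodd : p % 2 = 1 := (hpf.out.eq_two_or_odd).resolve_left (by omega)
  rw [← sub_eq_zero]
  set Z := AA p ^ 2 - HS p with hZ
  have hL : LL Z = 0 := by
    rw [hZ, LL_sub, LL_sq _ (AA_ode p hp), HS_LL p hp, sub_zero]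
  have hX : ∀ m, m < p → X ^ (m + 1) ∣ Z := by
    intro m
    induction m with
    | zero =>
      intro _
      rw [zero_add, pow_one, X_dvd_iff, coeff_zero_eq_eval_zero, hZ, eval_sub, eval_pow,
        ← coeff_zero_eq_eval_zero, AA_coeff, if_pos (by omega), ah_zero]
      unfold HS
      rw [eval_finsetSum, Finset.sum_eq_single 0]
      · simp [HH, PP, RR, gg, a_zero]
      · intro b _ hb
        simp [HH, PP, hb]
      · intro h; exact absurd (mem_range.2 (by omega)) h
    | succ m ih =>
      intro hm
      exact LL_uniq_step h3 (m + 1) (natCast_ne_zero_of_small p (m+1) (by omega) hm) Z hL (ih (by omega))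
  have hXp : X ^ p ∣ Z := by
    have := hX (p - 1) (by omega); rwa [show p - 1 + 1 = p by omega] at this
  rw [X_pow_dvd_iff] at hXp
  have hdA : (AA p ^ 2).natDegree ≤ 2 * p - 2 := by
    rw [pow_two]
    exact (natDegree_mul_le_of_le (AA_deg p hp) (AA_deg p hp)).trans (by omega)
  have hrA : reflect (2 * p - 2) (AA p ^ 2) = AA p ^ 2 := by
    rw [pow_two, show 2 * p - 2 = (p - 1) + (p - 1) by omega, reflect_mul _ _ (AA_deg p hp) (AA_deg p hp), AA_reflect p hp]
    have := congrArg (C : ZMod p → (ZMod p)[X]) (ah_last p hp)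
    rw [C_pow, C_1] at this
    linear_combination (AA p * AA p) * this
  obtain ⟨hdH, hrH⟩ := HS_reflect p hp
  have hr : reflect (2 * p - 2) Z = Z := by rw [hZ, reflect_sub, hrA, hrH]
  have hd : Z.natDegree ≤ 2 * p - 2 := natDegree_sub_le_of_le hdA hdH |>.trans (by simp)
  ext i
  rw [coeff_zero]
  by_cases h1 : i < p
  · exact hXp i h1
  by_cases h2 : i ≤ 2 * p - 2
  · rw [← hr, coeff_reflect, revAt_le h2]
    exact hXp _ (by omega)
  · exact coeff_eq_zero_of_natDegree_lt (by omega)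

theorem part_A (hp : 3 < p) (s : ZMod p) (hs : s ^ 2 = 2) :
    ∑ k ∈ range p, (Nat.choose (2 * k) k : ZMod p) * (a k : ZMod p) / (36 : ZMod p) ^ k
      = (∑ k ∈ range p, (a k : ZMod p) * ((3 + 2 * s) / 3) ^ k) ^ 2 := by
  obtain ⟨h2, h3⟩ := two_three_ne p hp
  have hodd : p % 2 = 1 := (hpf.out.eq_two_or_odd).resolve_left (by omega)
  have h := congrArg (eval (3 + 2 * s)) (AA_sq_eq p hp)
  rw [eval_pow] at h
  have hA : eval (3 + 2 * s) (AA p) = ∑ k ∈ range p, (a k : ZMod p) * ((3 + 2 * s) / 3) ^ k := by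
    unfold AA
    rw [eval_finsetSum]
    apply Finset.sum_congr rfl
    intro k _
    simp only [eval_mul, eval_C, eval_pow, eval_X, ah, div_pow]
    ring
  rw [← hA, h]
  unfold HS
  rw [eval_finsetSum]
  have hr : eval (3 + 2 * s) (RR : (ZMod p)[X]) = -4 * (4 + 3 * s) := by
    simp [RR]; linear_combination (-4) * hs
  have hr0 : eval (3 + 2 * s) (RR : (ZMod p)[X]) ≠ 0 := by
    rw [hr]
    intro h0
    have : (2 : ZMod p) ^ 3 = 0 := by linear_combination (4 - 3 * s) * h0 - 36 * hs
    exact pow_ne_zero 3 h2 this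
  have h4 : (4 : ZMod p) ≠ 0 := by rw [show (4 : ZMod p) = 2 * 2 by norm_num]; exact mul_ne_zero h2 h2
  have h9 : (9 : ZMod p) ≠ 0 := by rw [show (9 : ZMod p) = 3 * 3 by norm_num]; exact mul_ne_zero h3 h3
  have hP : eval (3 + 2 * s) (C (1/9) * PP : (ZMod p)[X]) = eval (3 + 2 * s) (RR : (ZMod p)[X]) ^ 2 / 36 := by
    rw [hr, eval_mul, eval_C]
    rw [show (36 : ZMod p) = 4 * 9 by norm_num]
    field_simp
    simp [PP]
    linear_combination (32 + 24 * s) * hs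
  have hpart : range ((p + 1) / 2) ⊆ range p := range_subset_range.2 (by omega)
  rw [← Finset.sum_subset hpart]
  · apply Finset.sum_congr rfl
    intro n hn
    have := mem_range.1 hn
    rw [eval_mul, eval_C]
    unfold HH
    rw [eval_mul, eval_pow, eval_pow, hP, div_pow, ← pow_mul, div_mul_eq_mul_div, ← pow_add,
      show 2 * n + (p - 1 - 2 * n) = p - 1 by omega, ZMod.pow_card_sub_one_eq_one hr0]
    unfold gg; ring
  · intro k hk hk'
    have h1 := mem_range.1 hk
    have h2 : ¬ k < (p + 1) / 2 := fun h => hk' (mem_range.2 h)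
    rw [central_zero p k (by omega) h1]; simp

end A3


section D1
open Polynomial

lemma unimod {K : Type*} [Field K] (u v w : K[X])
    (h : ∀ (M : Ideal K[X]) (_ : M.IsMaximal), u ∈ M → v ∈ M → w ∈ M → False) :
    ∃ x y z : K[X], x * u + y * v + z * w = 1 := by
  by_cases ht : Ideal.span ({u, v, w} : Set K[X]) = ⊤
  · have h1 : (1 : K[X]) ∈ Ideal.span ({u, v, w} : Set K[X]) := by rw [ht]; trivial
    rw [Ideal.mem_span_insert] at h1
    obtain ⟨x, z, hz, hx⟩ := h1
    rw [Ideal.mem_span_pair] at hz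
    obtain ⟨y, t, hyt⟩ := hz
    exact ⟨x, y, t, by rw [hx, ← hyt]; ring⟩
  · exfalso
    obtain ⟨M, hM, hle⟩ := Ideal.exists_le_maximal _ ht
    exact h M hM (hle (Ideal.subset_span (by simp))) (hle (Ideal.subset_span (by simp))) (hle (Ideal.subset_span (by simp)))

lemma sfield {k : Type*} [Field k] (a1 b1 a2 b2 : k) (h1 : ¬ (a1 = 0 ∧ b1 = 0)) (h2 : ¬ (a2 = 0 ∧ b2 = 0))
    (e0 : b1 * b2 = 0) (e1 : a1 * b2 + a2 * b1 = 0) (e2 : a1 * a2 = 0) : False := by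
  rcases mul_eq_zero.1 e0 with h | h
  · have ha : a1 ≠ 0 := fun h' => h1 ⟨h', h⟩
    have ha2 : a2 = 0 := (mul_eq_zero.1 e2).resolve_left ha
    rw [h, mul_zero, add_zero] at e1
    exact h2 ⟨ha2, (mul_eq_zero.1 e1).resolve_left ha⟩
  · have ha : a2 ≠ 0 := fun h' => h2 ⟨h', h⟩
    have ha2 : a1 = 0 := (mul_eq_zero.1 e2).resolve_right ha
    rw [h, mul_zero, zero_add] at e1
    exact h1 ⟨ha2, (mul_eq_zero.1 e1).resolve_left ha⟩

lemma Ffield {k : Type*} [Field k] (h2 : (2 : k) ≠ 0) (α β s0 s1 s2 : k) (hβ : β ≠ 0) (hd : α ^ 2 - 4 * β ≠ 0)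
    (e0 : s1 ^ 2 - 4 * s0 * s2 = 0) (e1 : 2 * (s1 * (s2 + β * s0) + 2 * α * s0 * s2) = 0) (e2 : (s2 - β * s0) ^ 2 = 0) :
    s0 = 0 ∧ s1 = 0 ∧ s2 = 0 := by
  have e2' : s2 = β * s0 := sub_eq_zero.1 (pow_eq_zero_iff (two_ne_zero) |>.1 e2)
  subst e2'
  by_cases h : s0 = 0
  · subst h
    refine ⟨rfl, ?_, by simp⟩
    have : s1 ^ 2 = 0 := by linear_combination e0
    exact pow_eq_zero_iff two_ne_zero |>.1 this
  · exfalso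
    have h3 : s1 + α * s0 = 0 := by
      have : (2 * 2 * β * s0) * (s1 + α * s0) = 0 := by linear_combination e1
      exact (mul_eq_zero.1 this).resolve_left (by simp [h2, hβ, h])
    have : (α ^ 2 - 4 * β) * s0 ^ 2 = 0 := by linear_combination e0 - (s1 - α * s0) * h3
    rcases mul_eq_zero.1 this with h' | h'
    · exact hd h'
    · exact h (pow_eq_zero_iff two_ne_zero |>.1 h')

lemma coprime_quot {K : Type*} [Field K] (M : Ideal K[X]) (hM : M.IsMaximal) (a b : K[X]) (h : IsCoprime a b) :
    ¬ (Ideal.Quotient.mk M a = 0 ∧ Ideal.Quotient.mk M b = 0) := by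
  rintro ⟨ha, hb⟩
  obtain ⟨u, v, huv⟩ := h
  have := congrArg (Ideal.Quotient.mk M) huv
  rw [map_add, map_mul, map_mul, ha, hb, mul_zero, mul_zero, add_zero, map_one] at this
  have hn : Nontrivial (K[X] ⧸ M) := Ideal.Quotient.nontrivial_iff.2 hM.ne_top
  exact zero_ne_one this

lemma C_quot_ne {K : Type*} [Field K] (M : Ideal K[X]) (hM : M.IsMaximal) (c : K) (hc : c ≠ 0) :
    Ideal.Quotient.mk M (C c) ≠ 0 := by
  intro h
  have hn : Nontrivial (K[X] ⧸ M) := Ideal.Quotient.nontrivial_iff.2 hM.ne_top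
  have : Ideal.Quotient.mk M (C c) * Ideal.Quotient.mk M (C c⁻¹) = 1 := by
    rw [← map_mul, ← C_mul, mul_inv_cancel₀ hc, C_1, map_one]
  rw [h, zero_mul] at this
  exact zero_ne_one this

lemma deg_mul_lt {K : Type*} [Field K] (u v f g : K[X]) (h1 : u.degree < f.degree) (h2 : v.degree ≤ g.degree) (hg : g ≠ 0) :
    (u * v).degree < (f * g).degree := by
  have hf : f ≠ 0 := by rintro rfl; simp at h1
  by_cases hu : u = 0
  · rw [hu, zero_mul, degree_zero, bot_lt_iff_ne_bot, degree_ne_bot]; exact mul_ne_zero hf hg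
  by_cases hv : v = 0
  · rw [hv, mul_zero, degree_zero, bot_lt_iff_ne_bot, degree_ne_bot]; exact mul_ne_zero hf hg
  rw [degree_eq_natDegree hu, degree_eq_natDegree hf] at h1
  rw [degree_eq_natDegree hv, degree_eq_natDegree hg] at h2
  rw [degree_mul, degree_mul, degree_eq_natDegree hu, degree_eq_natDegree hf, degree_eq_natDegree hv, degree_eq_natDegree hg]
  norm_cast at *
  omega

lemma deg_C_mul_le {K : Type*} [Field K] (c : K) (f : K[X]) : (C c * f).degree ≤ f.degree := by
  rw [← smul_eq_C_mul]; exact degree_smul_le c f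

lemma deg_aux {K : Type*} [Field K] (a3 b3 a4 b4 : K[X]) (ha3 : a3 ≠ 0) (ha4 : a4 ≠ 0)
    (D0 : (b3 * b4).degree < (a3 * a4).degree) (D1 : (a3 * b4 + a4 * b3).degree < (a3 * a4).degree) : b3.degree < a3.degree := by
  by_contra hcon
  push Not at hcon
  have hb3 : b3 ≠ 0 := by rintro rfl; rw [degree_zero, le_bot_iff, degree_eq_bot] at hcon; exact ha3 hcon
  have h4 : b4.degree < a4.degree := by
    by_contra h4
    push Not at h4
    rw [degree_mul, degree_mul] at D0
    exact absurd (add_le_add hcon h4) (not_le.2 D0)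
  have h5 : (a3 * b4).degree < (a4 * b3).degree := by
    rw [mul_comm a3]; exact deg_mul_lt _ _ _ _ h4 hcon hb3
  rw [degree_add_eq_right_of_degree_lt h5, degree_mul, degree_mul, add_comm] at D1
  exact absurd (add_le_add_left hcon a4.degree) (not_le.2 D1)

lemma height_core {K : Type*} [Field K] (h2 : (2 : K) ≠ 0) (α β : K) (hβ : β ≠ 0) (hd : α ^ 2 - 4 * β ≠ 0)
    (a1 b1 a2 b2 a3 b3 a4 b4 m n : K[X]) (c1 : IsCoprime a1 b1) (c2 : IsCoprime a2 b2) (c3 : IsCoprime a3 b3)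
    (c4 : IsCoprime a4 b4) (d1 : b1.degree < a1.degree) (d2 : b2.degree < a2.degree) (hm : m ≠ 0) (hn : n ≠ 0)
    (E0 : m * ((a1 * b2 + a2 * b1) ^ 2 - 4 * (b1 * b2) * (a1 * a2)) = n * (b3 * b4))
    (E1 : m * (2 * ((a1 * b2 + a2 * b1) * (a1 * a2 + C β * (b1 * b2)) + 2 * C α * (b1 * b2) * (a1 * a2))) = n * (a3 * b4 + a4 * b3))
    (E2 : m * (a1 * a2 - C β * (b1 * b2)) ^ 2 = n * (a3 * a4)) :
    a3.natDegree + a4.natDegree = 2 * (a1.natDegree + a2.natDegree) ∧ b3.degree < a3.degree ∧ b4.degree < a4.degree := by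
  have hdvd1 : m ∣ n := by
    obtain ⟨x, y, z, h⟩ := unimod (b3 * b4) (a3 * b4 + a4 * b3) (a3 * a4) (by
      intro M hM m0 m1 m2
      let _ := Ideal.Quotient.field M
      have m0 := Ideal.Quotient.eq_zero_iff_mem.2 m0
      have m1 := Ideal.Quotient.eq_zero_iff_mem.2 m1
      have m2 := Ideal.Quotient.eq_zero_iff_mem.2 m2
      simp only [map_mul, map_add] at m0 m1 m2
      exact sfield _ _ _ _ (coprime_quot M hM _ _ c3) (coprime_quot M hM _ _ c4) m0 m1 m2)
    refine ⟨x * ((a1 * b2 + a2 * b1) ^ 2 - 4 * (b1 * b2) * (a1 * a2)) + y * (2 * ((a1 * b2 + a2 * b1) * (a1 * a2 + C β * (b1 * b2)) + 2 * C α * (b1 * b2) * (a1 * a2))) + z * (a1 * a2 - C β * (b1 * b2)) ^ 2, ?_⟩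
    linear_combination (-n) * h - x * E0 - y * E1 - z * E2
  have hdvd2 : n ∣ m := by
    obtain ⟨x, y, z, h⟩ := unimod ((a1 * b2 + a2 * b1) ^ 2 - 4 * (b1 * b2) * (a1 * a2)) (2 * ((a1 * b2 + a2 * b1) * (a1 * a2 + C β * (b1 * b2)) + 2 * C α * (b1 * b2) * (a1 * a2))) ((a1 * a2 - C β * (b1 * b2)) ^ 2) (by
      intro M hM m0 m1 m2
      let _ := Ideal.Quotient.field M
      have m0 := Ideal.Quotient.eq_zero_iff_mem.2 m0
      have m1 := Ideal.Quotient.eq_zero_iff_mem.2 m1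
      have m2 := Ideal.Quotient.eq_zero_iff_mem.2 m2
      have cn : ∀ m : ℕ, Ideal.Quotient.mk M (OfNat.ofNat (m+2)) = OfNat.ofNat (m+2) := fun m => map_natCast _ (m+2)
      have h2' : (2 : K[X] ⧸ M) ≠ 0 := by
        have := C_quot_ne M hM 2 h2
        rwa [show (C (2:K)) = (2 : K[X]) from rfl, cn 0] at this
      have hβ' := C_quot_ne M hM β hβ
      have hd' := C_quot_ne M hM _ hd
      rw [C_sub, C_mul, C_pow, map_sub, map_mul, map_pow, show (C (4:K)) = (4 : K[X]) from rfl, cn 2] at hd'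
      simp only [map_mul, map_add, map_sub, map_pow, cn] at m0 m1 m2
      obtain ⟨r0, r1, r2⟩ := Ffield h2' _ _ _ _ _ hβ' hd' m0 m1 m2
      exact sfield _ _ _ _ (coprime_quot M hM _ _ c1) (coprime_quot M hM _ _ c2) r0 r1 r2)
    refine ⟨x * (b3 * b4) + y * (a3 * b4 + a4 * b3) + z * (a3 * a4), ?_⟩
    linear_combination (-m) * h + x * E0 + y * E1 + z * E2
  have hdeg : m.degree = n.degree := degree_eq_degree_of_associated (associated_of_dvd_dvd hdvd1 hdvd2)
  have hmb : m.degree ≠ ⊥ := by simpa using hm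
  have ha1 : a1 ≠ 0 := by rintro rfl; simp at d1
  have ha2 : a2 ≠ 0 := by rintro rfl; simp at d2
  set A := a1 * a2 with hA
  have cancel : ∀ u v : K[X], m * u = n * v → u.degree = v.degree := by
    intro u v h
    have := congrArg degree h
    rw [degree_mul, degree_mul, ← hdeg] at this
    exact (WithBot.add_left_inj hmb).1 this
  have hCle := @deg_C_mul_le K _
  have hA0 : A ≠ 0 := mul_ne_zero ha1 ha2
  have lb : (b1 * b2).degree < A.degree := deg_mul_lt _ _ _ _ d1 d2.le ha2
  have lx : (a1 * b2 + a2 * b1).degree < A.degree := by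
    refine (degree_add_le _ _).trans_lt (max_lt ?_ ?_)
    · rw [mul_comm, hA, mul_comm a1]; exact deg_mul_lt _ _ _ _ d2 le_rfl ha1
    · rw [mul_comm]; exact deg_mul_lt _ _ _ _ d1 le_rfl ha2
  have lCb : (C β * (b1 * b2)).degree < A.degree := (hCle _ _).trans_lt lb
  have D2 : ((A - C β * (b1 * b2)) ^ 2).degree = (A * A).degree := by
    rw [pow_two, degree_mul, degree_mul, degree_sub_eq_left_of_degree_lt lCb]
  have D1 : (2 * ((a1 * b2 + a2 * b1) * (A + C β * (b1 * b2)) + 2 * C α * (b1 * b2) * A)).degree < (A * A).degree := by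
    rw [show (2 : K[X]) = C 2 from rfl]
    refine (hCle _ _).trans_lt ((degree_add_le _ _).trans_lt (max_lt ?_ ?_))
    · exact deg_mul_lt _ _ _ _ lx ((degree_add_le _ _).trans (max_le le_rfl lCb.le)) hA0
    · refine deg_mul_lt _ _ _ _ ?_ le_rfl hA0
      rw [← C_mul]; exact (hCle _ _).trans_lt lb
  have D0 : ((a1 * b2 + a2 * b1) ^ 2 - 4 * (b1 * b2) * A).degree < (A * A).degree := by
    rw [show (4 : K[X]) = C 4 from rfl, pow_two]
    refine (degree_sub_le _ _).trans_lt (max_lt ?_ ?_)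
    · exact deg_mul_lt _ _ _ _ lx lx.le hA0
    · exact deg_mul_lt _ _ _ _ ((hCle _ _).trans_lt lb) le_rfl hA0
  rw [cancel _ _ E2] at D2
  rw [cancel _ _ E1] at D1
  rw [cancel _ _ E0] at D0
  rw [← D2] at D1 D0
  have hA34 : a3 * a4 ≠ 0 := by
    rw [← degree_ne_bot, D2, degree_ne_bot]
    exact mul_ne_zero hA0 hA0
  have ha3 := left_ne_zero_of_mul hA34
  have ha4 := right_ne_zero_of_mul hA34
  refine ⟨?_, ?_, ?_⟩
  · have := natDegree_eq_of_degree_eq D2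
    rw [natDegree_mul ha3 ha4, natDegree_mul hA0 hA0, natDegree_mul ha1 ha2] at this
    omega
  · exact deg_aux a3 b3 a4 b4 ha3 ha4 D0 D1
  · refine deg_aux a4 b4 a3 b3 ha4 ha3 ?_ ?_
    · rwa [mul_comm b4, mul_comm a4]
    · rwa [add_comm, mul_comm a4 a3]
end D1


section D2
open WeierstrassCurve WeierstrassCurve.Affine
variable {L : Type*} [Field L]

/-- twisted curve `φ Y² = X³ + α X² + β X` in Weierstrass form (`x = φ X`, `y = φ² Y`) -/
def TW (φ α β : L) : WeierstrassCurve.Affine L := ⟨0, α * φ, 0, β * φ ^ 2, 0⟩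

def IsPt {φ α β : L} (R : (TW φ α β).Point) (X Y : L) : Prop :=
  ∃ h, R = Point.some (φ * X) (φ ^ 2 * Y) h

lemma TW_disc {φ α β : L} (hφ : φ ≠ 0) (h2 : (2 : L) ≠ 0) (hβ : β ≠ 0) (hd : α ^ 2 - 4 * β ≠ 0) : (TW φ α β).Δ ≠ 0 := by
  have : (TW φ α β).Δ = 2 ^ 4 * φ ^ 6 * β ^ 2 * (α ^ 2 - 4 * β) := by
    simp [WeierstrassCurve.Δ, WeierstrassCurve.b₂, WeierstrassCurve.b₄, WeierstrassCurve.b₆, WeierstrassCurve.b₈, TW]; ring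
  rw [this]
  exact mul_ne_zero (mul_ne_zero (mul_ne_zero (pow_ne_zero _ h2) (pow_ne_zero _ hφ)) (pow_ne_zero _ hβ)) hd

lemma isPt_exists {φ α β : L} (hφ : φ ≠ 0) (h2 : (2 : L) ≠ 0) (hβ : β ≠ 0) (hd : α ^ 2 - 4 * β ≠ 0) (X Y : L)
    (h : φ * Y ^ 2 = X ^ 3 + α * X ^ 2 + β * X) : ∃ R : (TW φ α β).Point, IsPt R X Y := by
  have heq : (TW φ α β).Equation (φ * X) (φ ^ 2 * Y) := by
    rw [equation_iff]; simp [TW]; linear_combination φ ^ 3 * h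
  exact ⟨_, (equation_iff_nonsingular_of_Δ_ne_zero (TW_disc hφ h2 hβ hd)).1 heq, rfl⟩

lemma isPt_or {φ α β : L} (hφ : φ ≠ 0) (R : (TW φ α β).Point) : R = 0 ∨ ∃ X Y, IsPt R X Y := by
  rcases R with _ | ⟨x, y, h⟩
  · left; rfl
  · right
    refine ⟨x / φ, y / φ ^ 2, ?_, ?_⟩
    · rw [mul_div_cancel₀ _ hφ, mul_div_cancel₀ _ (pow_ne_zero 2 hφ)]; exact h
    · congr 1
      · rw [mul_div_cancel₀ _ hφ]
      · rw [mul_div_cancel₀ _ (pow_ne_zero 2 hφ)]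

variable {φ α β : L}

lemma IsPt.eqn (hφ : φ ≠ 0) {R : (TW φ α β).Point} {X Y : L} (h : IsPt R X Y) :
    φ * Y ^ 2 = X ^ 3 + α * X ^ 2 + β * X := by
  obtain ⟨h, -⟩ := h
  have := h.1
  rw [equation_iff] at this
  simp [TW] at this
  apply mul_left_cancel₀ (pow_ne_zero 3 hφ)
  linear_combination this

lemma IsPt.ne_zero {R : (TW φ α β).Point} {X Y : L} (h : IsPt R X Y) : R ≠ 0 := by
  obtain ⟨h, rfl⟩ := h
  exact Point.some_ne_zero h

lemma IsPt.neg {R : (TW φ α β).Point} {X Y : L} (h : IsPt R X Y) : IsPt (-R) X (-Y) := by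
  obtain ⟨h, rfl⟩ := h
  have e : (TW φ α β).negY (φ * X) (φ ^ 2 * Y) = φ ^ 2 * (-Y) := by simp [negY, TW]
  refine ⟨by rw [← e]; exact (nonsingular_neg _ _).2 h, ?_⟩
  rw [Point.neg_some]
  congr 1

lemma IsPt.uniq (hφ : φ ≠ 0) {R : (TW φ α β).Point} {X Y X' Y' : L} (h : IsPt R X Y) (h' : IsPt R X' Y') :
    X = X' ∧ Y = Y' := by
  obtain ⟨h, rfl⟩ := h
  obtain ⟨h', e⟩ := h'
  rw [Point.some.injEq] at e
  exact ⟨mul_left_cancel₀ hφ e.1, mul_left_cancel₀ (pow_ne_zero 2 hφ) e.2⟩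

lemma IsPt.inj {R R' : (TW φ α β).Point} {X Y : L} (h : IsPt R X Y) (h' : IsPt R' X Y) : R = R' := by
  obtain ⟨h, rfl⟩ := h
  obtain ⟨h', rfl⟩ := h'
  rfl

lemma IsPt.eq_or_neg (hφ : φ ≠ 0) {R R' : (TW φ α β).Point} {X Y Y' : L} (h : IsPt R X Y) (h' : IsPt R' X Y') :
    R = R' ∨ R = -R' := by
  have e := h.eqn hφ
  have e' := h'.eqn hφ
  have : (Y - Y') * (Y + Y') = 0 := by
    apply mul_left_cancel₀ hφ; linear_combination e - e'
  rcases mul_eq_zero.1 this with h1 | h1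
  · left
    rw [sub_eq_zero] at h1; subst h1
    exact h.inj h'
  · right
    have : Y = -Y' := by linear_combination h1
    subst this
    exact h.inj h'.neg

variable [DecidableEq L]

lemma IsPt.add_gen (hφ : φ ≠ 0) {R R' : (TW φ α β).Point} {X Y X' Y' ℓ : L} (h : IsPt R X Y) (h' : IsPt R' X' Y')
    (hX : X ≠ X') (hl : ℓ * (X - X') = Y - Y') :
    IsPt (R + R') (φ * ℓ ^ 2 - α - X - X') (-(Y + ℓ * ((φ * ℓ ^ 2 - α - X - X') - X))) := by
  obtain ⟨h, rfl⟩ := h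
  obtain ⟨h', rfl⟩ := h'
  have hX' : φ * X ≠ φ * X' := fun e => hX (mul_left_cancel₀ hφ e)
  have hs : (TW φ α β).slope (φ * X) (φ * X') (φ ^ 2 * Y) (φ ^ 2 * Y') = φ * ℓ := by
    rw [slope_of_X_ne hX', div_eq_iff (sub_ne_zero.2 hX')]
    linear_combination (- φ ^ 2) * hl
  have e1 : (TW φ α β).addX (φ * X) (φ * X') (φ * ℓ) = φ * (φ * ℓ ^ 2 - α - X - X') := by
    simp [addX, TW]; ring
  have e2 : (TW φ α β).addY (φ * X) (φ * X') (φ ^ 2 * Y) (φ * ℓ) = φ ^ 2 * (-(Y + ℓ * ((φ * ℓ ^ 2 - α - X - X') - X))) := by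
    simp [addY, negY, negAddY, addX, TW]; ring
  rw [Point.add_of_X_ne hX']
  refine ⟨?_, ?_⟩
  · rw [← e1, ← e2, ← hs]; exact nonsingular_add h h' (fun hxy => hX' hxy.left)
  · congr 1
    · rw [hs, e1]
    · rw [hs, e2]

lemma IsPt.add_dbl (hφ : φ ≠ 0) (h2 : (2 : L) ≠ 0) {R : (TW φ α β).Point} {X Y ℓ : L} (h : IsPt R X Y)
    (hY : Y ≠ 0) (hl : ℓ * (2 * φ * Y) = 3 * X ^ 2 + 2 * α * X + β) :
    IsPt (R + R) (φ * ℓ ^ 2 - α - X - X) (-(Y + ℓ * ((φ * ℓ ^ 2 - α - X - X) - X))) := by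
  obtain ⟨h, rfl⟩ := h
  have hY' : φ ^ 2 * Y ≠ (TW φ α β).negY (φ * X) (φ ^ 2 * Y) := by
    simp only [negY, TW]
    intro e
    have : 2 * φ ^ 2 * Y = 0 := by linear_combination e
    exact mul_ne_zero (mul_ne_zero h2 (pow_ne_zero 2 hφ)) hY this
  have hs : (TW φ α β).slope (φ * X) (φ * X) (φ ^ 2 * Y) (φ ^ 2 * Y) = φ * ℓ := by
    rw [slope_of_Y_ne rfl hY', div_eq_iff (sub_ne_zero.2 hY')]
    simp only [negY, TW]
    linear_combination (- φ ^ 2) * hl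
  have e1 : (TW φ α β).addX (φ * X) (φ * X) (φ * ℓ) = φ * (φ * ℓ ^ 2 - α - X - X) := by
    simp [addX, TW]; ring
  have e2 : (TW φ α β).addY (φ * X) (φ * X) (φ ^ 2 * Y) (φ * ℓ) = φ ^ 2 * (-(Y + ℓ * ((φ * ℓ ^ 2 - α - X - X) - X))) := by
    simp [addY, negY, negAddY, addX, TW]; ring
  rw [Point.add_self_of_Y_ne hY']
  refine ⟨?_, ?_⟩
  · rw [← e1, ← e2, ← hs]; exact nonsingular_add h h (fun hxy => hY' hxy.right)
  · congr 1
    · rw [hs, e1]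
    · rw [hs, e2]

lemma IsPt.add_self_zero (hφ : φ ≠ 0) {R : (TW φ α β).Point} {X : L} (h : IsPt R X 0) : R + R = 0 := by
  have := h.neg
  rw [neg_zero] at this
  have e := h.inj this
  nth_rewrite 2 [e]
  exact add_neg_cancel R

def XR (R : (TW φ α β).Point) (U V : L) : Prop := (R = 0 ∧ U = 1 ∧ V = 0) ∨ (∃ Y, IsPt R U Y ∧ V = 1)

lemma XR_exists (hφ : φ ≠ 0) (R : (TW φ α β).Point) : ∃ U V, XR R U V := by
  rcases isPt_or hφ R with h | ⟨X, Y, h⟩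
  · exact ⟨1, 0, Or.inl ⟨h, rfl, rfl⟩⟩
  · exact ⟨X, 1, Or.inr ⟨Y, h, rfl⟩⟩

lemma XR.uniq (hφ : φ ≠ 0) {R : (TW φ α β).Point} {U V U' V' : L} (h : XR R U V) (h' : XR R U' V') : U = U' ∧ V = V' := by
  rcases h with ⟨h, rfl, rfl⟩ | ⟨Y, h, rfl⟩ <;> rcases h' with ⟨h', rfl, rfl⟩ | ⟨Y', h', rfl⟩
  · simp
  · exact absurd h h'.ne_zero
  · exact absurd h' h.ne_zero
  · exact ⟨(h.uniq hφ h').1, rfl⟩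

lemma XR.neg {R : (TW φ α β).Point} {U V : L} (h : XR R U V) : XR (-R) U V := by
  rcases h with ⟨rfl, rfl, rfl⟩ | ⟨Y, h, rfl⟩
  · exact Or.inl ⟨neg_zero, rfl, rfl⟩
  · exact Or.inr ⟨_, h.neg, rfl⟩

/-- the symmetric-square doubling relation, one choice of representatives -/
lemma para_rel_aux (hφ : φ ≠ 0) (h2 : (2 : L) ≠ 0) (hβ : β ≠ 0) (hd : α ^ 2 - 4 * β ≠ 0)
    {R1 R2 : (TW φ α β).Point} {a1 b1 a2 b2 : L} (x1 : XR R1 a1 b1) (x2 : XR R2 a2 b2) :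
    ∃ a3 b3 a4 b4 κ : L, XR (R1 + R2) a3 b3 ∧ XR (R1 - R2) a4 b4 ∧ κ ≠ 0 ∧
    ((a1 * b2 + a2 * b1) ^ 2 - 4 * (b1 * b2) * (a1 * a2)) = κ * (b3 * b4) ∧
    (2 * ((a1 * b2 + a2 * b1) * (a1 * a2 + β * (b1 * b2)) + 2 * α * (b1 * b2) * (a1 * a2))) = κ * (a3 * b4 + a4 * b3) ∧
    (a1 * a2 - β * (b1 * b2)) ^ 2 = κ * (a3 * a4) := by
  have x2' := x2.neg
  rcases x1 with ⟨rfl, rfl, rfl⟩ | ⟨Y1, p1, rfl⟩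
  · refine ⟨a2, b2, a2, b2, 1, by rwa [zero_add], by rwa [zero_sub], one_ne_zero, ?_, ?_, ?_⟩ <;> ring
  rcases x2 with ⟨rfl, rfl, rfl⟩ | ⟨Y2, p2, rfl⟩
  · refine ⟨a1, 1, a1, 1, 1, ?_, ?_, one_ne_zero, ?_, ?_, ?_⟩
    · rw [add_zero]; exact Or.inr ⟨Y1, p1, rfl⟩
    · rw [sub_zero]; exact Or.inr ⟨Y1, p1, rfl⟩
    all_goals ring
  have q1 := p1.eqn hφ
  have q2 := p2.eqn hφ
  by_cases hX : a1 = a2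
  · subst hX
    -- the doubling statement
    have dbl : ∃ a3 b3 κ : L, XR (R1 + R1) a3 b3 ∧ κ ≠ 0 ∧
        4 * (a1 ^ 3 + α * a1 ^ 2 + β * a1) = κ * b3 ∧ (a1 ^ 2 - β) ^ 2 = κ * a3 := by
      by_cases hY : Y1 = 0
      · subst hY
        refine ⟨1, 0, (a1 ^ 2 - β) ^ 2, Or.inl ⟨p1.add_self_zero hφ, rfl, rfl⟩, ?_, ?_, by ring⟩
        · apply pow_ne_zero
          intro h
          have h1 : a1 * (2 * β + α * a1) = 0 := by linear_combination (-1) * q1 - a1 * h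
          rcases mul_eq_zero.1 h1 with h1 | h1
          · subst h1; apply hβ; linear_combination -h
          · have : β * (α ^ 2 - 4 * β) = 0 := by
              linear_combination (-α ^ 2) * h + (α * a1 - 2 * β) * h1
            rcases mul_eq_zero.1 this with h | h
            · exact hβ h
            · exact hd h
        · linear_combination (-4) * q1
      · have hy2 : 2 * φ * Y1 ≠ 0 := mul_ne_zero (mul_ne_zero h2 hφ) hY
        set ℓ := (3 * a1 ^ 2 + 2 * α * a1 + β) / (2 * φ * Y1) with hℓ
        have hl : ℓ * (2 * φ * Y1) = 3 * a1 ^ 2 + 2 * α * a1 + β := by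
          rw [hℓ, div_mul_cancel₀ _ hy2]
        refine ⟨_, 1, 4 * φ * Y1 ^ 2, Or.inr ⟨_, p1.add_dbl hφ h2 hY hl, rfl⟩, ?_, ?_, ?_⟩
        · rw [show (4 : L) = 2 * 2 by norm_num]
          exact mul_ne_zero (mul_ne_zero (mul_ne_zero h2 h2) hφ) (pow_ne_zero 2 hY)
        · linear_combination (-4) * q1
        · linear_combination (-(ℓ * (2 * φ * Y1) + (3 * a1 ^ 2 + 2 * α * a1 + β))) * hl + 4 * (α + 2 * a1) * q1
    obtain ⟨a3, b3, κ, hx, hκ, e1, e2⟩ := dbl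
    rcases p1.eq_or_neg hφ p2 with h | h
    · subst h
      refine ⟨a3, b3, 1, 0, κ, hx, Or.inl ⟨sub_self _, rfl, rfl⟩, hκ, by ring, ?_, ?_⟩
      · linear_combination e1
      · linear_combination e2
    · have h' : R2 = -R1 := by rw [h, neg_neg]
      subst h'
      refine ⟨1, 0, a3, b3, κ, Or.inl ⟨add_neg_cancel _, rfl, rfl⟩, by rwa [sub_neg_eq_add], hκ, by ring, ?_, ?_⟩
      · linear_combination e1
      · linear_combination e2
  · have hX' := sub_ne_zero.2 hX
    set ℓ := (Y1 - Y2) / (a1 - a2) with hℓ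
    set m := (Y1 + Y2) / (a1 - a2) with hm
    have hl : ℓ * (a1 - a2) = Y1 - Y2 := by rw [hℓ, div_mul_cancel₀ _ hX']
    have hl' : m * (a1 - a2) = Y1 - (-Y2) := by rw [hm, div_mul_cancel₀ _ hX']; ring
    refine ⟨_, 1, φ * m ^ 2 - α - a1 - a2, 1, (a1 - a2) ^ 2, Or.inr ⟨_, p1.add_gen hφ p2 hX hl, rfl⟩, ?_, pow_ne_zero 2 hX', ?_, ?_, ?_⟩
    · rw [sub_eq_add_neg]
      exact Or.inr ⟨_, p1.add_gen hφ p2.neg hX hl', rfl⟩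
    · ring
    · have e1 : φ * (ℓ * (a1 - a2)) ^ 2 + φ * (m * (a1 - a2)) ^ 2 = 2 * φ * Y1 ^ 2 + 2 * φ * Y2 ^ 2 := by
        rw [hl, hl']; ring
      linear_combination (-1) * e1 - 2 * q1 - 2 * q2
    · have e1 : φ * (ℓ * (a1 - a2)) ^ 2 + φ * (m * (a1 - a2)) ^ 2 = 2 * φ * Y1 ^ 2 + 2 * φ * Y2 ^ 2 := by
        rw [hl, hl']; ring
      have e2 : (ℓ * (a1 - a2)) * (m * (a1 - a2)) = Y1 ^ 2 - Y2 ^ 2 := by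
        rw [hl, hl']; ring
      set S := φ * ℓ ^ 2
      set T := φ * m ^ 2
      have e1' : (S + T) * (a1 - a2) ^ 2 = 2 * (φ * Y1 ^ 2) + 2 * (φ * Y2 ^ 2) := by linear_combination e1
      have e2' : S * T * (a1 - a2) ^ 4 = (φ * Y1 ^ 2 - φ * Y2 ^ 2) ^ 2 := by
        rw [← mul_sub, ← e2]; simp only [S, T]; ring
      rw [q1, q2] at e1' e2'
      apply mul_left_cancel₀ (pow_ne_zero 2 hX')
      linear_combination (-1) * e2' + (α + a1 + a2) * (a1 - a2) ^ 2 * e1'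

lemma para_rel (hφ : φ ≠ 0) (h2 : (2 : L) ≠ 0) (hβ : β ≠ 0) (hd : α ^ 2 - 4 * β ≠ 0)
    {R1 R2 : (TW φ α β).Point} {a1 b1 a2 b2 a3 b3 a4 b4 : L} (x1 : XR R1 a1 b1) (x2 : XR R2 a2 b2)
    (x3 : XR (R1 + R2) a3 b3) (x4 : XR (R1 - R2) a4 b4) :
    ∃ κ : L, κ ≠ 0 ∧
    ((a1 * b2 + a2 * b1) ^ 2 - 4 * (b1 * b2) * (a1 * a2)) = κ * (b3 * b4) ∧
    (2 * ((a1 * b2 + a2 * b1) * (a1 * a2 + β * (b1 * b2)) + 2 * α * (b1 * b2) * (a1 * a2))) = κ * (a3 * b4 + a4 * b3) ∧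
    (a1 * a2 - β * (b1 * b2)) ^ 2 = κ * (a3 * a4) := by
  obtain ⟨a3', b3', a4', b4', κ, y3, y4, h⟩ := para_rel_aux hφ h2 hβ hd x1 x2
  obtain ⟨rfl, rfl⟩ := x3.uniq hφ y3
  obtain ⟨rfl, rfl⟩ := x4.uniq hφ y4
  exact ⟨κ, h⟩

end D2


section D3
open WeierstrassCurve WeierstrassCurve.Affine
variable {L : Type*} [Field L] {φ α β : L}

/-- a bare derivation of a field -/
structure DDer (L : Type*) [Field L] where
  toFun : L → L
  add' : ∀ x y, toFun (x + y) = toFun x + toFun y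
  mul' : ∀ x y, toFun (x * y) = x * toFun y + y * toFun x

instance : CoeFun (DDer L) (fun _ => L → L) := ⟨DDer.toFun⟩

lemma DDer.add (D : DDer L) (x y : L) : D (x + y) = D x + D y := D.add' x y
lemma DDer.mul (D : DDer L) (x y : L) : D (x * y) = x * D y + y * D x := D.mul' x y
lemma DDer.sub (D : DDer L) (x y : L) : D (x - y) = D x - D y := by
  have := D.add (x - y) y
  rw [sub_add_cancel] at this
  rw [this]; ring
lemma DDer.sq (D : DDer L) (x : L) : D (x ^ 2) = 2 * x * D x := by rw [pow_two, D.mul]; ring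
lemma DDer.cube (D : DDer L) (x : L) : D (x ^ 3) = 3 * x ^ 2 * D x := by rw [pow_succ, D.mul, D.sq]; ring
lemma DDer.one (D : DDer L) : D 1 = 0 := by
  have := D.mul 1 1
  rw [mul_one] at this
  linear_combination -this
lemma DDer.two (D : DDer L) : D 2 = 0 := by
  rw [← one_add_one_eq_two, D.add, D.one, add_zero]
lemma DDer.three (D : DDer L) : D 3 = 0 := by
  rw [← two_add_one_eq_three, D.add, D.two, D.one, add_zero]

/-- `R` has invariant differential multiplier `lam` -/
def Lam (D : DDer L) (R : (TW φ α β).Point) (lam : L) : Prop :=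
  (R = 0 ∧ lam = 0) ∨ ∃ X Y, IsPt R X Y ∧ Y ≠ 0 ∧ D X = lam * Y

lemma Lam.neg {D : DDer L} {R : (TW φ α β).Point} {lam : L} (h : Lam D R lam) : Lam D (-R) (-lam) := by
  rcases h with ⟨rfl, rfl⟩ | ⟨X, Y, h, hY, e⟩
  · exact Or.inl ⟨rfl, neg_zero⟩
  · exact Or.inr ⟨X, -Y, h.neg, neg_ne_zero.2 hY, by rw [e]; ring⟩

lemma Lam.dY {D : DDer L} (hα : D α = 0) (hβ : D β = 0) {X Y lam : L} (hY : Y ≠ 0)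
    (h : φ * Y ^ 2 = X ^ 3 + α * X ^ 2 + β * X) (e : D X = lam * Y) :
    2 * φ * D Y = lam * (3 * X ^ 2 + 2 * α * X + β) - D φ * Y := by
  have h' := congrArg D h
  simp only [DDer.mul, DDer.sq, DDer.cube, DDer.add, hα, hβ, e] at h'
  apply mul_left_cancel₀ hY
  linear_combination h'

variable [DecidableEq L]

lemma Lam.add {D : DDer L} (hφ : φ ≠ 0) (h2 : (2 : L) ≠ 0) (hα : D α = 0) (hβ : D β = 0)
    {R1 R2 : (TW φ α β).Point} {l1 l2 : L} (h1 : Lam D R1 l1) (h2' : Lam D R2 l2)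
    (hY3 : ∀ X Y, IsPt (R1 + R2) X Y → Y ≠ 0) : Lam D (R1 + R2) (l1 + l2) := by
  rcases h1 with ⟨rfl, rfl⟩ | ⟨X1, Y1, p1, hY1, e1⟩
  · rwa [zero_add, zero_add]
  rcases h2' with ⟨rfl, rfl⟩ | ⟨X2, Y2, p2, hY2, e2⟩
  · rw [add_zero, add_zero]; exact Or.inr ⟨X1, Y1, p1, hY1, e1⟩
  have q1 := p1.eqn hφ
  have q2 := p2.eqn hφ
  have d1 := Lam.dY hα hβ hY1 q1 e1
  have d2 := Lam.dY hα hβ hY2 q2 e2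
  by_cases hX : X1 = X2
  · subst hX
    rcases p1.eq_or_neg hφ p2 with h | h
    · subst h
      obtain ⟨-, rfl⟩ := p1.uniq hφ p2
      have hl12 : l1 = l2 := mul_right_cancel₀ hY1 (e1.symm.trans e2)
      subst hl12
      have hy2 : 2 * φ * Y1 ≠ 0 := mul_ne_zero (mul_ne_zero h2 hφ) hY1
      set ℓ := (3 * X1 ^ 2 + 2 * α * X1 + β) / (2 * φ * Y1) with hℓ
      have hl : ℓ * (2 * φ * Y1) = 3 * X1 ^ 2 + 2 * α * X1 + β := by
        rw [hℓ, div_mul_cancel₀ _ hy2]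
      have p3 := p1.add_dbl hφ h2 hY1 hl
      refine Or.inr ⟨_, _, p3, hY3 _ _ p3, ?_⟩
      have hl' := congrArg D hl
      simp only [DDer.mul, DDer.sq, DDer.cube, DDer.add, DDer.sub, hα, hβ, e1, DDer.two, DDer.three] at hl' ⊢
      have key : 2 * φ * D ℓ = 2 * l1 * (X1 - (φ * ℓ ^ 2 - α - X1 - X1)) - D φ * ℓ := by
        apply mul_left_cancel₀ hY1
        linear_combination hl' - ℓ * d1 + ℓ * l1 * hl
      linear_combination ℓ * key
    · have h' : R2 = -R1 := by rw [h, neg_neg]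
      subst h'
      obtain ⟨-, rfl⟩ := p2.uniq hφ p1.neg
      refine Or.inl ⟨add_neg_cancel _, ?_⟩
      apply mul_right_cancel₀ hY1
      linear_combination e2 - e1
  · have hX' := sub_ne_zero.2 hX
    set ℓ := (Y1 - Y2) / (X1 - X2) with hℓ
    have hl : ℓ * (X1 - X2) = Y1 - Y2 := by rw [hℓ, div_mul_cancel₀ _ hX']
    clear_value ℓ
    have p3 := p1.add_gen hφ p2 hX hl
    refine Or.inr ⟨_, _, p3, hY3 _ _ p3, ?_⟩
    have hl' := congrArg D hl
    simp only [DDer.mul, DDer.sq, DDer.cube, DDer.add, DDer.sub, hα, hβ, e1, e2] at hl' ⊢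
    have k1 : (3 * X1 ^ 2 + 2 * α * X1 + β) - 2 * φ * ℓ * Y1 = (X1 - X2) * (X1 - (φ * ℓ ^ 2 - α - X1 - X2)) := by
      apply mul_left_cancel₀ hX'
      linear_combination q2 - q1 + φ * (ℓ * (X1 - X2) - Y1 - Y2) * hl
    have k2 : (3 * X2 ^ 2 + 2 * α * X2 + β) - 2 * φ * ℓ * Y2 = (X2 - X1) * (X2 - (φ * ℓ ^ 2 - α - X1 - X2)) := by
      apply mul_left_cancel₀ (neg_ne_zero.2 hX')
      linear_combination q1 - q2 - φ * (ℓ * (X2 - X1) - Y1 - Y2) * hl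
    have key : 2 * φ * D ℓ = l1 * (X1 - (φ * ℓ ^ 2 - α - X1 - X2)) + l2 * (X2 - (φ * ℓ ^ 2 - α - X1 - X2)) - D φ * ℓ := by
      apply mul_left_cancel₀ hX'
      linear_combination 2 * φ * hl' + d1 - d2 + l1 * k1 - l2 * k2 + D φ * hl
    linear_combination ℓ * key - l2 * hl

end D3


section D4
open Polynomial
variable {K : Type*} [Field K]

/-- embedding of polynomials in rational functions -/
noncomputable abbrev io : K[X] →+* RatFunc K := algebraMap K[X] (RatFunc K)

lemma io_inj {f g : K[X]} (h : io f = io g) : f = g := RatFunc.algebraMap_injective K h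
lemma io_ne {f : K[X]} (h : f ≠ 0) : io f ≠ 0 := RatFunc.algebraMap_ne_zero h

noncomputable def rd (x : RatFunc K) : RatFunc K :=
  io (derivative x.num * x.denom - x.num * derivative x.denom) / io x.denom ^ 2

lemma rd_div (a b : K[X]) (hb : b ≠ 0) :
    rd (io a / io b) = io (derivative a * b - a * derivative b) / io b ^ 2 := by
  have h := (RatFunc.num_mul_eq_mul_denom_iff (x := io a / io b) (p := a) hb).2 rfl
  unfold rd
  set N := (io a / io b).num
  set M := (io a / io b).denom
  have hM : M ≠ 0 := RatFunc.denom_ne_zero _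
  rw [div_eq_div_iff (pow_ne_zero 2 (io_ne hM)) (pow_ne_zero 2 (io_ne hb)), ← map_pow, ← map_pow, ← map_mul, ← map_mul]
  congr 1
  have h' := congrArg derivative h
  rw [derivative_mul, derivative_mul] at h'
  linear_combination (b * M) * h' - (derivative b * M + derivative M * b) * h

lemma exists_quot (x : RatFunc K) : ∃ a b : K[X], b ≠ 0 ∧ IsCoprime a b ∧ x = io a / io b :=
  ⟨x.num, x.denom, x.denom_ne_zero, x.isCoprime_num_denom, x.num_div_denom.symm⟩

lemma rd_add (x y : RatFunc K) : rd (x + y) = rd x + rd y := by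
  obtain ⟨a, b, hb, -, rfl⟩ := exists_quot x
  obtain ⟨c, d, hd, -, rfl⟩ := exists_quot y
  have hb' := io_ne hb
  have hd' := io_ne hd
  rw [div_add_div _ _ hb' hd', ← map_mul, ← map_mul, ← map_mul, ← map_add, rd_div _ _ (mul_ne_zero hb hd), rd_div _ _ hb, rd_div _ _ hd]
  simp only [map_mul, map_add, map_sub, derivative_mul]
  field_simp
  ring

lemma rd_mul (x y : RatFunc K) : rd (x * y) = x * rd y + y * rd x := by
  obtain ⟨a, b, hb, -, rfl⟩ := exists_quot x
  obtain ⟨c, d, hd, -, rfl⟩ := exists_quot y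
  have hb' := io_ne hb
  have hd' := io_ne hd
  rw [div_mul_div_comm, ← map_mul, ← map_mul, rd_div _ _ (mul_ne_zero hb hd), rd_div _ _ hb, rd_div _ _ hd]
  simp only [map_mul, map_add, map_sub, derivative_mul]
  field_simp
  ring

/-- the derivation of the field of rational functions -/
noncomputable def RD : DDer (RatFunc K) := ⟨rd, rd_add, rd_mul⟩

lemma RD_div (a b : K[X]) (hb : b ≠ 0) :
    RD (io a / io b) = io (derivative a * b - a * derivative b) / io b ^ 2 := rd_div a b hb

lemma RD_io (a : K[X]) : RD (io a) = io (derivative a) := by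
  have := RD_div a 1 one_ne_zero
  simpa using this

open Classical in
noncomputable instance : DecidableEq (RatFunc K) := Classical.decEq _

/-- the curve over the function field -/
noncomputable abbrev TWK (F : K[X]) (α β : K) := TW (io F) (io (C α)) (io (C β))

variable {F : K[X]} {α β : K}

/-- reduced homogeneous `x`-coordinate, with a pole at infinity -/
def XRp (R : (TWK F α β).Point) (a b : K[X]) : Prop :=
  IsCoprime a b ∧ ∃ t, t ≠ 0 ∧ XR R (t * io a) (t * io b)

lemma XRp_exists (hF : F ≠ 0) (R : (TWK F α β).Point) : ∃ a b, XRp R a b := by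
  rcases isPt_or (io_ne hF) R with h | ⟨X, Y, h⟩
  · exact ⟨1, 0, isCoprime_one_left, 1, one_ne_zero, Or.inl ⟨h, by simp, by simp⟩⟩
  · obtain ⟨a, b, hb, hc, rfl⟩ := exists_quot X
    refine ⟨a, b, hc, (io b)⁻¹, inv_ne_zero (io_ne hb), Or.inr ⟨Y, ?_, inv_mul_cancel₀ (io_ne hb)⟩⟩
    rwa [mul_comm, ← div_eq_mul_inv]

lemma XRp_of_isPt {R : (TWK F α β).Point} {X Y : RatFunc K} (h : IsPt R X Y) {a b : K[X]} (hb : b ≠ 0) (hc : IsCoprime a b)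
    (hX : X = io a / io b) : XRp R a b := by
  subst hX
  refine ⟨hc, (io b)⁻¹, inv_ne_zero (io_ne hb), Or.inr ⟨Y, ?_, inv_mul_cancel₀ (io_ne hb)⟩⟩
  rwa [mul_comm, ← div_eq_mul_inv]

lemma XRp.isPt (hF : F ≠ 0) {R : (TWK F α β).Point} {X Y : RatFunc K} (h : IsPt R X Y) {a b : K[X]} (hr : XRp R a b) :
    b ≠ 0 ∧ X = io a / io b := by
  obtain ⟨hc, t, ht, hx⟩ := hr
  obtain ⟨e1, e2⟩ := hx.uniq (io_ne hF) (Or.inr ⟨Y, h, rfl⟩)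
  have hb : b ≠ 0 := by rintro rfl; simp at e2
  refine ⟨hb, ?_⟩
  rw [← e1, eq_div_iff (io_ne hb)]
  linear_combination io a * e2

lemma XRp.uniq (hF : F ≠ 0) {R : (TWK F α β).Point} {a b a' b' : K[X]} (h : XRp R a b) (h' : XRp R a' b') :
    a.natDegree = a'.natDegree ∧ b.natDegree = b'.natDegree := by
  obtain ⟨hc, t, ht, hx⟩ := h
  obtain ⟨hc', t', ht', hx'⟩ := h'
  obtain ⟨e1, e2⟩ := hx.uniq (io_ne hF) hx'
  have e : a * b' = a' * b := by
    apply io_inj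
    rw [map_mul, map_mul]
    apply mul_left_cancel₀ (mul_ne_zero ht ht')
    linear_combination t' * io b' * e1 - t' * io a' * e2
  have A : Associated a a' := associated_of_dvd_dvd (hc.dvd_of_dvd_mul_right ⟨b', e.symm⟩) (hc'.dvd_of_dvd_mul_right ⟨b, e⟩)
  have B : Associated b b' := associated_of_dvd_dvd (hc.symm.dvd_of_dvd_mul_left ⟨a', by rw [e, mul_comm]⟩) (hc'.symm.dvd_of_dvd_mul_left ⟨a, by rw [← e, mul_comm]⟩)
  exact ⟨natDegree_eq_of_degree_eq (degree_eq_degree_of_associated A), natDegree_eq_of_degree_eq (degree_eq_degree_of_associated B)⟩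

/-- `R` has height `n` (and its `x`-coordinate a pole at infinity, or `R = 0`) -/
def HT (R : (TWK F α β).Point) (n : ℕ) : Prop :=
  ∃ a b, XRp R a b ∧ b.degree < a.degree ∧ a.natDegree = n

lemma HT.uniq (hF : F ≠ 0) {R : (TWK F α β).Point} {n n' : ℕ} (h : HT R n) (h' : HT R n') : n = n' := by
  obtain ⟨a, b, h, -, rfl⟩ := h
  obtain ⟨a', b', h', -, rfl⟩ := h'
  exact (h.uniq hF h').1

lemma HT.zero : HT (0 : (TWK F α β).Point) 0 :=
  ⟨1, 0, ⟨isCoprime_one_left, 1, one_ne_zero, Or.inl ⟨rfl, by simp, by simp⟩⟩, by simp, by simp⟩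

lemma HT.neg {R : (TWK F α β).Point} {n : ℕ} (h : HT R n) : HT (-R) n := by
  obtain ⟨a, b, ⟨hc, t, ht, hx⟩, h⟩ := h
  exact ⟨a, b, ⟨hc, t, ht, hx.neg⟩, h⟩

lemma HT.para (hF : F ≠ 0) (h2 : (2 : K) ≠ 0) (hβ : β ≠ 0) (hd : α ^ 2 - 4 * β ≠ 0) {R1 R2 : (TWK F α β).Point} {n1 n2 : ℕ}
    (h1 : HT R1 n1) (h2' : HT R2 n2) : ∃ n3 n4, HT (R1 + R2) n3 ∧ HT (R1 - R2) n4 ∧ n3 + n4 = 2 * (n1 + n2) := by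
  obtain ⟨a1, b1, ⟨c1, t1, ht1, x1⟩, d1, rfl⟩ := h1
  obtain ⟨a2, b2, ⟨c2, t2, ht2, x2⟩, d2, rfl⟩ := h2'
  obtain ⟨a3, b3, c3, t3, ht3, x3⟩ := XRp_exists hF (R1 + R2)
  obtain ⟨a4, b4, c4, t4, ht4, x4⟩ := XRp_exists hF (R1 - R2)
  have cn : ∀ m : ℕ, io (OfNat.ofNat (m+2) : K[X]) = OfNat.ofNat (m+2) := fun m => map_natCast io (m+2)
  have c2' : io (C (2 : K)) = 2 := by rw [show (C (2:K)) = (2:K[X]) from rfl]; exact cn 0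
  have h2L : (2 : RatFunc K) ≠ 0 := by
    rw [← c2']; exact io_ne (C_ne_zero.2 h2)
  have hdL : io (C α) ^ 2 - 4 * io (C β) ≠ 0 := by
    have := io_ne (C_ne_zero.2 hd)
    rwa [C_sub, C_mul, C_pow, map_sub, map_mul, map_pow, show (C (4:K)) = (4 : K[X]) from rfl, cn 2] at this
  obtain ⟨κ, hκ, r0, r1, r2⟩ := para_rel (io_ne hF) h2L (io_ne (C_ne_zero.2 hβ)) hdL x1 x2 x3 x4
  obtain ⟨n, m, hm, -, hmn⟩ := exists_quot (κ * t3 * t4 / (t1 * t2) ^ 2)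
  have h12 : (t1 * t2) ^ 2 ≠ 0 := pow_ne_zero 2 (mul_ne_zero ht1 ht2)
  rw [div_eq_div_iff h12 (io_ne hm)] at hmn
  have hn : n ≠ 0 := by
    rintro rfl
    rw [map_zero, zero_mul] at hmn
    exact mul_ne_zero (mul_ne_zero (mul_ne_zero hκ ht3) ht4) (io_ne hm) hmn
  have key := height_core h2 α β hβ hd a1 b1 a2 b2 a3 b3 a4 b4 m n c1 c2 c3 c4 d1 d2 hm hn ?_ ?_ ?_
  · exact ⟨_, _, ⟨a3, b3, ⟨c3, t3, ht3, x3⟩, key.2.1, rfl⟩, ⟨a4, b4, ⟨c4, t4, ht4, x4⟩, key.2.2, rfl⟩, key.1⟩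
  all_goals
    apply io_inj
    simp only [map_mul, map_add, map_sub, map_pow, cn]
    apply mul_left_cancel₀ h12
  · linear_combination io m * r0 + (io b3 * io b4) * hmn
  · linear_combination io m * r1 + (io a3 * io b4 + io a4 * io b3) * hmn
  · linear_combination io m * r2 + (io a3 * io a4) * hmn

/-- a point with a pole at infinity is not 2-torsion -/
lemma HT.Y_ne (hF : F ≠ 0) {R : (TWK F α β).Point} {n : ℕ} (h : HT R n) {X Y : RatFunc K} (hp : IsPt R X Y) : Y ≠ 0 := by
  rintro rfl
  obtain ⟨a, b, hr, hd, -⟩ := h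
  obtain ⟨hb, rfl⟩ := hr.isPt hF hp
  have e := hp.eqn (io_ne hF)
  have hb' := io_ne hb
  have ha : a ≠ 0 := by rintro rfl; simp at hd
  have e2 : a * (a * a + (C α * (b * a) + C β * (b * b))) = 0 := by
    apply io_inj
    field_simp at e
    simp only [map_mul, map_add, map_zero]
    linear_combination -e
  have e3 := (mul_eq_zero.1 e2).resolve_left ha
  have l1 : (C α * (b * a) + C β * (b * b)).degree < (a * a).degree := by
    refine (degree_add_le _ _).trans_lt (max_lt ?_ ?_)
    · exact (deg_C_mul_le _ _).trans_lt (deg_mul_lt _ _ _ _ hd le_rfl ha)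
    · exact (deg_C_mul_le _ _).trans_lt (deg_mul_lt _ _ _ _ hd hd.le ha)
  have := degree_add_eq_left_of_degree_lt l1
  rw [e3, degree_zero] at this
  exact mul_ne_zero ha ha (degree_eq_bot.1 this.symm)

/-- height + differential, closed under the group law -/
def Good (R : (TWK F α β).Point) (l : RatFunc K) : Prop := (∃ n, HT R n) ∧ Lam RD R l

lemma Good.add (hF : F ≠ 0) (h2 : (2 : K) ≠ 0) (hβ : β ≠ 0) (hd : α ^ 2 - 4 * β ≠ 0) {R1 R2 : (TWK F α β).Point} {l1 l2 : RatFunc K}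
    (g1 : Good R1 l1) (g2 : Good R2 l2) : Good (R1 + R2) (l1 + l2) := by
  obtain ⟨⟨n1, h1⟩, L1⟩ := g1
  obtain ⟨⟨n2, h2'⟩, L2⟩ := g2
  obtain ⟨n3, n4, h3, -, -⟩ := HT.para hF h2 hβ hd h1 h2'
  have h2L : (2 : RatFunc K) ≠ 0 := by
    have := io_ne (C_ne_zero.2 h2)
    rwa [show (C (2:K)) = (2:K[X]) from rfl, show io (2 : K[X]) = 2 from map_natCast io 2] at this
  exact ⟨⟨n3, h3⟩, L1.add (io_ne hF) h2L (by rw [RD_io, derivative_C, map_zero]) (by rw [RD_io, derivative_C, map_zero]) L2 (fun X Y h => h3.Y_ne hF h)⟩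

lemma Good.neg {R : (TWK F α β).Point} {l : RatFunc K} (g : Good R l) : Good (-R) (-l) := by
  obtain ⟨⟨n, h⟩, L⟩ := g
  exact ⟨⟨n, h.neg⟩, L.neg⟩

lemma Good.zero : Good (0 : (TWK F α β).Point) 0 := ⟨⟨0, HT.zero⟩, Or.inl ⟨rfl, rfl⟩⟩

lemma Good.zsmul (hF : F ≠ 0) (h2 : (2 : K) ≠ 0) (hβ : β ≠ 0) (hd : α ^ 2 - 4 * β ≠ 0) {R : (TWK F α β).Point} {l : RatFunc K}
    (g : Good R l) (m : ℤ) : Good (m • R) (m * l) := by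
  have hn : ∀ k : ℕ, Good (k • R) (k * l) := by
    intro k
    induction k with
    | zero => simpa using Good.zero
    | succ k ih =>
      have := ih.add hF h2 hβ hd g
      rw [succ_nsmul]
      convert this using 1
      push_cast; ring
  obtain ⟨k, rfl | rfl⟩ := m.eq_nat_or_neg
  · simpa using hn k
  · simpa using (hn k).neg

end D4


section D5
open Polynomial

lemma lin_rec (g : ℤ → ℤ) (h : ∀ k, g (k + 1) + g (k - 1) = 2 * g k) (h0 : g 0 = 0) (h1 : g 1 = 0) (k : ℤ) : g k = 0 := by
  have key : ∀ n : ℕ, g n = 0 ∧ g (n + 1) = 0 ∧ g (-n) = 0 ∧ g (-n - 1) = 0 := by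
    intro n
    induction n with
    | zero =>
      have := h 0
      refine ⟨by simpa using h0, by simpa using h1, by simpa using h0, ?_⟩
      simp at this ⊢
      omega
    | succ n ih =>
      obtain ⟨i1, i2, i3, i4⟩ := ih
      have e1 := h (n + 1)
      have e2 := h (-n - 1)
      rw [show (n : ℤ) + 1 - 1 = n by ring] at e1
      rw [show -(n : ℤ) - 1 + 1 = -n by ring] at e2
      push_cast
      refine ⟨i2, by omega, by rw [show -((n : ℤ) + 1) = -n - 1 by ring]; exact i4, ?_⟩
      rw [show -((n : ℤ) + 1) - 1 = -n - 1 - 1 by ring]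
      omega
  obtain ⟨n, rfl | rfl⟩ := k.eq_nat_or_neg
  · exact (key n).1
  · exact (key n).2.2.1

lemma quad_form (q : ℤ → ℤ → ℤ)
    (h : ∀ m n m' n', q (m + m') (n + n') + q (m - m') (n - n') = 2 * (q m n + q m' n')) (m n : ℤ) :
    q m n = m ^ 2 * q 1 0 + n ^ 2 * q 0 1 + m * n * (q 1 1 - q 1 0 - q 0 1) := by
  set ψ : ℤ → ℤ → ℤ := fun m n => q m n - (m ^ 2 * q 1 0 + n ^ 2 * q 0 1 + m * n * (q 1 1 - q 1 0 - q 0 1)) with hψ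
  have h0 : q 0 0 = 0 := by have := h 0 0 0 0; simp at this; omega
  have hm : ∀ n k, ψ (k + 1) n + ψ (k - 1) n = 2 * ψ k n := by
    intro n k
    have := h k n 1 0
    simp only [add_zero, sub_zero] at this
    simp only [hψ]
    linear_combination this
  have hn : ∀ m k, ψ m (k + 1) + ψ m (k - 1) = 2 * ψ m k := by
    intro m k
    have := h m k 0 1
    simp only [add_zero, sub_zero] at this
    simp only [hψ]
    linear_combination this
  have z0 : ∀ n, ψ 0 n = 0 := lin_rec (ψ 0) (hn 0) (by simp [hψ, h0]) (by simp [hψ])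
  have z1 : ∀ n, ψ 1 n = 0 := lin_rec (ψ 1) (hn 1) (by simp [hψ]) (by simp [hψ])
  have := lin_rec (fun k => ψ k n) (hm n) (z0 n) (z1 n) m
  simp only [hψ] at this
  linear_combination this

variable {K : Type*} [Field K] {F : K[X]} {α β : K}

lemma height_form (hF : F ≠ 0) (h2 : (2 : K) ≠ 0) (hβ : β ≠ 0) (hd : α ^ 2 - 4 * β ≠ 0) {P Q : (TWK F α β).Point} {l1 l2 : RatFunc K}
    (gP : Good P l1) (gQ : Good Q l2) (hP : HT P 1) (hQ : HT Q 6) :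
    ∃ b : ℤ, ∀ m n : ℤ, ∃ k : ℕ, HT (m • P + n • Q) k ∧ (k : ℤ) = m ^ 2 + b * m * n + 6 * n ^ 2 := by
  have hex : ∀ m n : ℤ, ∃ k, HT (m • P + n • Q) k := fun m n =>
    ((gP.zsmul hF h2 hβ hd m).add hF h2 hβ hd (gQ.zsmul hF h2 hβ hd n)).1
  choose q hq using hex
  have key := quad_form (fun m n => (q m n : ℤ)) (by
    intro m n m' n'
    obtain ⟨n3, n4, h3, h4, e⟩ := HT.para hF h2 hβ hd (hq m n) (hq m' n')
    have e3 : q (m + m') (n + n') = n3 := by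
      apply HT.uniq hF (hq _ _)
      convert h3 using 1
      rw [add_zsmul, add_zsmul]; abel
    have e4 : q (m - m') (n - n') = n4 := by
      apply HT.uniq hF (hq _ _)
      convert h4 using 1
      rw [sub_zsmul, sub_zsmul]; abel
    simp only [e3, e4]
    exact_mod_cast e)
  have e1 : q 1 0 = 1 := HT.uniq hF (hq 1 0) (by simpa using hP)
  have e2 : q 0 1 = 6 := HT.uniq hF (hq 0 1) (by simpa using hQ)
  refine ⟨(q 1 1 : ℤ) - 1 - 6, fun m n => ⟨q m n, hq m n, ?_⟩⟩
  have := key m n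
  simp only [e1, e2] at this
  push_cast at this
  linear_combination this

/-- the bound on the middle coefficient -/
lemma b_bound (b : ℤ) (h : ∀ m n : ℤ, ∃ k : ℕ, (k : ℤ) = m ^ 2 + b * m * n + 6 * n ^ 2) : |b| ≤ 4 := by
  obtain ⟨k1, h1⟩ := h 5 2
  obtain ⟨k2, h2⟩ := h 5 (-2)
  rw [abs_le]
  constructor <;> omega

lemma FP_eq (s : K) : FP s = X ^ 3 + C 12 * X ^ 2 + C (18 - 12 * s) * X := by
  unfold FP
  rw [show (C (12:K)) = (12:K[X]) from rfl]
  ring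

lemma FP_ne (s : K) : FP s ≠ 0 := by
  intro h
  have := FP_natDegree s
  rw [h] at this
  simp at this

lemma disc_ne (h2 : (2 : K) ≠ 0) (h3 : (3 : K) ≠ 0) (s : K) (hs : s ^ 2 = 2) : (12 : K) ^ 2 - 4 * (18 - 12 * s) ≠ 0 := by
  intro h
  have h1 : (2 * 2 * 2 * 3) * (3 + 2 * s) = 0 := by linear_combination h
  have h4 : 3 + 2 * s = 0 := (mul_eq_zero.1 h1).resolve_left (by simp [h2, h3])
  apply one_ne_zero (α := K)
  linear_combination (3 - 2 * s) * h4 + 4 * hs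

lemma cnum (m : ℕ) : io (OfNat.ofNat (m+2) : K[X]) = OfNat.ofNat (m+2) := map_natCast io (m+2)

lemma two_ne_RF (h2 : (2 : K) ≠ 0) : (2 : RatFunc K) ≠ 0 := by
  have := io_ne (C_ne_zero.2 h2)
  rwa [show (C (2:K)) = (2:K[X]) from rfl, show io (2 : K[X]) = 2 from map_natCast io 2] at this

lemma disc_ne_RF {α β : K} (hd : α ^ 2 - 4 * β ≠ 0) : io (C α) ^ 2 - 4 * io (C β) ≠ 0 := by
  have := io_ne (C_ne_zero.2 hd)
  rwa [C_sub, C_mul, C_pow, map_sub, map_mul, map_pow, show (C (4:K)) = (4 : K[X]) from rfl, cnum 2] at this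

/-- a point from polynomial data -/
lemma pt_exists (h2 : (2 : K) ≠ 0) (h3 : (3 : K) ≠ 0) (s : K) (hs : s ^ 2 = 2) (x y : RatFunc K)
    (h : io (FP s) * y ^ 2 = x ^ 3 + io (C 12) * x ^ 2 + io (C (18 - 12 * s)) * x) :
    ∃ R : (TWK (FP s) 12 (18 - 12 * s)).Point, IsPt R x y :=
  isPt_exists (io_ne (FP_ne s)) (two_ne_RF h2) (io_ne (C_ne_zero.2 (beta_ne h2 h3 s hs))) (disc_ne_RF (disc_ne h2 h3 s hs)) x y h

lemma P_exists (h2 : (2 : K) ≠ 0) (h3 : (3 : K) ≠ 0) (s : K) (hs : s ^ 2 = 2) :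
    ∃ P : (TWK (FP s) 12 (18 - 12 * s)).Point, IsPt P (io X) 1 ∧ Good P 1 ∧ HT P 1 := by
  obtain ⟨P, hP⟩ := pt_exists h2 h3 s hs (io X) 1 (by
    rw [one_pow, mul_one, FP_eq]; simp only [map_add, map_mul, map_pow])
  have hH : HT P 1 := ⟨X, 1, XRp_of_isPt hP one_ne_zero isCoprime_one_right (by simp), by simp, by simp⟩
  refine ⟨P, hP, ⟨⟨1, hH⟩, Or.inr ⟨_, _, hP, one_ne_zero, ?_⟩⟩, hH⟩
  rw [RD_io]; simp

lemma ez_coprime (h2 : (2 : K) ≠ 0) (h3 : (3 : K) ≠ 0) (s : K) (hs : s ^ 2 = 2) :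
    IsCoprime (ezq X (C s) * ezg X (C s) ^ 2 : K[X]) (-6 * X * ezh X (C s) ^ 2) := by
  have lin : ∀ (c : K) (f : K[X]), f.eval c ≠ 0 → IsCoprime f (X - C c) := by
    intro c f hf
    refine IsCoprime.symm ((irreducible_X_sub_C c).coprime_iff_not_dvd.2 ?_)
    rw [dvd_iff_isRoot]; exact hf
  set V : K[X] := ezq X (C s) * ezg X (C s) ^ 2 with hV
  have ev : ∀ c : K, V.eval c = ezq c s * ezg c s ^ 2 := by
    intro c; simp [hV, ezq, ezg]
  have hs0 : s ≠ 0 := by rintro rfl; apply h2; rw [← hs]; ring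
  have h32 : 3 + 2 * s ≠ 0 := by
    intro h4
    apply one_ne_zero (α := K)
    linear_combination (3 - 2 * s) * h4 + 4 * hs
  have hb := beta_ne h2 h3 s hs
  have e0 : IsCoprime V X := by
    have := lin 0 V (by
      rw [ev, show ezq 0 s = 18 - 12 * s by simp [ezq], show ezg 0 s = 18 - 12 * s by simp [ezg]]
      exact mul_ne_zero hb (pow_ne_zero _ hb))
    simpa using this
  have e1 : IsCoprime V (X - C (3 * s)) := lin _ V (by
    rw [ev, show ezq (3 * s) s = 2 * 2 * 3 * (3 + 2 * s) by unfold ezq; linear_combination 9 * hs,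
      show ezg (3 * s) s = 2 * 2 * 2 * 3 * s by unfold ezg; linear_combination (-9) * hs]
    simp [h2, h3, hs0, h32])
  have e2 : IsCoprime V (X - C (3 * s - 4)) := lin _ V (by
    have h34 : 3 * s - 4 ≠ 0 := by
      intro h; apply h2; linear_combination (3 * s + 4) * h - 9 * hs
    rw [ev, show ezq (3 * s - 4) s = 2 * 2 by unfold ezq; linear_combination 9 * hs,
      show ezg (3 * s - 4) s = 2 * 2 * 2 * (3 * s - 4) by unfold ezg; linear_combination (-9) * hs]
    simp [h2, h34])
  have e3 : ezh X (C s) = (X - C (3 * s)) * (X - C (3 * s - 4)) := by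
    unfold ezh; simp only [C_mul, C_sub, show (C (3:K)) = (3:K[X]) from rfl, show (C (4:K)) = (4:K[X]) from rfl]; ring
  have e6 : IsCoprime V (-6 : K[X]) := by
    have : IsUnit (-6 : K[X]) := by
      rw [show (-6 : K[X]) = C (-6 : K) by rw [C_neg]; rfl, isUnit_C, isUnit_iff_ne_zero, neg_ne_zero,
        show (6 : K) = 2 * 3 by norm_num]
      exact mul_ne_zero h2 h3
    obtain ⟨u, hu⟩ := this
    exact ⟨0, (u⁻¹ : K[X]ˣ), by rw [← hu]; simp⟩
  rw [e3]
  exact (e6.mul_right e0).mul_right ((e1.mul_right e2).pow_right)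

lemma Q_exists (h2 : (2 : K) ≠ 0) (h3 : (3 : K) ≠ 0) (s : K) (hs : s ^ 2 = 2) (c : K) (hc : c ^ 2 = -6) :
    ∃ Q : (TWK (FP s) 12 (18 - 12 * s)).Point, Good Q (io (C c)) ∧ HT Q 6 := by
  have hc0 : c ≠ 0 := by
    rintro rfl
    exact mul_ne_zero h2 h3 (by linear_combination hc)
  have hcc : io (C c) ^ 2 = -6 := by
    rw [← map_pow, ← C_pow, hc, C_neg, map_neg, show (C (6:K)) = (6:K[X]) from rfl, cnum 4]
  have hcL : io (C c) ≠ 0 := io_ne (C_ne_zero.2 hc0)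
  have hsX : (C s : K[X]) ^ 2 = 2 := by rw [← C_pow, hs]; rfl
  have id1 := ez_id (X : K[X]) (C s) hsX
  have id2 := ez_wron (X : K[X]) (C s) hsX
  have cop := ez_coprime h2 h3 s hs
  set V : K[X] := ezq X (C s) * ezg X (C s) ^ 2 with hV
  set U : K[X] := -6 * X * ezh X (C s) ^ 2 with hU
  have dq : (ezq X (C s) : K[X]).Monic ∧ (ezq X (C s) : K[X]).natDegree = 2 := by
    have : (ezq X (C s) : K[X]) = X ^ 2 + (C 12 * X + C (18 - 12 * s)) := by
      unfold ezq; simp only [C_mul, C_sub, show (C (12:K)) = (12:K[X]) from rfl, show (C (18:K)) = (18:K[X]) from rfl]; ring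
    rw [this]
    have hl : (C 12 * X + C (18 - 12 * s) : K[X]).degree < (2 : ℕ) := degree_linear_lt
    exact ⟨monic_X_pow_add hl, by rw [natDegree_add_eq_left_of_degree_lt (by rwa [degree_X_pow]), natDegree_X_pow]⟩
  have dg : (ezg X (C s) : K[X]).Monic ∧ (ezg X (C s) : K[X]).natDegree = 2 := by
    have : (ezg X (C s) : K[X]) = X ^ 2 + (C (12 - 6 * s) * X + C (18 - 12 * s)) := by
      unfold ezg; simp only [C_mul, C_sub, show (C (12:K)) = (12:K[X]) from rfl, show (C (6:K)) = (6:K[X]) from rfl, show (C (18:K)) = (18:K[X]) from rfl]; ring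
    rw [this]
    have hl : (C (12 - 6 * s) * X + C (18 - 12 * s) : K[X]).degree < (2 : ℕ) := degree_linear_lt
    exact ⟨monic_X_pow_add hl, by rw [natDegree_add_eq_left_of_degree_lt (by rwa [degree_X_pow]), natDegree_X_pow]⟩
  have e3 : (ezh X (C s) : K[X]) = (X - C (3 * s)) * (X - C (3 * s - 4)) := by
    unfold ezh; simp only [C_mul, C_sub, show (C (3:K)) = (3:K[X]) from rfl, show (C (4:K)) = (4:K[X]) from rfl]; ring
  have dh : (ezh X (C s) : K[X]).Monic ∧ (ezh X (C s) : K[X]).natDegree = 2 := by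
    rw [e3]
    exact ⟨(monic_X_sub_C _).mul (monic_X_sub_C _), by rw [(monic_X_sub_C _).natDegree_mul (monic_X_sub_C _), natDegree_X_sub_C, natDegree_X_sub_C]⟩
  have dV : V.natDegree = 6 := by
    rw [hV, dq.1.natDegree_mul (dg.1.pow 2), dg.1.natDegree_pow, dq.2, dg.2]
  have V0 : V ≠ 0 := (dq.1.mul (dg.1.pow 2)).ne_zero
  have h6 : (-6 : K) ≠ 0 := by
    rw [neg_ne_zero, show (6 : K) = 2 * 3 by norm_num]
    exact mul_ne_zero h2 h3
  have U0 : U ≠ 0 := by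
    rw [hU, show (-6 : K[X]) = C (-6 : K) by rw [C_neg]; rfl]
    exact mul_ne_zero (mul_ne_zero (C_ne_zero.2 h6) X_ne_zero) (dh.1.pow 2).ne_zero
  have dU : U.natDegree = 5 := by
    rw [hU, show (-6 : K[X]) = C (-6 : K) by rw [C_neg]; rfl, mul_assoc, natDegree_C_mul h6, monic_X.natDegree_mul (dh.1.pow 2), dh.1.natDegree_pow, dh.2, natDegree_X]
  have wr : derivative V * U - V * derivative U = -(6 * ezg X (C s) * ezh X (C s) * ezz X (C s)) := by
    have hV' : derivative V = (2*X+12)*(ezg X (C s))^2+2*ezq X (C s)*ezg X (C s)*(2*X+12-6*C s) := by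
      simp only [hV, ezq, ezg, derivative_mul, derivative_pow, derivative_add, derivative_sub, derivative_X, derivative_C, derivative_ofNat]
      push_cast; simp only [map_ofNat, C_ofNat]; ring
    have hU' : derivative U = (-6*((ezh X (C s))^2+2*X*ezh X (C s)*(2*X+4-6*C s))) := by
      simp only [hU, ezh, derivative_mul, derivative_pow, derivative_add, derivative_sub, derivative_X, derivative_C, derivative_ofNat, derivative_neg]
      push_cast; simp only [map_ofNat, C_ofNat]; ring
    rw [hV', hU']
    linear_combination -id2
  have U0' := io_ne U0
  have id1' := congrArg io id1
  have hFq : FP s = X * ezq X (C s) := by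
    unfold FP ezq
    simp only [C_mul, C_sub, show (C (12:K)) = (12:K[X]) from rfl, show (C (18:K)) = (18:K[X]) from rfl]
  obtain ⟨Q, hQ⟩ := pt_exists h2 h3 s hs (io V / io U) (RD (io V / io U) / io (C c)) (by
    rw [RD_div _ _ U0, wr, div_pow, hcc, hFq]
    have cC : io (C (12 : K)) = 12 := by rw [show (C (12:K)) = (12:K[X]) from rfl]; exact cnum 10
    have cB : io (C (18 - 12 * s)) = 18 - 12 * io (C s) := by
      simp only [C_mul, C_sub, show (C (12:K)) = (12:K[X]) from rfl, show (C (18:K)) = (18:K[X]) from rfl, map_sub, map_mul, map_ofNat]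
    rw [cC, cB]
    have h6L : (6 : RatFunc K) ≠ 0 := by
      rw [← cnum 4, show (6:K[X]) = C 6 from rfl]; exact io_ne (C_ne_zero.2 (neg_ne_zero.1 h6))
    simp only [map_sub, map_add, map_mul, map_pow, map_ofNat] at id1'
    have hUi : io U = -6 * io X * io (ezh X (C s)) ^ 2 := by
      simp only [hU, map_mul, map_pow, map_neg, map_ofNat]
    have hVi : io V = io (ezq X (C s)) * io (ezg X (C s)) ^ 2 := by
      simp only [hV, map_mul, map_pow]
    simp only [map_neg, map_mul, map_ofNat]
    have main : io X * io (ezq X (C s)) * (6 * io (ezg X (C s)) * io (ezh X (C s)) * io (ezz X (C s))) ^ 2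
       = -6 * io U * (io V ^ 3 + 12 * io V ^ 2 * io U + (18 - 12 * io (C s)) * io V * io U ^ 2) := by
      have e : (io (ezz X (C s))) ^ 2 = io V ^ 2 + 12 * io V * io U + (18 - 12 * io (C s)) * io U ^ 2 := by
        rw [id1', hUi]; ring
      have e2 : 36 * io X * io (ezq X (C s)) * io (ezg X (C s)) ^ 2 * io (ezh X (C s)) ^ 2 = -6 * io U * io V := by
        rw [hUi, hVi]; ring
      linear_combination (io V * io U * (-6)) * e + (io (ezz X (C s))) ^ 2 * e2
    field_simp
    field_simp at main
    linear_combination (-1) * main)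
  have hdeg : U.degree < V.degree := degree_lt_degree (by omega)
  have hH : HT Q 6 := ⟨V, U, XRp_of_isPt hQ U0 cop rfl, hdeg, dV⟩
  refine ⟨Q, ⟨⟨6, hH⟩, Or.inr ⟨_, _, hQ, hH.Y_ne (FP_ne s) hQ, ?_⟩⟩, hH⟩
  rw [mul_div_cancel₀ _ hcL]

end D5


section D6
open Polynomial

lemma FP_sqf {K : Type*} [Field K] (h2 : (2 : K) ≠ 0) (h3 : (3 : K) ≠ 0) (s : K) (hs : s ^ 2 = 2) : Squarefree (FP s) := by
  apply Separable.squarefree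
  have hb := beta_ne h2 h3 s hs
  have hd := disc_ne h2 h3 s hs
  rw [separable_def, FP_eq]
  generalize 18 - 12 * s = b at *
  generalize (12 : K) = a at *
  have hD : b ^ 2 * (a ^ 2 - 4 * b) ≠ 0 := mul_ne_zero (pow_ne_zero 2 hb) hd
  have e : (C (-6*(a^2-3*b)) * X + C (a*(15*b-4*a^2))) * (X^3+C a*X^2+C b*X) +
    (C (2*(a^2-3*b)) * X^2 + C (a*(2*a^2-7*b)) * X + C (b*(a^2-4*b))) * derivative (X^3+C a*X^2+C b*X) = C (b ^ 2 * (a ^ 2 - 4 * b)) := by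
    simp only [derivative_add, derivative_mul, derivative_C, derivative_X_pow, derivative_X, C_mul, C_sub, C_neg, C_pow,
      show (C (2:K)) = (2:K[X]) from rfl, show (C (3:K)) = (3:K[X]) from rfl, show (C (4:K)) = (4:K[X]) from rfl, show (C (6:K)) = (6:K[X]) from rfl, show (C (7:K)) = (7:K[X]) from rfl, show (C (15:K)) = (15:K[X]) from rfl]
    push_cast
    simp only [map_ofNat]
    ring
  refine ⟨C (b ^ 2 * (a ^ 2 - 4 * b))⁻¹ * (C (-6*(a^2-3*b)) * X + C (a*(15*b-4*a^2))), C (b ^ 2 * (a ^ 2 - 4 * b))⁻¹ * (C (2*(a^2-3*b)) * X^2 + C (a*(2*a^2-7*b)) * X + C (b*(a^2-4*b))), ?_⟩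
  rw [mul_assoc, mul_assoc, ← mul_add, e, ← C_mul, inv_mul_cancel₀ hD, C_1]

lemma dvd_deriv_zero {K : Type*} [Field K] {f : K[X]} (h : f ∣ derivative f) : derivative f = 0 := by
  by_contra h0
  have hf : f ≠ 0 := by rintro rfl; simp at h0
  exact absurd (degree_le_of_dvd h h0) (not_le.2 (degree_derivative_lt hf))

lemma lam0_deriv {K : Type*} [Field K] {F : K[X]} {α β : K} (hF : F ≠ 0) {R : (TWK F α β).Point} {n : ℕ}
    (hg : Good R 0) (hn : HT R n) (h0 : n ≠ 0) :
    ∃ N M : K[X], ∃ Y, IsPt R (io N / io M) Y ∧ M ≠ 0 ∧ M.degree < N.degree ∧ N.natDegree = n ∧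
      derivative N = 0 ∧ derivative M = 0 := by
  have hR : R ≠ 0 := by
    rintro rfl
    exact h0 (hn.uniq hF HT.zero)
  obtain ⟨N, M, hx, hlt, hN⟩ := hn
  obtain ⟨-, hl⟩ := hg
  rcases hl with hl | ⟨X', Y, hp, hY, hD⟩
  · exact absurd hl.1 hR
  obtain ⟨hM, rfl⟩ := hx.isPt hF hp
  have hc : IsCoprime N M := hx.1
  rw [zero_mul, RD_div _ _ hM, div_eq_zero_iff, or_iff_left (pow_ne_zero 2 (io_ne hM))] at hD
  have h1 : derivative N * M = N * derivative M := by
    have := io_inj (hD.trans (map_zero io).symm)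
    linear_combination this
  refine ⟨N, M, Y, hp, hM, hlt, hN, dvd_deriv_zero ?_, dvd_deriv_zero ?_⟩
  · exact hc.dvd_of_dvd_mul_right ⟨_, h1⟩
  · exact hc.symm.dvd_of_dvd_mul_left ⟨derivative N, by rw [← h1, mul_comm]⟩

variable {p : ℕ} [Fact p.Prime]

lemma lam0_dvd {F : (ZMod p)[X]} {α β : ZMod p} (hF : F ≠ 0) {R : (TWK F α β).Point} {n : ℕ}
    (hg : Good R 0) (hn : HT R n) : p ∣ n := by
  by_cases h0 : n = 0
  · simp [h0]
  obtain ⟨N, M, Y, -, -, -, rfl, hN, -⟩ := lam0_deriv hF hg hn h0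
  have hp0 : p ≠ 0 := (Fact.out : p.Prime).ne_zero
  rw [← expand_contract p hN hp0, natDegree_expand]
  exact dvd_mul_left _ _

lemma sqrt_poly {K : Type*} [Field K] {r : RatFunc K} {f : K[X]} (h : r ^ 2 = io f) : ∃ r0 : K[X], r = io r0 := by
  obtain ⟨a, b, hb, hc, rfl⟩ := exists_quot r
  rw [div_pow, div_eq_iff (pow_ne_zero 2 (io_ne hb)), ← map_pow, ← map_pow, ← map_mul] at h
  have h' := io_inj h
  have hu : IsUnit b := by
    have : IsCoprime (b ^ 2) (a ^ 2) := (hc.symm).pow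
    have h3 : IsUnit (b ^ 2) := this.isUnit_of_dvd' dvd_rfl ⟨f, by rw [h', mul_comm]⟩
    exact isUnit_of_dvd_unit (dvd_pow_self b two_ne_zero) h3
  obtain ⟨u, rfl⟩ := hu
  refine ⟨a * (u⁻¹ : K[X]ˣ), ?_⟩
  rw [div_eq_iff (io_ne hb), ← map_mul, mul_assoc, Units.inv_mul, mul_one]

lemma coeff_cmp {K : Type*} [Field K] (h2 : (2 : K) ≠ 0) (h3 : (3 : K) ≠ 0) (h17 : (17 : K) ≠ 0) (h23 : (23 : K) ≠ 0)
    (s : K) (hs : s ^ 2 = 2) (u v k : K) (hu : u ≠ 0)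
    (h : (C u * X + C v) ^ 3 + C 12 * (C u * X + C v) ^ 2 + C (18 - 12 * s) * (C u * X + C v) = C k * FP s) : u = 1 ∧ v = 0 := by
  have e1 : (C u * X + C v) ^ 3 + C 12 * (C u * X + C v) ^ 2 + C (18 - 12 * s) * (C u * X + C v) =
     C (u ^ 3) * X ^ 3 + C (3 * u ^ 2 * v + 12 * u ^ 2) * X ^ 2 + C (3 * u * v ^ 2 + 24 * u * v + (18 - 12 * s) * u) * X + C (v ^ 3 + 12 * v ^ 2 + (18 - 12 * s) * v) := by
    generalize 18 - 12 * s = b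
    simp only [C_mul, C_add, C_pow, show (C (12:K)) = (12:K[X]) from rfl, show (C (3:K)) = (3:K[X]) from rfl, show (C (24:K)) = (24:K[X]) from rfl]
    ring
  have e2 : C k * FP s = C k * X ^ 3 + C (12 * k) * X ^ 2 + C ((18 - 12 * s) * k) * X + C 0 := by
    rw [FP_eq]
    generalize 18 - 12 * s = b
    simp only [C_mul, C_0]
    ring
  rw [e1, e2] at h
  have c (i : ℕ) := congrArg (fun q => coeff q i) h
  have c0 := c 0
  have c1 := c 1
  have c2 := c 2
  have c3 := c 3
  simp only [coeff_add, coeff_C_mul, coeff_X_pow, coeff_X, coeff_C] at c0 c1 c2 c3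
  norm_num at c0 c1 c2 c3
  have hv : v = 4 * (u - 1) := by
    have : 3 * u ^ 2 * (v - 4 * (u - 1)) = 0 := by linear_combination c2 - 12 * c3
    have h' := (mul_eq_zero.1 this).resolve_left (mul_ne_zero h3 (pow_ne_zero 2 hu))
    linear_combination h'
  subst hv
  have h5 : (5 + 2 * s) ≠ 0 := by
    intro h5; apply h17; linear_combination (5 - 2 * s) * h5 + 4 * hs
  have : u * (2 * 3 * (5 + 2 * s)) * ((u - 1) * (u + 1)) = 0 := by
    linear_combination c1 - (18 - 12 * s) * c3
  have := (mul_eq_zero.1 this).resolve_left (mul_ne_zero hu (mul_ne_zero (mul_ne_zero h2 h3) h5))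
  rcases mul_eq_zero.1 this with h1 | h1
  · have : u = 1 := by linear_combination h1
    subst this; simp
  · have : u = -1 := by linear_combination h1
    subst this
    exfalso
    have h6 : 2 * 2 * 2 * 2 * (7 + 6 * s) = 0 := by linear_combination c0
    have h7 := (mul_eq_zero.1 h6).resolve_left (by simp [h2])
    apply h23
    linear_combination (6 * s - 7) * h7 - 36 * hs

lemma lam0_frob (hp : 3 < p) (hp17 : p ≠ 17) (hp23 : p ≠ 23) (s : ZMod p) (hs : s ^ 2 = 2)
    {R : (TWK (FP s) 12 (18 - 12 * s)).Point} (hg : Good R 0) (hn : HT R p) :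
    IsPt R (io (X ^ p)) (io (FP s ^ ((p - 1) / 2))) ∨ IsPt (-R) (io (X ^ p)) (io (FP s ^ ((p - 1) / 2))) := by
  have pp : p.Prime := Fact.out
  obtain ⟨h2, h3⟩ := two_three_ne p hp
  have hq (q : ℕ) (hq : q.Prime) (hne : p ≠ q) : (q : ZMod p) ≠ 0 := by
    rw [Ne, ZMod.natCast_eq_zero_iff]
    intro h
    exact hne ((Nat.prime_dvd_prime_iff_eq pp hq).1 h)
  have h17 : (17 : ZMod p) ≠ 0 := by exact_mod_cast hq 17 (by norm_num) hp17
  have h23 : (23 : ZMod p) ≠ 0 := by exact_mod_cast hq 23 (by norm_num) hp23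
  have hF := FP_ne s
  obtain ⟨N, M, Y, hpt, hM, hlt, hN, hN', hM'⟩ := lam0_deriv hF hg hn pp.ne_zero
  obtain ⟨m, rfl⟩ : ∃ m, M = C m := by
    have e := expand_contract p hM' pp.ne_zero
    have hd : (contract p M).natDegree = 0 := by
      have h1 : M.natDegree < p := lt_of_lt_of_eq (natDegree_lt_natDegree hM hlt) hN
      rw [← e, natDegree_expand] at h1
      by_contra h0
      nlinarith [Nat.pos_of_ne_zero h0]
    rw [eq_C_of_natDegree_eq_zero hd, expand_C] at e
    exact ⟨_, e.symm⟩
  have hm : m ≠ 0 := by rintro rfl; simp at hM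
  have eN := expand_contract p hN' pp.ne_zero
  have d1 : (contract p N).natDegree = 1 := by
    rw [← eN, natDegree_expand] at hN
    exact Nat.eq_of_mul_eq_mul_right pp.pos (by rw [hN, one_mul])
  obtain ⟨u0, hu0, v0, huv⟩ := natDegree_eq_one.1 d1
  set u := m⁻¹ * u0 with hu
  set v := m⁻¹ * v0 with hv
  have hu' : u ≠ 0 := mul_ne_zero (inv_ne_zero hm) hu0
  clear_value u v
  set G : (ZMod p)[X] := C u * X + C v with hG
  have eG : io N / io (C m) = io (G ^ p) := by
    rw [div_eq_iff (io_ne hM), ← map_mul]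
    congr 1
    rw [← ZMod.expand_card, ← eN, ← huv, hG, hu, hv, ← expand_C p m, ← map_mul]
    congr 1
    simp only [C_mul]
    have : (C m⁻¹ * C m : (ZMod p)[X]) = 1 := by rw [← C_mul, inv_mul_cancel₀ hm, C_1]
    linear_combination (-(C u0 * X + C v0)) * this
  rw [eG] at hpt
  set g := G ^ 3 + C 12 * G ^ 2 + C (18 - 12 * s) * G with hgdef
  have hFL := io_ne hF
  have eq1 : io (FP s) * Y ^ 2 = io (g ^ p) := by
    rw [hpt.eqn hFL]
    have e : g ^ p = (G ^ p) ^ 3 + C 12 * (G ^ p) ^ 2 + C (18 - 12 * s) * G ^ p := by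
      rw [← ZMod.expand_card, ← ZMod.expand_card, hgdef]
      simp only [map_add, map_mul, map_pow, expand_C]
    rw [e, map_add, map_add, map_mul, map_mul, map_pow io (G ^ p) 3, map_pow io (G ^ p) 2]
  have hGd : G.natDegree = 1 := natDegree_linear hu'
  have hgd : g.natDegree = 3 := by
    have : g = C (u ^ 3) * X ^ 3 + C (3 * u ^ 2 * v + 12 * u ^ 2) * X ^ 2 + C (3 * u * v ^ 2 + 24 * u * v + (18 - 12 * s) * u) * X + C (v ^ 3 + 12 * v ^ 2 + (18 - 12 * s) * v) := by
      rw [hgdef, hG]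
      generalize 18 - 12 * s = b
      simp only [C_mul, C_add, C_pow, show (C (12:ZMod p)) = (12:(ZMod p)[X]) from rfl, show (C (3:ZMod p)) = (3:(ZMod p)[X]) from rfl, show (C (24:ZMod p)) = (24:(ZMod p)[X]) from rfl]
      ring
    rw [this]
    exact natDegree_cubic (pow_ne_zero 3 hu')
  have hg0 : g ≠ 0 := by intro h; rw [h] at hgd; simp at hgd
  have hgL := io_ne hg0
  obtain ⟨n, hpn⟩ : ∃ n, p = 2 * n + 1 := pp.odd_of_ne_two (by omega)
  have hn2 : (p - 1) / 2 = n := by omega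
  have r2 : (io (FP s) * Y / io g ^ n) ^ 2 = io (FP s * g) := by
    have : io (FP s) * Y ^ 2 = (io g ^ n) ^ 2 * io g := by
      rw [eq1, map_pow, ← pow_mul, ← pow_succ, show n * 2 + 1 = p by omega]
    rw [div_pow, div_eq_iff (pow_ne_zero 2 (pow_ne_zero n hgL)), map_mul]
    linear_combination io (FP s) * this
  obtain ⟨r0, hr0⟩ := sqrt_poly r2
  rw [hr0, ← map_pow] at r2
  have r2' := io_inj r2
  have hdv : FP s ∣ r0 := ((FP_sqf h2 h3 s hs).dvd_pow_iff_dvd two_ne_zero).1 ⟨g, r2'⟩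
  obtain ⟨k, rfl⟩ := hdv
  have hgk : g = FP s * k ^ 2 := by
    apply mul_left_cancel₀ hF
    rw [← r2']; ring
  have hk0 : k ≠ 0 := by rintro rfl; simp at hgk; exact hg0 hgk
  have hkd : k.natDegree = 0 := by
    have := congrArg natDegree hgk
    rw [natDegree_mul hF (pow_ne_zero 2 hk0), FP_natDegree, natDegree_pow, hgd] at this
    omega
  rw [eq_C_of_natDegree_eq_zero hkd, ← C_pow, mul_comm] at hgk
  obtain ⟨rfl, rfl⟩ := coeff_cmp h2 h3 h17 h23 s hs u v _ hu' hgk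
  have hGX : G = X := by rw [hG]; simp
  have hgF : g = FP s := by rw [hgdef, hGX, FP_eq]
  rw [hGX] at hpt
  rw [hgF] at eq1
  rw [hn2]
  have hY2 : Y ^ 2 = io (FP s ^ n) ^ 2 := by
    apply mul_left_cancel₀ hFL
    rw [eq1, map_pow, map_pow, ← pow_mul, ← pow_succ', show n * 2 + 1 = p by omega]
  rcases sq_eq_sq_iff_eq_or_eq_neg.1 hY2 with h | h
  · left; rwa [h] at hpt
  · right
    have := hpt.neg
    rwa [h, neg_neg] at this

end D6


section D7
open Polynomial

/-- monic polynomial with prescribed simple roots -/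
noncomputable def PS {K : Type*} [Field K] (S : Finset K) : K[X] := ∏ b ∈ S, (X - C b)

section
variable {K : Type*} [Field K]

lemma PS_monic (S : Finset K) : (PS S).Monic := monic_prod_X_sub_C _ _

lemma PS_natDegree (S : Finset K) : (PS S).natDegree = S.card := by
  unfold PS
  rw [natDegree_prod_of_monic _ _ (fun b _ => monic_X_sub_C b)]
  simp

lemma PS_dvd (S : Finset K) (f : K[X]) (h : ∀ b ∈ S, f.eval b = 0) : PS S ∣ f := by
  unfold PS
  refine Finset.prod_dvd_of_coprime ?_ ?_
  · intro b _ c _ hbc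
    exact pairwise_coprime_X_sub_C Function.injective_id hbc
  · intro b hb
    exact dvd_iff_isRoot.2 (h b hb)

lemma PS_cop (S : Finset K) (f : K[X]) (h : ∀ b ∈ S, f.eval b ≠ 0) : IsCoprime f (PS S) := by
  unfold PS
  refine IsCoprime.prod_right ?_
  intro b hb
  refine IsCoprime.symm ((irreducible_X_sub_C b).coprime_iff_not_dvd.2 ?_)
  rw [dvd_iff_isRoot]; exact h b hb

lemma PS_eval (S : Finset K) (b : K) (hb : b ∈ S) : (PS S).eval b = 0 := by
  unfold PS
  rw [eval_prod]
  exact Finset.prod_eq_zero hb (by simp)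
end

variable {p : ℕ} [Fact p.Prime]

lemma PS_univ : PS (univ : Finset (ZMod p)) = X ^ p - X := by
  have pp : p.Prime := Fact.out
  have hm : (X ^ p - X : (ZMod p)[X]).Monic := by
    apply monic_X_pow_sub
    rw [degree_X]
    exact_mod_cast pp.one_lt
  symm
  refine eq_of_monic_of_dvd_of_natDegree_le (PS_monic _) hm (PS_dvd _ _ ?_) ?_
  · intro b _
    simp [ZMod.pow_card]
  · rw [PS_natDegree, FiniteField.X_pow_card_sub_X_natDegree_eq _ pp.one_lt]
    simp [ZMod.card]

/-- points where the Frobenius-type symbol takes the value `e` -/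
noncomputable def SS (s e : ZMod p) : Finset (ZMod p) := univ.filter (fun b => ((FP s).eval b) ^ ((p - 1) / 2) = e)

lemma FP_pow_cases (hp : 3 < p) (s b : ZMod p) : ((FP s).eval b) ^ ((p - 1) / 2) = 1 ∨ ((FP s).eval b) ^ ((p - 1) / 2) = -1 ∨
    ((FP s).eval b) ^ ((p - 1) / 2) = 0 := by
  have pp : p.Prime := Fact.out
  by_cases h : (FP s).eval b = 0
  · right; right
    rw [h, zero_pow (by omega)]
  · have h1 := ZMod.pow_card_sub_one_eq_one h
    obtain ⟨n, hpn⟩ : ∃ n, p = 2 * n + 1 := pp.odd_of_ne_two (by omega)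
    have hn2 : (p - 1) / 2 = n := by omega
    rw [show p - 1 = n * 2 by omega, pow_mul] at h1
    rw [hn2]
    rcases sq_eq_sq_iff_eq_or_eq_neg.1 (h1.trans (one_pow 2).symm) with h | h
    · exact Or.inl h
    · exact Or.inr (Or.inl h)

lemma SS_split (hp : 3 < p) (s : ZMod p) {M : Type*} [CommMonoid M] (f : ZMod p → M) :
    ∏ b, f b = (∏ b ∈ SS s 1, f b) * (∏ b ∈ SS s (-1), f b) * ∏ b ∈ SS s 0, f b := by
  obtain ⟨h2, h3⟩ := two_three_ne p hp
  have h11 : (1 : ZMod p) ≠ -1 := by intro h; apply h2; linear_combination h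
  rw [← Finset.prod_union, ← Finset.prod_union]
  · congr 1
    ext b
    have := FP_pow_cases hp s b
    simp only [SS, mem_union, mem_filter, mem_univ, true_and, true_iff]
    tauto
  · rw [Finset.disjoint_left]
    intro b hb hb'
    simp only [SS, mem_union, mem_filter, mem_univ, true_and] at hb hb'
    rw [hb'] at hb
    rcases hb with h | h
    · exact zero_ne_one h
    · exact neg_ne_zero.2 one_ne_zero h.symm
  · rw [Finset.disjoint_left]
    intro b hb hb'
    simp only [SS, mem_filter, mem_univ, true_and] at hb hb'
    exact h11 (hb.symm.trans hb')

lemma Wsum_count (hp : 3 < p) (s : ZMod p) :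
    Wsum p s = ((SS s 1).card : ZMod p) - ((SS s (-1)).card : ZMod p) := by
  have h := SS_split hp s (fun b => Multiplicative.ofAdd (((FP s).eval b) ^ ((p - 1) / 2)))
  have h' : ∑ b, ((FP s).eval b) ^ ((p - 1) / 2) = (∑ b ∈ SS s 1, ((FP s).eval b) ^ ((p - 1) / 2)) +
      (∑ b ∈ SS s (-1), ((FP s).eval b) ^ ((p - 1) / 2)) + ∑ b ∈ SS s 0, ((FP s).eval b) ^ ((p - 1) / 2) := by
    have := congrArg Multiplicative.toAdd h
    simpa using this
  have hc (e : ZMod p) : ∑ b ∈ SS s e, ((FP s).eval b) ^ ((p - 1) / 2) = (SS s e).card * e := by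
    rw [Finset.sum_congr rfl (g := fun _ => e), Finset.sum_const, nsmul_eq_mul]
    intro b hb
    simpa [SS] using hb
  rw [hc, hc, hc] at h'
  have : Wsum p s = ∑ b, ((FP s).eval b) ^ ((p - 1) / 2) := by
    unfold Wsum
    refine Finset.sum_congr rfl fun b _ => ?_
    simp [FP]
  rw [this, h']
  ring

lemma card_split (hp : 3 < p) (s : ZMod p) : p = (SS s 1).card + (SS s (-1)).card + (SS s 0).card := by
  have h := congrArg Multiplicative.toAdd (SS_split hp s (fun _ => Multiplicative.ofAdd 1))
  simpa [ZMod.card] using h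

/-- numerator degree computation -/
lemma A_deg (hp : 3 < p) (s : ZMod p) : (FP s * (FP s ^ ((p - 1) / 2) + 1) ^ 2 - (C 12 + X ^ p + X) * (X ^ p - X) ^ 2).natDegree = 2 * p + 1 := by
  have pp : p.Prime := Fact.out
  obtain ⟨n, hpn⟩ : ∃ n, p = 2 * n + 1 := pp.odd_of_ne_two (by omega)
  have hn2 : (p - 1) / 2 = n := by omega
  rw [hn2]
  have hFp : FP s ^ p = (X ^ p) ^ 3 + C 12 * (X ^ p) ^ 2 + C (18 - 12 * s) * X ^ p := by
    rw [← ZMod.expand_card, FP_eq]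
    simp only [map_add, map_mul, map_pow, expand_C, expand_X]
  have hFn : FP s ^ p = FP s * (FP s ^ n) ^ 2 := by
    rw [← pow_mul, ← pow_succ', show n * 2 + 1 = p by omega]
  have e : FP s * (FP s ^ n + 1) ^ 2 - (C 12 + X ^ p + X) * (X ^ p - X) ^ 2 =
      X ^ (2 * p + 1) + (X ^ (p + 2) + C (2 * 12) * X ^ (p + 1) + C (18 - 12 * s) * X ^ p + C (18 - 12 * s) * X + C 2 * FP s ^ (n + 1)) := by
    have hF := FP_eq s
    have h12 := hFn.symm.trans hFp
    generalize FP s = F at *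
    generalize C (18 - 12 * s) = b at *
    rw [C_mul, show (C (2:ZMod p)) = (2:(ZMod p)[X]) from rfl, pow_succ F n, pow_succ X (2 * p), pow_add X p 2, pow_succ X p, mul_comm 2 p, pow_mul X p 2]
    generalize F ^ n = f at *
    generalize (X : (ZMod p)[X]) ^ p = t at *
    generalize C (12 : ZMod p) = a at *
    linear_combination h12 + hF
  rw [e]
  rw [natDegree_add_eq_left_of_natDegree_lt, natDegree_X_pow]
  rw [natDegree_X_pow, Nat.lt_succ_iff]
  have hCX (c : ZMod p) (k : ℕ) (hk : k ≤ 2 * p) : (C c * X ^ k).natDegree ≤ 2 * p := (natDegree_C_mul_X_pow_le _ _).trans hk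
  refine natDegree_add_le_of_degree_le (natDegree_add_le_of_degree_le (natDegree_add_le_of_degree_le (natDegree_add_le_of_degree_le ?_ ?_) ?_) ?_) ?_
  · rw [natDegree_X_pow]; omega
  · exact hCX _ _ (by omega)
  · exact hCX _ _ (by omega)
  · have := hCX (18 - 12 * s) 1 (by omega)
    rwa [pow_one] at this
  · refine (natDegree_C_mul_le _ _).trans ?_
    rw [natDegree_pow, FP_natDegree]; omega

lemma frob_height (hp : 3 < p) (s : ZMod p) (hs : s ^ 2 = 2) {R P : (TWK (FP s) 12 (18 - 12 * s)).Point}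
    (hR : IsPt R (io (X ^ p)) (io (FP s ^ ((p - 1) / 2)))) (hP : IsPt P (io X) 1) :
    ∃ k : ℕ, HT (R + -P) k ∧ (k : ℤ) = p + 1 + (SS s 1).card - (SS s (-1)).card := by
  have pp : p.Prime := Fact.out
  obtain ⟨h2, h3⟩ := two_three_ne p hp
  have hF := FP_ne s
  have hA := A_deg hp s
  have hn0 : (p - 1) / 2 ≠ 0 := by omega
  set n := (p - 1) / 2 with hn
  have hD : (X ^ p - X : (ZMod p)[X]) = PS (SS s 1) * PS (SS s (-1)) * PS (SS s 0) := by
    rw [← PS_univ]; exact SS_split hp s _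
  have hmem (e b : ZMod p) (hb : b ∈ SS s e) : ((FP s).eval b) ^ n = e := by simpa [SS] using hb
  obtain ⟨W, hW⟩ : PS (SS s (-1)) ∣ FP s ^ n + 1 := PS_dvd _ _ (by
    intro b hb
    rw [eval_add, eval_pow, hmem _ b hb]; simp)
  obtain ⟨G, hG⟩ : PS (SS s 0) ∣ FP s := PS_dvd _ _ (by
    intro b hb
    exact eq_zero_of_pow_eq_zero (hmem _ b hb))
  have m1 := PS_monic (SS s 1)
  have mm := PS_monic (SS s (-1))
  have m0 := PS_monic (SS s 0)
  have d1 := PS_natDegree (SS s 1)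
  have dm := PS_natDegree (SS s (-1))
  have d0 := PS_natDegree (SS s 0)
  have c1 : IsCoprime G (PS (SS s 1)) := PS_cop _ _ (by
    intro b hb h
    have := hmem _ b hb
    rw [hG, eval_mul, h, mul_zero, zero_pow hn0] at this
    exact zero_ne_one this)
  have c0 : IsCoprime G (PS (SS s 0)) := PS_cop _ _ (by
    intro b hb h
    have hs0 := PS_eval _ b hb
    have hdv : (X - C b) * (X - C b) ∣ FP s := by
      rw [hG]
      exact mul_dvd_mul (dvd_iff_isRoot.2 hs0) (dvd_iff_isRoot.2 h)
    exact not_isUnit_X_sub_C b (FP_sqf h2 h3 s hs _ hdv))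
  have w1 : IsCoprime W (PS (SS s 1)) := PS_cop _ _ (by
    intro b hb h
    have e := congrArg (eval b) hW
    rw [eval_mul, h, mul_zero, eval_add, eval_pow, hmem _ b hb, eval_one] at e
    apply h2; linear_combination e)
  have w0 : IsCoprime W (PS (SS s 0)) := PS_cop _ _ (by
    intro b hb h
    have e := congrArg (eval b) hW
    rw [eval_mul, h, mul_zero, eval_add, eval_pow, hmem _ b hb, eval_one, zero_add] at e
    exact one_ne_zero e)
  have hcard := card_split hp s
  rw [← d1, ← dm]
  rw [← d1, ← dm, ← d0] at hcard
  have hD0 : (X ^ p - X : (ZMod p)[X]) ≠ 0 := FiniteField.X_pow_card_sub_X_ne_zero _ pp.one_lt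
  generalize PS (SS s 1) = S1 at *
  generalize PS (SS s (-1)) = Sm at *
  generalize PS (SS s 0) = S0 at *
  have cop : IsCoprime (G * W ^ 2) (S1 ^ 2 * S0) :=
    ((c1.pow_right).mul_right c0).mul_left (((w1.pow_right).mul_right w0).pow_left)
  have cop2 : IsCoprime (G * W ^ 2 + (-(C 12 + X ^ p + X)) * (S1 ^ 2 * S0)) (S1 ^ 2 * S0) := by
    exact cop.add_mul_right_left _
  have hden : S1 ^ 2 * S0 ≠ 0 := ((m1.pow 2).mul m0).ne_zero
  have hFL := io_ne hF
  have hDL := io_ne hD0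
  have hpt := hR.add_gen hFL (ℓ := io (FP s ^ n + 1) / io (X ^ p - X)) hP.neg (by
    intro h; apply hDL; rw [map_sub, h, sub_self]) (by
    rw [← map_sub, div_mul_cancel₀ _ hDL, map_add, map_one, sub_neg_eq_add])
  have hx : io (FP s) * (io (FP s ^ n + 1) / io (X ^ p - X)) ^ 2 - io (C 12) - io (X ^ p) - io X =
     io (G * W ^ 2 + (-(C 12 + X ^ p + X)) * (S1 ^ 2 * S0)) / io (S1 ^ 2 * S0) := by
    rw [hD, hW]
    have eF : io (FP s) = io S0 * io G := by rw [← map_mul, ← hG]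
    rw [eF]
    have i1 := io_ne m1.ne_zero
    have im := io_ne mm.ne_zero
    have i0 := io_ne m0.ne_zero
    simp only [map_add, map_mul, map_neg, map_pow io S1, map_pow io W]
    field_simp
    ring
  rw [hx] at hpt
  have eA : FP s * (FP s ^ n + 1) ^ 2 - (C 12 + X ^ p + X) * (X ^ p - X) ^ 2 =
      (Sm ^ 2 * S0) * (G * W ^ 2 + (-(C 12 + X ^ p + X)) * (S1 ^ 2 * S0)) := by
    rw [hW, hD]
    linear_combination (Sm * W) ^ 2 * hG
  rw [eA] at hA
  set N := G * W ^ 2 + (-(C 12 + X ^ p + X)) * (S1 ^ 2 * S0) with hN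
  clear_value N
  have hN0 : N ≠ 0 := by rintro rfl; simp at hA
  have hdN : 2 * Sm.natDegree + S0.natDegree + N.natDegree = 2 * p + 1 := by
    rw [← hA, natDegree_mul ((mm.pow 2).mul m0).ne_zero hN0, (mm.pow 2).natDegree_mul m0, mm.natDegree_pow]
  have hdd : (S1 ^ 2 * S0).natDegree = 2 * S1.natDegree + S0.natDegree := by
    rw [(m1.pow 2).natDegree_mul m0, m1.natDegree_pow]
  refine ⟨N.natDegree, ⟨N, S1 ^ 2 * S0, XRp_of_isPt hpt hden cop2 rfl, degree_lt_degree ?_, rfl⟩, ?_⟩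
  · rw [hdd]; omega
  · omega

lemma main_D (hp : 3 < p) (hp17 : p ≠ 17) (hp23 : p ≠ 23) (s : ZMod p) (hs : s ^ 2 = 2) (x y : ℤ)
    (hxy : (p : ℤ) = x ^ 2 + 6 * y ^ 2) : Wsum p s ^ 2 = 4 * (x : ZMod p) ^ 2 := by
  have pp : p.Prime := Fact.out
  obtain ⟨h2, h3⟩ := two_three_ne p hp
  have h6 : (6 : ZMod p) ≠ 0 := by rw [show (6 : ZMod p) = 2 * 3 by norm_num]; exact mul_ne_zero h2 h3
  have hy0 : y ≠ 0 := by
    rintro rfl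
    have : IsSquare (p : ℤ) := ⟨x, by rw [hxy]; ring⟩
    exact (Nat.prime_iff_prime_int.1 pp).irreducible.not_isSquare this
  have hp6 : 6 ≤ p := by
    have : 0 < y ^ 2 := by positivity
    have := sq_nonneg x
    omega
  have hyp : (y : ZMod p) ≠ 0 := by
    rw [Ne, ZMod.intCast_zmod_eq_zero_iff_dvd]
    intro h
    have := Int.le_of_dvd (abs_pos.2 hy0) ((dvd_abs _ _).2 h)
    have h3 : (6 : ℤ) ≤ p := by exact_mod_cast hp6
    nlinarith [sq_abs y, sq_nonneg x]
  have hrel : (x : ZMod p) ^ 2 + 6 * (y : ZMod p) ^ 2 = 0 := by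
    have := congrArg (Int.cast : ℤ → ZMod p) hxy
    push_cast at this
    rw [← this]; simp
  have hxp : (x : ZMod p) ≠ 0 := by
    intro h
    rw [h] at hrel
    have : 6 * (y : ZMod p) ^ 2 = 0 := by linear_combination hrel
    exact mul_ne_zero h6 (pow_ne_zero 2 hyp) this
  set c : ZMod p := -x / y with hc
  have hc1 : (x : ZMod p) + y * c = 0 := by rw [hc]; field_simp; ring
  have hc2 : c ^ 2 = -6 := by
    apply mul_left_cancel₀ (pow_ne_zero 2 hyp)
    linear_combination (y * c - x) * hc1 + hrel
  clear_value c
  have hF := FP_ne s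
  have hFL := io_ne hF
  have hβ := beta_ne h2 h3 s hs
  have hd := disc_ne h2 h3 s hs
  obtain ⟨P, ptP, gP, hP⟩ := P_exists h2 h3 s hs
  obtain ⟨Q, gQ, hQ⟩ := Q_exists h2 h3 s hs c hc2
  obtain ⟨b, hb⟩ := height_form hF h2 hβ hd gP gQ hP hQ
  have hbb := b_bound b (fun m n => by obtain ⟨k, -, hk⟩ := hb m n; exact ⟨k, hk⟩)
  have gR : Good (x • P + y • Q) 0 := by
    have := (gP.zsmul hF h2 hβ hd x).add hF h2 hβ hd (gQ.zsmul hF h2 hβ hd y)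
    convert this using 1
    have e := congrArg (fun z => io (C z)) hc1
    simp only [C_add, C_mul, map_add, map_mul, C_0, map_zero] at e
    rw [← e]
    simp
  obtain ⟨k, hk, hk'⟩ := hb x y
  have hb0 : b = 0 := by
    have h1 := lam0_dvd hF gR hk
    have h2' : (p : ℤ) ∣ (k : ℤ) := by exact_mod_cast h1
    have h3' := (ZMod.intCast_zmod_eq_zero_iff_dvd _ _).2 h2'
    rw [hk'] at h3'
    push_cast at h3'
    have : (b : ZMod p) * (x * y) = 0 := by linear_combination h3' - hrel
    have := (mul_eq_zero.1 this).resolve_right (mul_ne_zero hxp hyp)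
    rw [ZMod.intCast_zmod_eq_zero_iff_dvd] at this
    exact Int.eq_zero_of_abs_lt_dvd this (by omega)
  subst hb0
  have hkp : k = p := by
    have : (k : ℤ) = p := by rw [hk', hxy]; ring
    exact_mod_cast this
  rw [hkp] at hk
  have hWc := Wsum_count hp s
  rcases lam0_frob hp hp17 hp23 s hs gR hk with h | h
  · obtain ⟨k1, hk1, e1⟩ := frob_height hp s hs h ptP
    obtain ⟨k2, hk2, e2⟩ := hb (x - 1) y
    rw [show (x - 1) • P + y • Q = x • P + y • Q + -P by rw [sub_zsmul, one_zsmul]; abel] at hk2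
    have := hk1.uniq hF hk2
    subst this
    have e3 : ((SS s 1).card : ℤ) - (SS s (-1)).card = -2 * x := by linear_combination e2 - e1 - hxy
    have e4 := congrArg (Int.cast : ℤ → ZMod p) e3
    push_cast at e4
    rw [hWc, e4]; ring
  · obtain ⟨k1, hk1, e1⟩ := frob_height hp s hs h ptP
    obtain ⟨k2, hk2, e2⟩ := hb (x + 1) y
    have hk3 := hk2.neg
    rw [show -((x + 1) • P + y • Q) = -(x • P + y • Q) + -P by rw [add_zsmul, one_zsmul]; abel] at hk3
    have := hk1.uniq hF hk3
    subst this
    have e3 : ((SS s 1).card : ℤ) - (SS s (-1)).card = 2 * x := by linear_combination e2 - e1 - hxy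
    have e4 := congrArg (Int.cast : ℤ → ZMod p) e3
    push_cast at e4
    rw [hWc, e4]; ring

end D7

lemma two_isUnit_sq (p : ℕ) [Fact p.Prime] (hp8 : p % 8 = 1 ∨ p % 8 = 7) : ∃ s : ZMod p, s ^ 2 = 2 := by
  obtain ⟨s, hs⟩ := isSq_two p hp8
  exact ⟨s, by rw [hs]; ring⟩


theorem stmt_11 (p : ℕ) [Fact p.Prime] (hp : 3 < p) (hp8 : p % 8 = 1 ∨ p % 8 = 7) :
    ((p % 24 = 1 ∨ p % 24 = 7) →
      (∃ x y : ℤ, (p : ℤ) = x ^ 2 + 6 * y ^ 2) ∧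
        ∀ x y : ℤ, (p : ℤ) = x ^ 2 + 6 * y ^ 2 →
          (∑ k ∈ Finset.range p,
              (Nat.choose (2 * k) k : ZMod p) * (a k : ZMod p) / (36 : ZMod p) ^ k)
            = 4 * (x : ZMod p) ^ 2)
    ∧
    ((p % 24 = 17 ∨ p % 24 = 23) →
      (∑ k ∈ Finset.range p,
          (Nat.choose (2 * k) k : ZMod p) * (a k : ZMod p) / (36 : ZMod p) ^ k) = 0) := by
  obtain ⟨s, hs⟩ := two_isUnit_sq p hp8
  have hS := (part_A p hp s hs).trans (part_B p hp s hs)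
  obtain ⟨h2, h3⟩ := two_three_ne p hp
  have hs0 : s ≠ 0 := by
    rintro rfl
    apply h2; linear_combination -hs
  have h63 : IsSquare (-6 : ZMod p) ↔ IsSquare (-3 : ZMod p) := by
    constructor
    · rintro ⟨r, hr⟩
      refine ⟨r / s, ?_⟩
      field_simp
      linear_combination hr - 3 * hs
    · rintro ⟨r, hr⟩
      exact ⟨s * r, by linear_combination 2 * hr - r ^ 2 * hs⟩
  refine ⟨fun h => ⟨?_, ?_⟩, fun h => ?_⟩
  · exact rep_exists p h (h63.2 ((isSq_neg_three p hp).2 (by omega)))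
  · intro x y hxy
    rw [hS]
    exact main_D hp (by omega) (by omega) s hs x y hxy
  · rw [hS]
    have hns : ¬ IsSquare (-6 : ZMod p) := by
      rw [h63, isSq_neg_three p hp]; omega
    have h6 : (-6 : ZMod p) ≠ 0 := by
      intro h0; exact hns (h0 ▸ IsSquare.zero)
    have hpow : (-6 : ZMod p) ^ ((p - 1) / 2) = -1 := by
      have hodd : p % 2 = 1 := by omega
      rw [show (p - 1) / 2 = p / 2 by omega]
      rcases ZMod.pow_div_two_eq_neg_one_or_one p h6 with h1 | h1
      · exact absurd ((ZMod.euler_criterion p h6).2 h1) hns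
      · exact h1
    rw [Wsum_zero p hp s hs hpow]
    ring
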